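/- Assume the uniform ellipticity condition (D3), the regularity condition (R2) and the equilibrium conditions (E1) and (E2); assume the probability measure m on ℝ has a finite first moment and W₂(H*m, Ψ^{-1}) < +∞. Let F be the unique weak solution in 𝓕 of the Cauchy problem with initial condition H*m. Then there is a unique stationary solution F∞ (a cumulative distribution function with finite first moment solving the stationary equation in distributions) such that F∞ and F₀ = H*m have the same expectation, i.e., ∫₀¹ F∞^{-1}(u) du = ∫₀¹ F₀^{-1}(u) du; and for every p ≥ 2 such that W_p(H*m, Ψ^{-1}) < +∞ and every 1 ≤ q < p, W_q(F_t, F∞) → 0 as t → +∞. -/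

import Mathlib

open MeasureTheory Set Filter Topology Function
open scoped ENNReal

noncomputable section

/-- `primitive f u = ∫₀^u f(v) dv`. -/
def primitive (f : ℝ → ℝ) : ℝ → ℝ := fun u => ∫ v in (0:ℝ)..u, f v

/-- The cumulative distribution function `H * μ` of a measure `μ` on `ℝ`. -/
def cdfOf (μ : MeasureTheory.Measure ℝ) : ℝ → ℝ := fun x => (μ (Set.Iic x)).toReal

/-- Pseudo-inverse of a cdf: `F⁻¹(u) = inf {x | F x > u}`. -/
def pinv (F : ℝ → ℝ) (u : ℝ) : ℝ := sInf {x : ℝ | u < F x}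

/-- Wasserstein distance of order `p` between two cdfs, in `[0,∞]`. -/
def Wdist (p : ℝ) (F G : ℝ → ℝ) : ℝ≥0∞ :=
  (∫⁻ u in Set.Ioo (0:ℝ) 1, ENNReal.ofReal (|pinv F u - pinv G u| ^ p)) ^ (1/p)

/-- `F` is the cumulative distribution function of a probability measure on `ℝ`. -/
def IsCDF (F : ℝ → ℝ) : Prop :=
  Monotone F ∧ (∀ x : ℝ, ContinuousWithinAt F (Set.Ici x) x) ∧
    Tendsto F atBot (nhds 0) ∧ Tendsto F atTop (nhds 1)

/-- `F` solves the stationary equation `(1/2) ∂ₓₓ (A(F)) - ∂ₓ (B(F)) = 0` in the sense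
of distributions. -/
def IsStationarySolution (A B : ℝ → ℝ) (F : ℝ → ℝ) : Prop :=
  ∀ φ : ℝ → ℝ, ContDiff ℝ (⊤ : ℕ∞) φ → HasCompactSupport φ →
    (1/2) * (∫ x : ℝ, A (F x) * deriv (deriv φ) x) + (∫ x : ℝ, B (F x) * deriv φ x) = 0

/-- `Ψ(u) = ∫_{1/2}^u a(v) / (2 B(v)) dv`. -/
def Psi (a b : ℝ → ℝ) (u : ℝ) : ℝ := ∫ v in (1/2:ℝ)..u, a v / (2 * primitive b v)

/-- The inverse of `Ψ`, extended by `1` above `lim_{u→1} Ψ(u)` and by `0` below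
`lim_{u→0} Ψ(u)` when these limits are finite. -/
def PsiInv (a b : ℝ → ℝ) (x : ℝ) : ℝ :=
  sSup {u : ℝ | u ∈ Set.Ioo (0:ℝ) 1 ∧ Psi a b u ≤ x}

/-- `F` is a weak solution of `∂ₜ F = (1/2) ∂ₓₓ (A (F)) - ∂ₓ (B (F))` with
initial condition `F₀`. -/
def IsWeakSolution (A B : ℝ → ℝ) (F₀ : ℝ → ℝ) (F : ℝ → ℝ → ℝ) : Prop :=
  ∀ g : ℝ → ℝ → ℝ, ContDiff ℝ (⊤ : ℕ∞) (Function.uncurry g) →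
    HasCompactSupport (Function.uncurry g) →
    ∀ t : ℝ, 0 ≤ t →
      ((∫ x : ℝ, g t x * F t x) - ∫ x : ℝ, g 0 x * F₀ x) =
        ∫ x : ℝ, ∫ s in (0:ℝ)..t,
          ((1/2) * A (F s x) * deriv (deriv (fun y => g s y)) x
            + B (F s x) * deriv (fun y => g s y) x
            + F s x * deriv (fun r => g r x) s)

/-- Membership in the class `𝓕`. -/
def MemF (F : ℝ → ℝ → ℝ) : Prop :=
  ∃ P : ℝ → ProbabilityMeasure ℝ,
    ContinuousOn P (Set.Ici 0) ∧
    (∀ t : ℝ, 0 ≤ t → Integrable (fun x => |x|) (P t : Measure ℝ)) ∧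
    (∀ T : ℝ, 0 < T → IntegrableOn (fun t => ∫ x, |x| ∂(P t : Measure ℝ)) (Set.Icc 0 T)) ∧
    (∀ t : ℝ, 0 ≤ t → ∀ x : ℝ, F t x = ((P t : Measure ℝ) (Set.Iic x)).toReal)


/-- A smooth compactly supported function with zero integral has a smooth compactly supported
primitive. -/
lemma exists_primitive_test (g : ℝ → ℝ) (hg : ContDiff ℝ (⊤ : ℕ∞) g) (hs : HasCompactSupport g)
    (h0 : ∫ x, g x = 0) :
    ∃ φ : ℝ → ℝ, ContDiff ℝ (⊤ : ℕ∞) φ ∧ HasCompactSupport φ ∧ deriv φ = g := by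
  obtain ⟨N, hN⟩ := hs.isCompact.isBounded.subset_closedBall 0
  rw [Real.closedBall_eq_Icc] at hN
  simp only [zero_sub, zero_add] at hN
  have hz : ∀ x, x ∉ Icc (-N) N → g x = 0 := fun x hx => by
    by_contra hne
    exact hx (hN (subset_tsupport g hne))
  have hc : Continuous g := hg.continuous
  have hd : ∀ x, HasDerivAt (fun x => ∫ y in (-N)..x, g y) (g x) x := fun x =>
    intervalIntegral.integral_hasDerivAt_right (hc.intervalIntegrable _ _)
      hc.stronglyMeasurable.stronglyMeasurableAtFilter hc.continuousAt
  have hde : deriv (fun x => ∫ y in (-N)..x, g y) = g := funext fun x => (hd x).deriv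
  refine ⟨fun x => ∫ y in (-N)..x, g y, ?_, ?_, hde⟩
  · rw [contDiff_infty_iff_deriv]
    exact ⟨fun x => (hd x).differentiableAt, by rw [hde]; exact hg⟩
  · refine HasCompactSupport.intro (isCompact_Icc (a := -N) (b := N)) fun x hx => ?_
    have hgint : Integrable g := hc.integrable_of_hasCompactSupport hs
    rcases lt_or_ge x (-N) with h | h
    · rw [intervalIntegral.integral_symm]
      rw [intervalIntegral.integral_of_le h.le, ← integral_Icc_eq_integral_Ioc,
        integral_Icc_eq_integral_Ico]
      rw [setIntegral_eq_zero_of_forall_eq_zero]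
      · simp
      · intro y hy
        exact hz y (fun h' => absurd h'.1 (not_le.2 hy.2))
    · have hx' : N < x := by
        by_contra h'
        exact hx ⟨h, not_lt.1 h'⟩
      rw [intervalIntegral.integral_of_le h, ← integral_Icc_eq_integral_Ioc,
        setIntegral_eq_integral_of_forall_compl_eq_zero, h0]
      intro y hy
      exact hz y (fun h' => hy ⟨h'.1, h'.2.trans hx'.le⟩)

lemma exists_bump : ∃ η : ℝ → ℝ, ContDiff ℝ (⊤ : ℕ∞) η ∧ HasCompactSupport η ∧ ∫ x, η x = 1 := by
  let f : ContDiffBump (0:ℝ) := ⟨1, 2, one_pos, one_lt_two⟩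
  exact ⟨f.normed volume, f.contDiff_normed, f.hasCompactSupport_normed, f.integral_normed⟩

lemma integrable_loc_mul_test {Q φ : ℝ → ℝ} (hQ : LocallyIntegrable Q) (hφ : Continuous φ)
    (hs : HasCompactSupport φ) : Integrable (fun x => Q x * φ x) := by
  have := hQ.integrable_smul_left_of_hasCompactSupport hφ hs
  simpa [mul_comm] using this

lemma dbr_one (Q : ℝ → ℝ) (hQ : LocallyIntegrable Q)
    (h : ∀ φ : ℝ → ℝ, ContDiff ℝ (⊤ : ℕ∞) φ → HasCompactSupport φ →
      ∫ x, Q x * deriv φ x = 0) : ∃ k : ℝ, ∀ᵐ x, Q x = k := by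
  obtain ⟨η, h1, h2, h3⟩ := exists_bump
  refine ⟨∫ x, Q x * η x, ?_⟩
  have key : ∀ᵐ x, Q x - (∫ x, Q x * η x) = 0 := by
    refine ae_eq_zero_of_integral_contDiff_smul_eq_zero (hQ.sub (locallyIntegrable_const _)) ?_
    intro g hg hgs
    have hi : Integrable g := hg.continuous.integrable_of_hasCompactSupport hgs
    have hi2 : Integrable η := h1.continuous.integrable_of_hasCompactSupport h2
    obtain ⟨φ, p1, p2, p3⟩ := exists_primitive_test (fun x => g x - (∫ y, g y) * η x)
      (hg.sub (contDiff_const.mul h1)) (hgs.sub (h2.mul_left))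
      (by rw [integral_sub hi (hi2.const_mul _), integral_const_mul, h3]; ring)
    have := h φ p1 p2
    rw [p3] at this
    have e1 := integrable_loc_mul_test hQ hg.continuous hgs
    have e2 := integrable_loc_mul_test hQ h1.continuous h2
    have e3 : (fun x => Q x * (g x - (∫ y, g y) * η x)) =
      fun x => Q x * g x - (∫ y, g y) * (Q x * η x) := by ext x; ring
    rw [e3, integral_sub e1 (e2.const_mul _), integral_const_mul] at this
    have e4 : (fun x => g x • (Q x - ∫ x, Q x * η x)) =
      fun x => Q x * g x - g x * (∫ x, Q x * η x) := by ext x; simp; ring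
    rw [e4, integral_sub e1 (hi.mul_const _), integral_mul_const]
    linarith
  filter_upwards [key] with x hx
  linarith

lemma dbr_two (Q : ℝ → ℝ) (hQ : LocallyIntegrable Q)
    (h : ∀ φ : ℝ → ℝ, ContDiff ℝ (⊤ : ℕ∞) φ → HasCompactSupport φ →
      ∫ x, Q x * deriv (deriv φ) x = 0) : ∃ k l : ℝ, ∀ᵐ x, Q x = k + l * x := by
  obtain ⟨η, h1, h2, h3⟩ := exists_bump
  have hdη : Continuous (deriv η) := (contDiff_infty_iff_deriv.1 h1).2.continuous
  set l : ℝ := - ∫ x, Q x * deriv η x with hl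
  have hQ2 : LocallyIntegrable (fun x : ℝ => Q x - l * x) :=
    hQ.sub (Continuous.locallyIntegrable (by fun_prop))
  obtain ⟨k, hk⟩ := dbr_one (fun x => Q x - l * x) hQ2 (by
    intro g hg hgs
    have hi : Integrable g := hg.continuous.integrable_of_hasCompactSupport hgs
    have hi2 : Integrable η := h1.continuous.integrable_of_hasCompactSupport h2
    have hdg : Continuous (deriv g) := (contDiff_infty_iff_deriv.1 hg).2.continuous
    obtain ⟨φ, p1, p2, p3⟩ := exists_primitive_test (fun x => g x - (∫ y, g y) * η x)
      (hg.sub (contDiff_const.mul h1)) (hgs.sub (h2.mul_left))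
      (by rw [integral_sub hi (hi2.const_mul _), integral_const_mul, h3]; ring)
    have := h φ p1 p2
    have hder : deriv (deriv φ) = fun x => deriv g x - (∫ y, g y) * deriv η x := by
      rw [p3]; ext x
      have d1 : HasDerivAt g (deriv g x) x := (hg.differentiable (by simp) x).hasDerivAt
      have d2 : HasDerivAt η (deriv η x) x := (h1.differentiable (by simp) x).hasDerivAt
      exact (d1.sub (d2.const_mul _)).deriv
    rw [hder] at this
    have e1 := integrable_loc_mul_test hQ hdg hgs.deriv
    have e2 := integrable_loc_mul_test hQ hdη h2.deriv
    have e3 : (fun x => Q x * (deriv g x - (∫ y, g y) * deriv η x)) =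
      fun x => Q x * deriv g x - (∫ y, g y) * (Q x * deriv η x) := by ext x; ring
    rw [e3, integral_sub e1 (e2.const_mul _), integral_const_mul] at this
    have e5 : Integrable (fun x : ℝ => x * deriv g x) :=
      integrable_loc_mul_test (Q := fun x => x) (Continuous.locallyIntegrable (by fun_prop))
        hdg hgs.deriv
    have e5' : Integrable (fun x : ℝ => x * g x) :=
      integrable_loc_mul_test (Q := fun x => x) (Continuous.locallyIntegrable (by fun_prop))
        hg.continuous hgs
    have e6 : ∫ x, x * deriv g x = - ∫ x, g x := by
      have := integral_mul_deriv_eq_deriv_mul_of_integrable (u := fun x : ℝ => x) (v := g)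
        (u' := fun _ => 1) (v' := deriv g) (fun x _ => hasDerivAt_id x)
        (fun x _ => (hg.differentiable (by simp) x).hasDerivAt) e5
        (by simpa [Pi.mul_def] using hi) e5'
      simpa using this
    have e4 : (fun x => (Q x - l * x) * deriv g x) =
      fun x => Q x * deriv g x - l * (x * deriv g x) := by ext x; ring
    rw [e4, integral_sub e1 (e5.const_mul _), integral_const_mul, e6]
    rw [hl]; linarith)
  refine ⟨k, l, ?_⟩
  filter_upwards [hk] with x hx
  linarith

/-- Right-continuous functions that agree a.e. agree everywhere. -/
lemma eq_of_ae_eq_right_cont {f g : ℝ → ℝ} (hf : ∀ x, ContinuousWithinAt f (Ici x) x)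
    (hg : ∀ x, ContinuousWithinAt g (Ici x) x) (h : ∀ᵐ x, f x = g x) (x : ℝ) : f x = g x := by
  have hfr : ∃ᶠ y in 𝓝[>] x, f y = g y := by
    rw [frequently_iff]
    intro U hU
    obtain ⟨u, hu, hsub⟩ := mem_nhdsGT_iff_exists_Ioo_subset.1 hU
    by_contra hne
    push Not at hne
    have : Ioo x u ⊆ {y | ¬ f y = g y} := fun y hy => hne y (hsub hy)
    have h0 : volume (Ioo x u) = 0 := measure_mono_null this h
    rw [Real.volume_Ioo] at h0
    simp at h0
    exact absurd hu (not_lt.2 h0)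
  have h1 : Tendsto f (𝓝[>] x) (𝓝 (f x)) := (hf x).mono_left (nhdsWithin_mono _ Ioi_subset_Ici_self)
  have h2 : Tendsto g (𝓝[>] x) (𝓝 (g x)) := (hg x).mono_left (nhdsWithin_mono _ Ioi_subset_Ici_self)
  have h3 : Tendsto (fun y => f y - g y) (𝓝[>] x) (𝓝 (f x - g x)) := h1.sub h2
  by_contra hne
  have : ∀ᶠ y in 𝓝[>] x, f y - g y ≠ 0 := h3.eventually_ne (sub_ne_zero.2 hne)
  obtain ⟨y, hy1, hy2⟩ := (hfr.and_eventually this).exists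
  exact hy2 (sub_eq_zero.2 hy1)


/-- The (extended) coefficients and their quantitative properties. -/
structure Coef (a b A B : ℝ → ℝ) (c C L γ : ℝ) : Prop where
  ac : Continuous a
  bc : Continuous b
  cpos : 0 < c
  Lpos : 0 < L
  γpos : 0 < γ
  alo : ∀ u, c ≤ a u
  ahi : ∀ u, a u ≤ C
  alip : ∀ p q, |a p - a q| ≤ L * |p - q|
  bbd : ∀ u, |b u| ≤ L
  dA : ∀ u, HasDerivAt A (a u) u
  dB : ∀ u, HasDerivAt B (b u) u
  A0 : A 0 = 0
  B0 : B 0 = 0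
  B1 : B 1 = 0
  Blo : ∀ u ∈ Icc (0:ℝ) 1, γ * (u * (1 - u)) ≤ B u

namespace Coef
variable {a b A B : ℝ → ℝ} {c C L γ : ℝ}

lemma Cpos (h : Coef a b A B c C L γ) : 0 < C := h.cpos.trans_le ((h.alo 0).trans (h.ahi 0))

lemma Acont (h : Coef a b A B c C L γ) : Continuous A :=
  continuous_iff_continuousAt.2 fun u => (h.dA u).continuousAt

lemma Bcont (h : Coef a b A B c C L γ) : Continuous B :=
  continuous_iff_continuousAt.2 fun u => (h.dB u).continuousAt

lemma Amono (h : Coef a b A B c C L γ) : StrictMono A :=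
  strictMono_of_deriv_pos fun u => by
    rw [(h.dA u).deriv]; exact h.cpos.trans_le (h.alo u)

lemma Blip (h : Coef a b A B c C L γ) (p q : ℝ) : |B p - B q| ≤ L * |p - q| := by
  have := Convex.norm_image_sub_le_of_norm_hasDerivWithin_le (f := B) (f' := b) (s := univ)
    (C := L) (x := q) (y := p)
    (fun x _ => (h.dB x).hasDerivWithinAt) (fun x _ => h.bbd x) convex_univ trivial trivial
  simpa using this

lemma Alip (h : Coef a b A B c C L γ) (p q : ℝ) : |A p - A q| ≤ C * |p - q| := by
  have := Convex.norm_image_sub_le_of_norm_hasDerivWithin_le (f := A) (f' := a) (s := univ)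
    (C := C) (x := q) (y := p)
    (fun x _ => (h.dA x).hasDerivWithinAt) (fun x _ => by
      rw [Real.norm_eq_abs, abs_of_nonneg (h.cpos.le.trans (h.alo x))]; exact h.ahi x)
    convex_univ trivial trivial
  simpa using this

lemma Asub_le (h : Coef a b A B c C L γ) {p q : ℝ} (hpq : q ≤ p) : c * (p - q) ≤ A p - A q := by
  have := convex_univ.mul_sub_le_image_sub_of_le_deriv (f := A) (C := c)
    h.Acont.continuousOn (fun x _ => (h.dA x).differentiableAt.differentiableWithinAt)
    (fun x _ => by rw [(h.dA x).deriv]; exact h.alo x) q trivial p trivial hpq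
  exact this

lemma Astrong (h : Coef a b A B c C L γ) (p q : ℝ) :
    c * (p - q) ^ 2 ≤ (A p - A q) * (p - q) := by
  rcases le_total q p with hpq | hpq
  · nlinarith [h.Asub_le hpq, sub_nonneg.2 hpq]
  · nlinarith [h.Asub_le hpq, sub_nonneg.2 hpq]

lemma Abd (h : Coef a b A B c C L γ) {u : ℝ} (h0 : 0 ≤ u) (h1 : u ≤ 1) : |A u| ≤ C := by
  have := h.Alip u 0
  rw [h.A0] at this
  simp only [sub_zero] at this
  rw [abs_of_nonneg h0] at this
  nlinarith [h.Cpos]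

lemma Bbd (h : Coef a b A B c C L γ) {u : ℝ} (h0 : 0 ≤ u) (h1 : u ≤ 1) : |B u| ≤ L := by
  have := h.Blip u 0
  rw [h.B0] at this
  simp only [sub_zero] at this
  rw [abs_of_nonneg h0] at this
  nlinarith [h.Lpos]

end Coef

/-- Integrated form of solutions. -/
structure Sol (A B : ℝ → ℝ) (Φ F : ℝ → ℝ → ℝ) (μ : ℝ) : Prop where
  Fmono : ∀ t, 0 ≤ t → Monotone (F t)
  Frc : ∀ t, 0 ≤ t → ∀ x, ContinuousWithinAt (F t) (Ici x) x
  F0 : ∀ t, 0 ≤ t → ∀ x, 0 ≤ F t x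
  F1 : ∀ t, 0 ≤ t → ∀ x, F t x ≤ 1
  Psub : ∀ t, 0 ≤ t → ∀ x y, Φ t y - Φ t x = ∫ u in x..y, F t u
  Pbot : ∀ t, 0 ≤ t → Tendsto (Φ t) atBot (𝓝 0)
  Ptop : ∀ t, 0 ≤ t → Tendsto (fun x => Φ t x - (x - μ)) atTop (𝓝 0)
  tmeas : ∀ x, AEStronglyMeasurable (fun r => F r x) (volume.restrict (Ici 0))
  tcont : ∀ t, 0 ≤ t → ∀ᵐ x, ContinuousWithinAt (fun r => F r x) (Ici 0) t
  eq : ∀ s t, 0 ≤ s → s ≤ t → ∀ x y,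
    (1/2) * ((∫ r in s..t, A (F r y)) - ∫ r in s..t, A (F r x)) =
      ∫ z in x..y, (Φ t z - Φ s z + ∫ r in s..t, B (F r z))

/-- Bounded measurable functions of `F` are interval integrable in time. -/
lemma tint_aux {F : ℝ → ℝ → ℝ} {f : ℝ → ℝ} (hf : Continuous f) {M : ℝ}
    (hM : ∀ u, 0 ≤ u → u ≤ 1 → |f u| ≤ M) (F0 : ∀ t, 0 ≤ t → ∀ x, 0 ≤ F t x)
    (F1 : ∀ t, 0 ≤ t → ∀ x, F t x ≤ 1)
    (tmeas : ∀ x, AEStronglyMeasurable (fun r => F r x) (volume.restrict (Ici 0)))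
    {s t : ℝ} (hs : 0 ≤ s) (hst : s ≤ t) (x : ℝ) :
    IntervalIntegrable (fun r => f (F r x)) volume s t := by
  rw [intervalIntegrable_iff_integrableOn_Ioc_of_le hst]
  have hsub : Ioc s t ⊆ Ici 0 := fun r hr => hs.trans hr.1.le
  refine Integrable.mono' (g := fun _ => M) (by simp) ?_ ?_
  · exact hf.comp_aestronglyMeasurable ((tmeas x).mono_measure (Measure.restrict_mono_set _ hsub))
  · rw [ae_restrict_iff' measurableSet_Ioc]
    refine Eventually.of_forall fun r hr => ?_
    exact hM _ (F0 r (hsub hr) x) (F1 r (hsub hr) x)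

/-- Time integrals of bounded functions of `F` are right-continuous in space. -/
lemma trc_aux {F : ℝ → ℝ → ℝ} {f : ℝ → ℝ} (hf : Continuous f) {M : ℝ}
    (hM : ∀ u, 0 ≤ u → u ≤ 1 → |f u| ≤ M) (F0 : ∀ t, 0 ≤ t → ∀ x, 0 ≤ F t x)
    (F1 : ∀ t, 0 ≤ t → ∀ x, F t x ≤ 1)
    (tmeas : ∀ x, AEStronglyMeasurable (fun r => F r x) (volume.restrict (Ici 0)))
    {s t : ℝ} (hs : 0 ≤ s) (hst : s ≤ t) {l : Filter ℝ} [l.IsCountablyGenerated] {G : ℝ → ℝ}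
    (hl : ∀ r, 0 ≤ r → Tendsto (F r) l (𝓝 (G r))) :
    Tendsto (fun x => ∫ r in s..t, f (F r x)) l (𝓝 (∫ r in s..t, f (G r))) := by
  refine intervalIntegral.tendsto_integral_filter_of_dominated_convergence (fun _ => M) ?_ ?_ ?_ ?_
  · refine Eventually.of_forall fun x => ?_
    rw [uIoc_of_le hst]
    exact (tint_aux hf hM F0 F1 tmeas hs hst x).1.aestronglyMeasurable
  · refine Eventually.of_forall fun x => Eventually.of_forall fun r hr => ?_
    rw [uIoc_of_le hst] at hr
    have hr0 : 0 ≤ r := hs.trans hr.1.le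
    exact hM _ (F0 r hr0 x) (F1 r hr0 x)
  · exact intervalIntegrable_const
  · refine Eventually.of_forall fun r hr => ?_
    rw [uIoc_of_le hst] at hr
    exact (hf.tendsto _).comp (hl r (hs.trans hr.1.le))

/-- Time integrals of Lipschitz functions of `F` are measurable in space. -/
lemma tmeas_aux {F : ℝ → ℝ → ℝ} {f : ℝ → ℝ} {L : ℝ}
    (hf : ∀ p q, |f p - f q| ≤ L * |p - q|) {M : ℝ} (hfc : Continuous f)
    (hM : ∀ u, 0 ≤ u → u ≤ 1 → |f u| ≤ M) (F0 : ∀ t, 0 ≤ t → ∀ x, 0 ≤ F t x)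
    (F1 : ∀ t, 0 ≤ t → ∀ x, F t x ≤ 1)
    (tmeas : ∀ x, AEStronglyMeasurable (fun r => F r x) (volume.restrict (Ici 0)))
    (Fmono : ∀ t, 0 ≤ t → Monotone (F t))
    {s t : ℝ} (hs : 0 ≤ s) (hst : s ≤ t) :
    Measurable (fun x => ∫ r in s..t, f (F r x)) := by
  have hL : 0 ≤ L := by
    have := (abs_nonneg _).trans (hf 1 0); simpa using this
  have hid : ∀ x, IntervalIntegrable (fun r => L * F r x) volume s t := fun x =>
    tint_aux (f := fun u => L * u) (by fun_prop) (M := L)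
      (fun u h0 h1 => by rw [abs_of_nonneg (by positivity)]; nlinarith) F0 F1 tmeas hs hst x
  have hfi : ∀ x, IntervalIntegrable (fun r => f (F r x)) volume s t := fun x =>
    tint_aux hfc hM F0 F1 tmeas hs hst x
  have e : (fun x => ∫ r in s..t, f (F r x)) =
      fun x => (∫ r in s..t, (f (F r x) + L * F r x)) - ∫ r in s..t, L * F r x := by
    ext x
    rw [intervalIntegral.integral_add (hfi x) (hid x)]; ring
  rw [e]
  refine Measurable.sub (Monotone.measurable ?_) (Monotone.measurable ?_)
  · intro x y hxy
    refine intervalIntegral.integral_mono_on hst ((hfi x).add (hid x)) ((hfi y).add (hid y)) ?_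
    intro r hr
    have h1 := Fmono r (hs.trans hr.1) hxy
    have h2 := hf (F r x) (F r y)
    rw [abs_of_nonpos (sub_nonpos.2 h1)] at h2
    have h3 := le_abs_self (f (F r x) - f (F r y))
    linarith
  · intro x y hxy
    refine intervalIntegral.integral_mono_on hst (hid x) (hid y) ?_
    intro r hr
    exact mul_le_mul_of_nonneg_left (Fmono r (hs.trans hr.1) hxy) hL

/-- Indefinite integrals of right-continuous functions are right-differentiable. -/
lemma rderiv_int {f : ℝ → ℝ} (hm : Measurable f) (hrc : ∀ x, ContinuousWithinAt f (Ici x) x)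
    (hi : ∀ x y, IntervalIntegrable f volume x y) (x0 x : ℝ) :
    HasDerivWithinAt (fun x => ∫ z in x0..x, f z) (f x) (Ioi x) x :=
  (intervalIntegral.integral_hasDerivWithinAt_right (hi x0 x)
    (s := Ici x) (t := Ioi x) hm.stronglyMeasurable.stronglyMeasurableAtFilter
    ((hrc x).mono Ioi_subset_Ici_self)).mono Ioi_subset_Ici_self

lemma intble_of_bdd {f : ℝ → ℝ} (hm : Measurable f) {M : ℝ} (hM : ∀ x, |f x| ≤ M) (x y : ℝ) :
    IntervalIntegrable f volume x y :=
  (intervalIntegrable_const (c := M)).mono_fun hm.aestronglyMeasurable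
    (Eventually.of_forall fun z => by
      simpa using (hM z).trans (le_abs_self M))

namespace Sol
variable {a b A B : ℝ → ℝ} {c C L γ μ : ℝ} {Φ F : ℝ → ℝ → ℝ}

lemma Fabs (h : Sol A B Φ F μ) {t : ℝ} (ht : 0 ≤ t) (x : ℝ) : |F t x| ≤ 1 := by
  rw [abs_of_nonneg (h.F0 t ht x)]; exact h.F1 t ht x

lemma Fint (h : Sol A B Φ F μ) {t : ℝ} (ht : 0 ≤ t) (x y : ℝ) :
    IntervalIntegrable (F t) volume x y :=
  intble_of_bdd (h.Fmono t ht).measurable (h.Fabs ht) x y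

lemma rderiv (h : Sol A B Φ F μ) {t : ℝ} (ht : 0 ≤ t) (x : ℝ) :
    HasDerivWithinAt (Φ t) (F t x) (Ioi x) x := by
  have := (rderiv_int (h.Fmono t ht).measurable (h.Frc t ht) (h.Fint ht) 0 x).const_add (Φ t 0)
  refine this.congr_of_eventuallyEq (Eventually.of_forall fun y => ?_) ?_
  · simp only [← h.Psub t ht 0 y]; ring
  · simp only [← h.Psub t ht 0 x]; ring

lemma xlip (h : Sol A B Φ F μ) {t : ℝ} (ht : 0 ≤ t) (x y : ℝ) : |Φ t y - Φ t x| ≤ |y - x| := by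
  rw [h.Psub t ht]
  have := intervalIntegral.norm_integral_le_of_norm_le_const (a := x) (b := y) (f := F t) (C := 1)
    (fun z _ => h.Fabs ht z)
  simpa using this

lemma xcont (h : Sol A B Φ F μ) {t : ℝ} (ht : 0 ≤ t) : Continuous (Φ t) := by
  refine LipschitzWith.continuous (K := 1) (LipschitzWith.of_dist_le_mul fun x y => ?_)
  simpa [Real.dist_eq] using h.xlip ht y x

lemma xmono (h : Sol A B Φ F μ) {t : ℝ} (ht : 0 ≤ t) : Monotone (Φ t) := by
  intro x y hxy
  have := h.Psub t ht x y
  have h2 := intervalIntegral.integral_nonneg (f := F t) (μ := volume) hxy (fun u _ => h.F0 t ht u)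
  linarith

lemma xanti (h : Sol A B Φ F μ) {t : ℝ} (ht : 0 ≤ t) : Antitone (fun x => Φ t x - (x - μ)) := by
  intro x y hxy
  have := le_of_abs_le (h.xlip ht x y)
  rw [abs_of_nonneg (sub_nonneg.2 hxy)] at this
  simp only
  linarith

lemma Pnn (h : Sol A B Φ F μ) {t : ℝ} (ht : 0 ≤ t) (x : ℝ) : 0 ≤ Φ t x :=
  (h.xmono ht).le_of_tendsto (h.Pbot t ht) x

lemma Pge (h : Sol A B Φ F μ) {t : ℝ} (ht : 0 ≤ t) (x : ℝ) : x - μ ≤ Φ t x := by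
  have := (h.xanti ht).le_of_tendsto (h.Ptop t ht) x
  linarith

/-- Hölder continuity in time. -/
lemma tholder (hc : Coef a b A B c C L γ) (h : Sol A B Φ F μ) {s t : ℝ} (hs : 0 ≤ s) (hst : s ≤ t)
    (x : ℝ) {ε : ℝ} (hε : 0 < ε) :
    |Φ t x - Φ s x| ≤ (C / ε + L) * (t - s) + 2 * ε := by
  have e := h.eq s t hs hst x (x + ε)
  have bA : ∀ y, |∫ r in s..t, A (F r y)| ≤ C * (t - s) := fun y => by
    have := intervalIntegral.norm_integral_le_of_norm_le_const (a := s) (b := t)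
      (f := fun r => A (F r y)) (C := C) (fun r hr => by
        rw [uIoc_of_le hst] at hr
        have hr0 : 0 ≤ r := hs.trans hr.1.le
        exact hc.Abd (h.F0 r hr0 y) (h.F1 r hr0 y))
    rwa [abs_of_nonneg (sub_nonneg.2 hst)] at this
  have bB : ∀ y, |∫ r in s..t, B (F r y)| ≤ L * (t - s) := fun y => by
    have := intervalIntegral.norm_integral_le_of_norm_le_const (a := s) (b := t)
      (f := fun r => B (F r y)) (C := L) (fun r hr => by
        rw [uIoc_of_le hst] at hr
        have hr0 : 0 ≤ r := hs.trans hr.1.le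
        exact hc.Bbd (h.F0 r hr0 y) (h.F1 r hr0 y))
    rwa [abs_of_nonneg (sub_nonneg.2 hst)] at this
  have ht : 0 ≤ t := hs.trans hst
  have i1 : IntervalIntegrable
      (fun z => Φ t z - Φ s z + ∫ r in s..t, B (F r z)) volume x (x + ε) :=
    (((h.xcont ht).sub (h.xcont hs)).intervalIntegrable _ _).add
      (intble_of_bdd (tmeas_aux hc.Blip hc.Bcont (fun u => hc.Bbd) h.F0 h.F1 h.tmeas h.Fmono hs hst)
        bB _ _)
  have k1 : ∫ z in x..(x+ε), (Φ t z - Φ s z + ∫ r in s..t, B (F r z)) -  (Φ t x - Φ s x) =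
     (∫ z in x..(x+ε), (Φ t z - Φ s z + ∫ r in s..t, B (F r z))) - ε * (Φ t x - Φ s x) := by
    rw [intervalIntegral.integral_sub i1 intervalIntegrable_const]
    simp
    ring
  have k2 := intervalIntegral.norm_integral_le_of_norm_le_const (a := x) (b := x + ε)
      (f := fun z => (Φ t z - Φ s z + ∫ r in s..t, B (F r z)) -  (Φ t x - Φ s x))
      (C := 2 * ε + L * (t - s)) (fun z hz => by
        rw [uIoc_of_le (by linarith)] at hz
        have q1 := h.xlip ht x z
        have q2 := h.xlip hs x z
        have q3 := bB z
        have q4 : |z - x| ≤ ε := by rw [abs_of_nonneg (by linarith [hz.1])]; linarith [hz.2]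
        rw [Real.norm_eq_abs, abs_le]
        rw [abs_le] at q1 q2 q3
        constructor <;> linarith)
  rw [k1, ← e, Real.norm_eq_abs] at k2
  have q5 := bA x
  have q6 := bA (x + ε)
  simp only [add_sub_cancel_left, abs_of_pos hε] at k2
  have : |ε * (Φ t x - Φ s x)| ≤ C * (t - s) + (2 * ε + L * (t - s)) * ε := by
    rw [abs_le] at k2 q5 q6 ⊢
    constructor <;> linarith
  rw [abs_mul, abs_of_pos hε] at this
  rw [← mul_le_mul_iff_right₀ hε]
  calc _ ≤ _ := this
    _ = _ := by field_simp; ring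

lemma tcontPhi (hc : Coef a b A B c C L γ) (h : Sol A B Φ F μ) {t0 : ℝ} (ht0 : 0 ≤ t0)
    {ε : ℝ} (hε : 0 < ε) : ∃ δ > 0, ∀ t, 0 ≤ t → |t - t0| < δ → ∀ x, |Φ t x - Φ t0 x| < ε := by
  have hK : 0 < C / (ε/8) + L := add_pos (div_pos hc.Cpos (by positivity)) hc.Lpos
  refine ⟨(ε / 2) / (C / (ε/8) + L), by positivity, fun t ht htd x => ?_⟩
  have hlt : (C / (ε/8) + L) * |t - t0| < ε / 2 := by
    rw [lt_div_iff₀ hK] at htd; linarith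
  rcases le_total t0 t with h1 | h1
  · have := h.tholder hc ht0 h1 x (ε := ε/8) (by positivity)
    rw [abs_of_nonneg (sub_nonneg.2 h1)] at hlt
    linarith
  · have := h.tholder hc ht h1 x (ε := ε/8) (by positivity)
    rw [abs_of_nonpos (sub_nonpos.2 h1)] at hlt
    rw [abs_sub_comm]
    linarith

lemma jcont (hc : Coef a b A B c C L γ) (h : Sol A B Φ F μ) :
    Continuous (fun p : ℝ × ℝ => Φ (max p.1 0) p.2) := by
  rw [Metric.continuous_iff]
  rintro ⟨t0, x0⟩ ε hε
  obtain ⟨δ, hδ, hd⟩ := h.tcontPhi hc (le_max_right t0 0) (half_pos hε)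
  refine ⟨min δ (ε/2), by positivity, ?_⟩
  rintro ⟨t, x⟩ hp
  rw [Prod.dist_eq, max_lt_iff, lt_min_iff, lt_min_iff, Real.dist_eq, Real.dist_eq] at hp
  have h1 : |max t 0 - max t0 0| < δ := (abs_max_sub_max_le_abs _ _ _).trans_lt hp.1.1
  have h2 := hd _ (le_max_right t 0) h1 x
  have h3 := h.xlip (le_max_right t0 0) x0 x
  rw [Real.dist_eq]
  simp only at hp ⊢
  have e : Φ (max t 0) x - Φ (max t0 0) x0 =
    (Φ (max t 0) x - Φ (max t0 0) x) + (Φ (max t0 0) x - Φ (max t0 0) x0) := by ring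
  rw [e]
  exact (abs_add_le _ _).trans_lt (by linarith [hp.2.2])

end Sol


lemma hasDerivAt_pos_sq (p : ℝ) : HasDerivAt (fun p : ℝ => 3 * (max p 0) ^ 2) (6 * max p 0) p := by
  rcases lt_trichotomy p 0 with h | h | h
  · rw [max_eq_right h.le]
    have : HasDerivAt (fun _ : ℝ => (0:ℝ)) (6 * 0) p := by simpa using hasDerivAt_const p (0:ℝ)
    refine this.congr_of_eventuallyEq ?_
    filter_upwards [Iio_mem_nhds h] with q hq
    rw [max_eq_right (le_of_lt hq)]; ring
  · subst h
    rw [max_self, mul_zero, hasDerivAt_iff_isLittleO]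
    simp only [max_self, sub_zero, smul_eq_mul, mul_zero]
    refine Asymptotics.IsLittleO.of_bound fun ε hε => ?_
    filter_upwards [Metric.ball_mem_nhds (0:ℝ) (show 0 < ε / 3 by positivity)] with q hq
    rw [Metric.mem_ball, Real.dist_eq, sub_zero] at hq
    have h1 : max q 0 ≤ |q| := max_le (le_abs_self q) (abs_nonneg q)
    have h2 : 0 ≤ max q 0 := le_max_right _ _
    rw [Real.norm_eq_abs, Real.norm_eq_abs]
    rw [abs_of_nonneg (by simp only [ne_eq, OfNat.ofNat_ne_zero, not_false_eq_true, zero_pow, mul_zero, sub_zero]; positivity)]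
    have h3 : (max q 0)^2 ≤ |q| ^ 2 := by gcongr
    nlinarith [abs_nonneg q]
  · rw [max_eq_left h.le]
    have : HasDerivAt (fun q : ℝ => 3 * q ^ 2) (6 * p) p := by
      have := (hasDerivAt_pow 2 p).const_mul 3
      refine this.congr_deriv ?_
      norm_num; ring
    refine this.congr_of_eventuallyEq ?_
    filter_upwards [Ioi_mem_nhds h] with q hq
    rw [max_eq_left (le_of_lt hq)]

lemma pos_cube_convex (p q : ℝ) : (max p 0) ^ 3 - (max q 0) ^ 3 ≤ 3 * (max p 0) ^ 2 * (p - q) := by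
  rcases le_total p 0 with hp | hp
  · rw [max_eq_right hp]
    have : 0 ≤ (max q 0) ^ 3 := by positivity
    simp [this]
  · rw [max_eq_left hp]
    rcases le_total q 0 with hq | hq
    · rw [max_eq_right hq]
      nlinarith [pow_nonneg hp 3, mul_nonneg (sq_nonneg p) (neg_nonneg.2 hq)]
    · rw [max_eq_left hq]
      nlinarith [mul_nonneg (add_nonneg (mul_nonneg two_pos.le hp) hq) (sq_nonneg (p - q))]

namespace Sol
variable {a b A B : ℝ → ℝ} {c C L γ μ : ℝ} {Φ F : ℝ → ℝ → ℝ}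

lemma Bst_meas (hc : Coef a b A B c C L γ) (h : Sol A B Φ F μ) {s t : ℝ} (hs : 0 ≤ s)
    (hst : s ≤ t) : Measurable (fun x => ∫ r in s..t, B (F r x)) :=
  tmeas_aux hc.Blip hc.Bcont (fun _ => hc.Bbd) h.F0 h.F1 h.tmeas h.Fmono hs hst

lemma Ast_bd (hc : Coef a b A B c C L γ) (h : Sol A B Φ F μ) {s t : ℝ} (hs : 0 ≤ s)
    (hst : s ≤ t) (y : ℝ) : |∫ r in s..t, A (F r y)| ≤ C * (t - s) := by
  have := intervalIntegral.norm_integral_le_of_norm_le_const (a := s) (b := t)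
    (f := fun r => A (F r y)) (C := C) (fun r hr => by
      rw [uIoc_of_le hst] at hr
      have hr0 : 0 ≤ r := hs.trans hr.1.le
      exact hc.Abd (h.F0 r hr0 y) (h.F1 r hr0 y))
  rwa [abs_of_nonneg (sub_nonneg.2 hst)] at this

lemma Bst_bd (hc : Coef a b A B c C L γ) (h : Sol A B Φ F μ) {s t : ℝ} (hs : 0 ≤ s)
    (hst : s ≤ t) (y : ℝ) : |∫ r in s..t, B (F r y)| ≤ L * (t - s) := by
  have := intervalIntegral.norm_integral_le_of_norm_le_const (a := s) (b := t)
    (f := fun r => B (F r y)) (C := L) (fun r hr => by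
      rw [uIoc_of_le hst] at hr
      have hr0 : 0 ≤ r := hs.trans hr.1.le
      exact hc.Bbd (h.F0 r hr0 y) (h.F1 r hr0 y))
  rwa [abs_of_nonneg (sub_nonneg.2 hst)] at this

/-- The integrand in the identity `eq` is interval integrable. -/
lemma eq_intble (hc : Coef a b A B c C L γ) (h : Sol A B Φ F μ) {s t : ℝ} (hs : 0 ≤ s)
    (hst : s ≤ t) (x y : ℝ) :
    IntervalIntegrable (fun z => Φ t z - Φ s z + ∫ r in s..t, B (F r z)) volume x y :=
  (((h.xcont (hs.trans hst)).sub (h.xcont hs)).intervalIntegrable _ _).add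
    (intble_of_bdd (h.Bst_meas hc hs hst) (h.Bst_bd hc hs hst) _ _)

lemma Ast_rderiv (hc : Coef a b A B c C L γ) (h : Sol A B Φ F μ) {s t : ℝ} (hs : 0 ≤ s)
    (hst : s ≤ t) (x : ℝ) :
    HasDerivWithinAt (fun x => (1/2) * ∫ r in s..t, A (F r x))
      (Φ t x - Φ s x + ∫ r in s..t, B (F r x)) (Ioi x) x := by
  have ht := hs.trans hst
  have hrc : ∀ x, ContinuousWithinAt (fun z => Φ t z - Φ s z + ∫ r in s..t, B (F r z)) (Ici x) x := by
    intro x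
    refine ((h.xcont ht).sub (h.xcont hs)).continuousWithinAt.add ?_
    exact trc_aux hc.Bcont (fun _ => hc.Bbd) h.F0 h.F1 h.tmeas hs hst
      (fun r hr => h.Frc r hr x)
  have := (rderiv_int ((((h.xcont ht).sub (h.xcont hs)).measurable).add (h.Bst_meas hc hs hst))
    hrc (h.eq_intble hc hs hst) 0 x).const_add ((1/2) * ∫ r in s..t, A (F r 0))
  refine this.congr_of_eventuallyEq (Eventually.of_forall fun y => ?_) ?_
  · have := h.eq s t hs hst 0 y
    simp only [Pi.add_apply, Pi.sub_apply]
    rw [← this]; ring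
  · have := h.eq s t hs hst 0 x
    simp only [Pi.add_apply, Pi.sub_apply]
    rw [← this]; ring

lemma Ast_cont (hc : Coef a b A B c C L γ) (h : Sol A B Φ F μ) {s t : ℝ} (hs : 0 ≤ s)
    (hst : s ≤ t) : Continuous (fun x => ∫ r in s..t, A (F r x)) := by
  have h1 : Continuous (fun y => ∫ z in (0:ℝ)..y, (Φ t z - Φ s z + ∫ r in s..t, B (F r z))) :=
    intervalIntegral.continuous_primitive (h.eq_intble hc hs hst) 0
  have : (fun x => ∫ r in s..t, A (F r x)) = fun y => (∫ r in s..t, A (F r 0)) +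
      2 * ∫ z in (0:ℝ)..y, (Φ t z - Φ s z + ∫ r in s..t, B (F r z)) := by
    ext y
    rw [← h.eq s t hs hst 0 y]; ring
  rw [this]
  fun_prop

/-- right derivative in time of the time integrals. -/
lemma st_deriv (h : Sol A B Φ F μ) {f : ℝ → ℝ} (hf : Continuous f)
    {s : ℝ} (hs : 0 ≤ s) {x : ℝ}
    (hx : ContinuousWithinAt (fun r => F r x) (Ici 0) s) :
    Tendsto (fun t => (t - s)⁻¹ * ∫ r in s..t, f (F r x)) (𝓝[>] s) (𝓝 (f (F s x))) := by
  have hcw : ContinuousWithinAt (fun r => f (F r x)) (Ioi s) s :=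
    (hf.continuousAt.comp_continuousWithinAt hx).mono (fun r hr => hs.trans (le_of_lt hr))
  have hmeas : StronglyMeasurableAtFilter (fun r => f (F r x)) (𝓝[>] s) volume := by
    refine ⟨Ioi s, self_mem_nhdsWithin, ?_⟩
    exact hf.comp_aestronglyMeasurable ((h.tmeas x).mono_measure
      (Measure.restrict_mono_set _ (fun r hr => hs.trans (le_of_lt hr))))
  have hd := intervalIntegral.integral_hasDerivWithinAt_right
    (a := s) (b := s) (f := fun r => f (F r x)) (by simp) (s := Ici s) (t := Ioi s) hmeas hcw
  have := (hd.mono Ioi_subset_Ici_self)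
  rw [hasDerivWithinAt_iff_tendsto_slope' (by simp)] at this
  refine this.congr fun t => ?_
  simp [slope_def_field, div_eq_inv_mul]

end Sol


/-- Pointwise inequality behind the energy estimate. -/
lemma energy_pointwise {a b A B : ℝ → ℝ} {c C L γ : ℝ} (hc : Coef a b A B c C L γ) {σ : ℝ}
    (hσ : σ ^ 2 = 1) (f v w y d : ℝ) (hw : 0 ≤ w) (hs : σ * (y - B v - d) ≤ 0) :
    -(σ * (6 * w * (σ * (f - v))) * ((1/2) * (A f - A v))) - σ * (3 * w ^ 2) * B f
      - σ * (3 * w ^ 2) * d + σ * (3 * w ^ 2) * y ≤ (3 * L ^ 2 / (4 * c)) * w ^ 3 := by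
  have h1 := hc.Astrong f v
  have h2 := hc.Blip f v
  have hcp := hc.cpos
  have e1 : -(σ * (6 * w * (σ * (f - v))) * ((1/2) * (A f - A v))) =
      -(3 * w * ((A f - A v) * (f - v))) := by
    have : -(σ * (6 * w * (σ * (f - v))) * ((1/2) * (A f - A v))) =
      -(3 * w * ((A f - A v) * (f - v))) * σ ^ 2 := by ring
    rw [this, hσ, mul_one]
  rw [e1]
  have e2 : - σ * (B f - B v) ≤ L * |f - v| := by
    have : |σ| = 1 := by
      rw [← sq_eq_sq₀ (abs_nonneg _) zero_le_one, sq_abs, hσ]; norm_num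
    calc - σ * (B f - B v) ≤ |(- σ) * (B f - B v)| := le_abs_self _
      _ = |B f - B v| := by rw [abs_mul, abs_neg, this, one_mul]
      _ ≤ _ := h2
  have e3 : 3 * w ^ 2 * (σ * (y - B v - d)) ≤ 0 :=
    mul_nonpos_of_nonneg_of_nonpos (by positivity) hs
  have e4 : 3 * w ^ 2 * (-σ * (B f - B v)) ≤ 3 * w ^ 2 * (L * |f - v|) :=
    mul_le_mul_of_nonneg_left e2 (by positivity)
  have e5 : 3 * w * (c * (f - v) ^ 2) ≤ 3 * w * ((A f - A v) * (f - v)) :=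
    mul_le_mul_of_nonneg_left h1 (by positivity)
  have e6 : 3 * w ^ 2 * (L * |f - v|) - 3 * w * (c * (f - v) ^ 2) ≤ (3 * L ^ 2 / (4 * c)) * w ^ 3 := by
    have hq : (f - v) ^ 2 = |f - v| ^ 2 := (sq_abs _).symm
    rw [hq]
    have : (3 * L ^ 2 / (4 * c)) * w ^ 3 - (3 * w ^ 2 * (L * |f - v|) - 3 * w * (c * |f - v| ^ 2))
      = 3 * w * c * (|f - v| - L * w / (2 * c)) ^ 2 := by
      field_simp
      ring
    have h3 : 0 ≤ 3 * w * c * (|f - v| - L * w / (2 * c)) ^ 2 := by positivity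
    linarith
  nlinarith

/-- Comparison principle on a rectangle. -/
lemma comparison {a b A B : ℝ → ℝ} {c C L γ μ : ℝ} {Φ F : ℝ → ℝ → ℝ}
    (hc : Coef a b A B c C L γ) (h : Sol A B Φ F μ) {σ : ℝ} (hσ : σ ^ 2 = 1) {R T : ℝ}
    (hR : 0 < R)
    (V₀ v₀ η η' d d' : ℝ → ℝ) (y : ℝ → ℝ → ℝ)
    (hV : ∀ x, HasDerivAt V₀ (v₀ x) x) (hη : ∀ x, HasDerivAt η (η' x) x)
    (hd : ∀ t, HasDerivAt d (d' t) t) (hv0c : Continuous v₀) (hη'c : Continuous η')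
    (hAv : ∀ t x, HasDerivAt (fun x => A (v₀ x + d t * η' x)) (2 * y t x) x)
    (hyc : ∀ t, Continuous (y t))
    (hsup : ∀ t, 0 ≤ t → ∀ x ∈ Icc (-R) R,
      σ * (y t x - B (v₀ x + d t * η' x) - d' t * η x) ≤ 0)
    (hb1 : ∀ t ∈ Icc 0 T, σ * (Φ t R - (V₀ R + d t * η R)) ≤ 0)
    (hb2 : ∀ t ∈ Icc 0 T, σ * (Φ t (-R) - (V₀ (-R) + d t * η (-R))) ≤ 0)
    (h0 : ∀ x ∈ Icc (-R) R, σ * (Φ 0 x - (V₀ x + d 0 * η x)) ≤ 0) :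
    ∀ t ∈ Icc 0 T, ∀ x ∈ Icc (-R) R, σ * (Φ t x - (V₀ x + d t * η x)) ≤ 0 := by
  have hV0c : Continuous V₀ := continuous_iff_continuousAt.2 fun x => (hV x).continuousAt
  have hηc : Continuous η := continuous_iff_continuousAt.2 fun x => (hη x).continuousAt
  have hdc : Continuous d := continuous_iff_continuousAt.2 fun x => (hd x).continuousAt
  have hRR : -R ≤ R := by linarith
  set w : ℝ → ℝ → ℝ := fun t x => σ * (Φ (max t 0) x - (V₀ x + d t * η x)) with hw
  have hjc := h.jcont hc
  have hwc : Continuous (fun p : ℝ × ℝ => w p.1 p.2) := by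
    simp only [hw]
    exact continuous_const.mul (hjc.sub ((hV0c.comp continuous_snd).add
      ((hdc.comp continuous_fst).mul (hηc.comp continuous_snd))))
  have hwt : ∀ t, 0 ≤ t → ∀ x, w t x = σ * (Φ t x - (V₀ x + d t * η x)) := fun t ht x => by
    simp only [hw, max_eq_left ht]
  have hwx : ∀ t, Continuous (w t) := fun t => hwc.comp (by fun_prop : Continuous fun x => (t, x))
  set v : ℝ → ℝ → ℝ := fun t x => v₀ x + d t * η' x with hv
  have hvx : ∀ t, Continuous (v t) := fun t => by simp only [hv]; fun_prop
  set ρ : ℝ → ℝ → ℝ := fun t x => 3 * (max (w t x) 0) ^ 2 with hρ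
  set ρ' : ℝ → ℝ → ℝ := fun t x => 6 * max (w t x) 0 * (σ * (F t x - v t x)) with hρ'
  have hρc : ∀ t, Continuous (ρ t) := fun t => by
    have := hwx t
    simp only [hρ]; fun_prop
  have hρd : ∀ t, 0 ≤ t → ∀ x, HasDerivWithinAt (ρ t) (ρ' t x) (Ioi x) x := by
    intro t ht x
    have d1 : HasDerivWithinAt (w t) (σ * (F t x - v t x)) (Ioi x) x := by
      have e : w t = fun x => σ * (Φ t x - (V₀ x + d t * η x)) := funext (hwt t ht)
      rw [e]
      exact ((h.rderiv ht x).sub ((hV x).add ((hη x).const_mul _)).hasDerivWithinAt).const_mul σ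
    exact (hasDerivAt_pos_sq (w t x)).comp_hasDerivWithinAt x d1
  have hρ'm : ∀ t, 0 ≤ t → Measurable (ρ' t) := fun t ht => by
    have := (hwx t).measurable
    have := (hvx t).measurable
    have := (h.Fmono t ht).measurable
    simp only [hρ']; fun_prop
  -- uniform bounds
  obtain ⟨M, hM⟩ : ∃ M : ℝ, ∀ t ∈ Icc 0 (T + 1), ∀ x ∈ Icc (-R) R,
      |w t x| ≤ M ∧ |v t x| ≤ M ∧ |η x| ≤ M := by
    have hK : IsCompact (Icc 0 (T + 1) ×ˢ Icc (-R) R) := isCompact_Icc.prod isCompact_Icc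
    have hcont : Continuous (fun p : ℝ × ℝ => |w p.1 p.2| + |v p.1 p.2| + |η p.2|) := by
      simp only [hv]; fun_prop
    obtain ⟨M, hM⟩ := hK.bddAbove_image hcont.continuousOn
    refine ⟨M, fun t ht x hx => ?_⟩
    have := hM (mem_image_of_mem _ (mk_mem_prod ht hx))
    simp only at this
    have q1 := abs_nonneg (w t x)
    have q2 := abs_nonneg (v t x)
    have q3 := abs_nonneg (η x)
    exact ⟨by linarith, by linarith, by linarith⟩
  have hρb : ∀ t ∈ Icc 0 (T+1), ∀ x ∈ Icc (-R) R, |ρ t x| ≤ 3 * M ^ 2 ∧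
      |ρ' t x| ≤ 6 * M * (1 + M) := by
    intro t ht x hx
    obtain ⟨m1, m2, m3⟩ := hM t ht x hx
    have hM0 : 0 ≤ M := (abs_nonneg _).trans m1
    have q1 : max (w t x) 0 ≤ M := max_le ((le_abs_self _).trans m1) hM0
    have q0 : 0 ≤ max (w t x) 0 := le_max_right _ _
    have hs1 : |σ| = 1 := by
      rw [← sq_eq_sq₀ (abs_nonneg _) zero_le_one, sq_abs, hσ]; norm_num
    constructor
    · simp only [hρ]
      rw [abs_of_nonneg (by positivity)]
      gcongr
    · simp only [hρ']
      rw [abs_mul, abs_of_nonneg (by positivity : (0:ℝ) ≤ 6 * max (w t x) 0), abs_mul, hs1, one_mul]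
      have : |F t x - v t x| ≤ 1 + M := (abs_sub _ _).trans (add_le_add (h.Fabs ht.1 x) m2)
      gcongr
  have hρ0 : ∀ t ∈ Icc 0 T, ρ t R = 0 ∧ ρ t (-R) = 0 := by
    intro t ht
    simp only [hρ, hwt t ht.1]
    rw [max_eq_right (hb1 t ht), max_eq_right (hb2 t ht)]
    norm_num
  have hρ'i : ∀ t ∈ Icc 0 (T+1), IntervalIntegrable (ρ' t) volume (-R) R := by
    intro t ht
    refine (intervalIntegrable_const (c := 6 * M * (1 + M))).mono_fun
      (hρ'm t ht.1).aestronglyMeasurable ?_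
    rw [EventuallyLE, ae_restrict_iff' measurableSet_uIoc]
    refine Eventually.of_forall fun x hx => ?_
    rw [uIoc_of_le hRR] at hx
    rw [Real.norm_eq_abs, Real.norm_eq_abs]
    exact (hρb t ht x (Ioc_subset_Icc_self hx)).2.trans (le_abs_self _)
  set J : ℝ → ℝ := fun t => ∫ x in (-R)..R, (max (w t x) 0) ^ 3 with hJ
  have hJc : Continuous J := by
    refine intervalIntegral.continuous_parametric_intervalIntegral_of_continuous' ?_ _ _
    show Continuous (fun p : ℝ × ℝ => (max (w p.1 p.2) 0) ^ 3)
    fun_prop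
  set K := 3 * L ^ 2 / (4 * c) with hK
  -- main derivative estimate
  have key : ∀ s ∈ Ico 0 T, ∀ r, K * J s < r →
      ∃ᶠ z in 𝓝[>] s, (z - s)⁻¹ * (J z - J s) < r := by
    intro s hs r hr
    have hs0 := hs.1
    have hsI : s ∈ Icc 0 (T+1) := ⟨hs.1, by linarith [hs.2]⟩
    have hsT : s ∈ Icc 0 T := ⟨hs.1, hs.2.le⟩
    set q : ℝ → ℝ := fun t => (t - s)⁻¹ * (d t - d s) with hq
    have hqlim : Tendsto q (𝓝[>] s) (𝓝 (d' s)) := by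
      have := (hd s).hasDerivWithinAt (s := Ioi s)
      rw [hasDerivWithinAt_iff_tendsto_slope' (by simp)] at this
      refine this.congr fun t => ?_
      simp [hq, slope_def_field, div_eq_inv_mul]
    set e : ℝ → ℝ → ℝ := fun t x =>
      -(σ * ρ' t x * ((1/2) * ((t - s)⁻¹ * ∫ r in s..t, A (F r x))))
        - σ * ρ t x * ((t - s)⁻¹ * ∫ r in s..t, B (F r x)) - σ * ρ t x * (q t * η x) with he
    set e0 : ℝ → ℝ := fun x => -(σ * ρ' s x * ((1/2) * A (F s x)))
        - σ * ρ s x * B (F s x) - σ * ρ s x * (d' s * η x) with he0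
    have hnear : ∀ᶠ t in 𝓝[>] s, t ∈ Ioo s T := Ioo_mem_nhdsGT hs.2
    -- step 1 : difference quotient bounded by the integral of e
    have st1 : ∀ᶠ t in 𝓝[>] s, (t - s)⁻¹ * (J t - J s) ≤ ∫ x in (-R)..R, e t x := by
      filter_upwards [hnear] with t ht
      have hts : 0 < t - s := sub_pos.2 ht.1
      have ht0 : 0 ≤ t := hs0.trans ht.1.le
      have htT : t ∈ Icc 0 T := ⟨ht0, ht.2.le⟩
      have htI : t ∈ Icc 0 (T+1) := ⟨ht0, by linarith [ht.2]⟩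
      have i1 : ∀ t, IntervalIntegrable (fun x => (max (w t x) 0) ^ 3) volume (-R) R := fun t => by
        have := hwx t
        exact Continuous.intervalIntegrable (by fun_prop) _ _
      have hbi := intble_of_bdd (h.Bst_meas hc hs0 ht.1.le) (h.Bst_bd hc hs0 ht.1.le) (-R) R
      -- integration by parts
      have ibp := intervalIntegral.integral_mul_deriv_eq_deriv_mul_of_hasDeriv_right
        (a := -R) (b := R) (u := ρ t) (u' := ρ' t)
        (v := fun x => (1/2) * ∫ r in s..t, A (F r x))
        (v' := fun x => Φ t x - Φ s x + ∫ r in s..t, B (F r x))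
        (hρc t).continuousOn (((h.Ast_cont hc hs0 ht.1.le).const_mul (1/2)).continuousOn)
        (fun x _ => hρd t ht0 x) (fun x _ => h.Ast_rderiv hc hs0 ht.1.le x)
        (hρ'i t htI) (h.eq_intble hc hs0 ht.1.le _ _)
      rw [(hρ0 t htT).1, (hρ0 t htT).2] at ibp
      have i2 : IntervalIntegrable (fun x => ρ t x * (Φ t x - Φ s x + ∫ r in s..t, B (F r x)))
          volume (-R) R :=
        (h.eq_intble hc hs0 ht.1.le _ _).continuousOn_mul (hρc t).continuousOn
      have i3 : IntervalIntegrable (fun x => ρ t x * ∫ r in s..t, B (F r x)) volume (-R) R :=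
        hbi.continuousOn_mul (hρc t).continuousOn
      have i4 : IntervalIntegrable (fun x => ρ t x * ((d t - d s) * η x)) volume (-R) R :=
        Continuous.intervalIntegrable (by have := hρc t; fun_prop) _ _
      have i5 : IntervalIntegrable (fun x => ρ' t x * ((1/2) * ∫ r in s..t, A (F r x)))
          volume (-R) R :=
        (hρ'i t htI).mul_continuousOn (((h.Ast_cont hc hs0 ht.1.le).const_mul (1/2)).continuousOn)
      have le1 : J t - J s ≤ ∫ x in (-R)..R, σ * (ρ t x * (Φ t x - Φ s x + ∫ r in s..t, B (F r x))
          - ρ t x * (∫ r in s..t, B (F r x)) - ρ t x * ((d t - d s) * η x)) := by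
        rw [hJ]
        simp only
        rw [← intervalIntegral.integral_sub (i1 t) (i1 s)]
        refine intervalIntegral.integral_mono_on hRR ((i1 t).sub (i1 s))
          (((i2.sub i3).sub i4).const_mul σ) fun x _ => ?_
        refine (pos_cube_convex (w t x) (w s x)).trans (le_of_eq ?_)
        rw [hwt t ht0, hwt s hs0]
        simp only [hρ, hwt t ht0]
        ring
      have eq1 : ∫ x in (-R)..R, σ * (ρ t x * (Φ t x - Φ s x + ∫ r in s..t, B (F r x))
          - ρ t x * (∫ r in s..t, B (F r x)) - ρ t x * ((d t - d s) * η x)) =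
          ∫ x in (-R)..R, σ * (-(ρ' t x * ((1/2) * ∫ r in s..t, A (F r x)))
          - ρ t x * (∫ r in s..t, B (F r x)) - ρ t x * ((d t - d s) * η x)) := by
        have i5' : IntervalIntegrable (fun x => -(ρ' t x * ((1/2) * ∫ r in s..t, A (F r x))))
          volume (-R) R := i5.neg
        rw [intervalIntegral.integral_const_mul, intervalIntegral.integral_const_mul,
          intervalIntegral.integral_sub (i2.sub i3) i4, intervalIntegral.integral_sub i2 i3,
          intervalIntegral.integral_sub (i5'.sub i3) i4, intervalIntegral.integral_sub i5' i3,
          intervalIntegral.integral_neg, ibp]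
        ring
      have eq2 : ∫ x in (-R)..R, e t x = (t - s)⁻¹ *
          ∫ x in (-R)..R, σ * (-(ρ' t x * ((1/2) * ∫ r in s..t, A (F r x)))
          - ρ t x * (∫ r in s..t, B (F r x)) - ρ t x * ((d t - d s) * η x)) := by
        rw [← intervalIntegral.integral_const_mul]
        refine intervalIntegral.integral_congr fun x _ => ?_
        simp only [he, hq]
        ring
      rw [eq2, ← eq1]
      exact mul_le_mul_of_nonneg_left le1 (inv_nonneg.2 hts.le)
    -- step 2 : convergence
    have st2 : Tendsto (fun t => ∫ x in (-R)..R, e t x) (𝓝[>] s) (𝓝 (∫ x in (-R)..R, e0 x)) := by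
      have hs1 : |σ| = 1 := by
        rw [← sq_eq_sq₀ (abs_nonneg _) zero_le_one, sq_abs, hσ]; norm_num
      refine intervalIntegral.tendsto_integral_filter_of_dominated_convergence
        (fun _ => 6 * M * (1 + M) * ((1/2) * C) + 3 * M ^ 2 * L + 3 * M ^ 2 * ((|d' s| + 1) * M))
        ?_ ?_ intervalIntegrable_const ?_
      · filter_upwards [hnear] with t ht
        have ht0 : 0 ≤ t := hs0.trans ht.1.le
        have m1 := hρ'm t ht0
        have m2 := (hρc t).measurable
        have m3 := (h.Ast_cont hc hs0 ht.1.le).measurable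
        have m4 := h.Bst_meas hc hs0 ht.1.le
        have m5 := hηc.measurable
        refine Measurable.aestronglyMeasurable ?_
        simp only [he]
        fun_prop
      · have hqb : ∀ᶠ t in 𝓝[>] s, |q t| < |d' s| + 1 :=
          hqlim.abs.eventually_lt_const (by linarith)
        filter_upwards [hnear, hqb] with t ht hqt
        have hts : 0 < t - s := sub_pos.2 ht.1
        have ht0 : 0 ≤ t := hs0.trans ht.1.le
        have htI : t ∈ Icc 0 (T+1) := ⟨ht0, by linarith [ht.2]⟩
        refine Eventually.of_forall fun x hx => ?_
        rw [uIoc_of_le hRR] at hx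
        have hx' := Ioc_subset_Icc_self hx
        obtain ⟨b1, b2⟩ := hρb t htI x hx'
        have b3 := h.Ast_bd hc hs0 ht.1.le x
        have b4 := h.Bst_bd hc hs0 ht.1.le x
        have b5 := (hM t htI x hx').2.2
        have b3' : |(t - s)⁻¹ * ∫ r in s..t, A (F r x)| ≤ C := by
          rw [abs_mul, abs_inv, abs_of_pos hts, inv_mul_le_iff₀ hts]; linarith
        have b4' : |(t - s)⁻¹ * ∫ r in s..t, B (F r x)| ≤ L := by
          rw [abs_mul, abs_inv, abs_of_pos hts, inv_mul_le_iff₀ hts]; linarith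
        have c1 : |σ * ρ' t x * ((1/2) * ((t - s)⁻¹ * ∫ r in s..t, A (F r x)))| ≤
            6 * M * (1 + M) * ((1/2) * C) := by
          rw [abs_mul, abs_mul, hs1, one_mul, abs_mul (1/2 : ℝ), abs_of_pos (by norm_num : (0:ℝ) < 1/2)]
          exact mul_le_mul b2 (by linarith) (by positivity) ((abs_nonneg _).trans b2)
        have c2 : |σ * ρ t x * ((t - s)⁻¹ * ∫ r in s..t, B (F r x))| ≤ 3 * M ^ 2 * L := by
          rw [abs_mul, abs_mul, hs1, one_mul]
          exact mul_le_mul b1 b4' (by positivity) (by positivity)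
        have c3 : |σ * ρ t x * (q t * η x)| ≤ 3 * M ^ 2 * ((|d' s| + 1) * M) := by
          rw [abs_mul, abs_mul, hs1, one_mul, abs_mul (q t)]
          refine mul_le_mul b1 ?_ (by positivity) (by positivity)
          exact mul_le_mul hqt.le b5 (by positivity) (by positivity)
        simp only [he, Real.norm_eq_abs]
        rw [abs_le] at c1 c2 c3 ⊢
        constructor <;> linarith
      · filter_upwards [h.tcont s hs0] with x hx _
        have hsub : 𝓝[>] s ≤ 𝓝[≥] (0:ℝ) ⊔ 𝓝[>] s := le_sup_right
        have lF : Tendsto (fun t => F t x) (𝓝[>] s) (𝓝 (F s x)) :=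
          hx.mono_left (nhdsWithin_mono _ (fun r hr => hs0.trans (le_of_lt hr)))
        have lw : Tendsto (fun t => w t x) (𝓝[>] s) (𝓝 (w s x)) :=
          ((hwc.comp (by fun_prop : Continuous fun t => (t, x))).tendsto s).mono_left
            nhdsWithin_le_nhds
        have lv : Tendsto (fun t => v t x) (𝓝[>] s) (𝓝 (v s x)) := by
          have : Continuous fun t => v t x := by simp only [hv]; fun_prop
          exact (this.tendsto s).mono_left nhdsWithin_le_nhds
        have lm : Tendsto (fun t => max (w t x) 0) (𝓝[>] s) (𝓝 (max (w s x) 0)) :=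
          lw.max tendsto_const_nhds
        have lρ : Tendsto (fun t => ρ t x) (𝓝[>] s) (𝓝 (ρ s x)) := (lm.pow 2).const_mul 3
        have lρ' : Tendsto (fun t => ρ' t x) (𝓝[>] s) (𝓝 (ρ' s x)) :=
          (lm.const_mul 6).mul ((lF.sub lv).const_mul σ)
        have lA := h.st_deriv hc.Acont hs0 hx
        have lB := h.st_deriv hc.Bcont hs0 hx
        exact (((lρ'.const_mul σ).mul (lA.const_mul (1/2))).neg.sub
          ((lρ.const_mul σ).mul lB)).sub ((lρ.const_mul σ).mul (hqlim.mul_const (η x)))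
    -- step 3 : estimate of the limit
    have st3 : ∫ x in (-R)..R, e0 x ≤ K * J s := by
      have hFm := (h.Fmono s hs0).measurable
      have hAi : ∀ x ∈ Icc (-R) R, |A (v s x)| ≤ C * M := fun x hx => by
        have := hc.Alip (v s x) 0
        rw [hc.A0, sub_zero, sub_zero] at this
        exact this.trans (mul_le_mul_of_nonneg_left (hM s hsI x hx).2.1 hc.Cpos.le)
      have hAvc : Continuous fun x => A (v s x) := hc.Acont.comp (hvx s)
      have ibp := intervalIntegral.integral_mul_deriv_eq_deriv_mul_of_hasDeriv_right
        (a := -R) (b := R) (u := ρ s) (u' := ρ' s)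
        (v := fun x => (1/2) * A (v s x))
        (v' := fun x => y s x)
        (hρc s).continuousOn ((hAvc.const_mul (1/2)).continuousOn)
        (fun x _ => hρd s hs0 x)
        (fun x _ => by
          have := ((hAv s x).const_mul (1/2)).hasDerivWithinAt (s := Ioi x)
          refine this.congr_deriv ?_
          ring)
        (hρ'i s hsI) ((hyc s).intervalIntegrable _ _)
      rw [(hρ0 s hsT).1, (hρ0 s hsT).2] at ibp
      have i1 : IntervalIntegrable (fun x => ρ s x * y s x) volume (-R) R :=
        ((hρc s).mul (hyc s)).intervalIntegrable _ _
      have i2 : IntervalIntegrable (fun x => ρ' s x * ((1/2) * A (v s x))) volume (-R) R :=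
        (hρ'i s hsI).mul_continuousOn ((hAvc.const_mul (1/2)).continuousOn)
      have i3 : IntervalIntegrable (fun x => ρ' s x * ((1/2) * A (F s x))) volume (-R) R := by
        have hA : Measurable fun x => (1/2) * A (F s x) := by
          have := hc.Acont.measurable; fun_prop
        refine (intervalIntegrable_const (c := 6 * M * (1 + M) * ((1/2) * C))).mono_fun
          ((hρ'm s hs0).mul hA).aestronglyMeasurable ?_
        rw [EventuallyLE, ae_restrict_iff' measurableSet_uIoc]
        refine Eventually.of_forall fun x hx => ?_
        rw [uIoc_of_le hRR] at hx
        rw [Real.norm_eq_abs, Real.norm_eq_abs]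
        refine le_trans ?_ (le_abs_self _)
        have b2 := (hρb s hsI x (Ioc_subset_Icc_self hx)).2
        have e1 : |ρ' s x * (1 / 2 * A (F s x))| = |ρ' s x| * (1 / 2 * |A (F s x)|) := by
          rw [abs_mul (ρ' s x), abs_mul (1/2), abs_of_pos (by norm_num : (0:ℝ) < 1/2)]
        refine (le_of_eq e1).trans ?_
        refine mul_le_mul b2 ?_ (by positivity) ((abs_nonneg _).trans b2)
        have := hc.Abd (h.F0 s hs0 x) (h.F1 s hs0 x)
        linarith
      have i4 : IntervalIntegrable (fun x => ρ s x * B (F s x)) volume (-R) R := by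
        refine IntervalIntegrable.continuousOn_mul ?_ (hρc s).continuousOn
        refine intble_of_bdd (M := L) (by have := hc.Bcont.measurable; fun_prop) ?_ _ _
        exact fun x => hc.Bbd (h.F0 s hs0 x) (h.F1 s hs0 x)
      have i5 : IntervalIntegrable (fun x => ρ s x * (d' s * η x)) volume (-R) R :=
        Continuous.intervalIntegrable (by have := hρc s; fun_prop) _ _
      have i6 : IntervalIntegrable (fun x => (max (w s x) 0) ^ 3) volume (-R) R := by
        have := hwx s
        exact Continuous.intervalIntegrable (by fun_prop) _ _
      have ie : IntervalIntegrable e0 volume (-R) R := by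
        have := ((i3.const_mul σ).neg.sub (i4.const_mul σ)).sub (i5.const_mul σ)
        refine this.congr (fun x _ => ?_)
        simp only [he0, Pi.sub_apply, Pi.neg_apply]
        ring
      have z : ∫ x in (-R)..R, (σ * (ρ s x * y s x) + σ * (ρ' s x * ((1/2) * A (v s x)))) = 0 := by
        rw [intervalIntegral.integral_add (i1.const_mul σ) (i2.const_mul σ),
          intervalIntegral.integral_const_mul, intervalIntegral.integral_const_mul, ibp]
        ring
      have e7 : ∫ x in (-R)..R, e0 x = ∫ x in (-R)..R, (e0 x +
          (σ * (ρ s x * y s x) + σ * (ρ' s x * ((1/2) * A (v s x))))) := by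
        rw [intervalIntegral.integral_add ie ((i1.const_mul σ).add (i2.const_mul σ)), z, add_zero]
      rw [e7, hJ]
      simp only
      rw [← intervalIntegral.integral_const_mul]
      refine intervalIntegral.integral_mono_on hRR (ie.add ((i1.const_mul σ).add (i2.const_mul σ)))
        (i6.const_mul K) fun x hx => ?_
      refine le_trans (le_of_eq ?_) (energy_pointwise hc hσ (F s x) (v s x) (max (w s x) 0) (y s x)
        (d' s * η x) (le_max_right _ _) (hsup s hs0 x hx))
      simp only [he0, hρ, hρ']
      ring
    have st4 : ∀ᶠ t in 𝓝[>] s, ∫ x in (-R)..R, e t x < r :=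
      st2.eventually_lt_const (st3.trans_lt hr)
    refine Eventually.frequently ?_
    filter_upwards [st1, st4] with t h1 h2
    exact h1.trans_lt h2
  have hJ0 : J 0 ≤ 0 := by
    rw [hJ]
    simp only
    rw [intervalIntegral.integral_congr (g := fun _ => 0)]
    · simp
    · intro x hx
      rw [uIcc_of_le hRR] at hx
      simp only
      rw [hwt 0 le_rfl, max_eq_right (h0 x hx)]
      norm_num
  intro t ht x hx
  have hg := le_gronwallBound_of_liminf_deriv_right_le (f := J) (f' := fun s => K * J s)
    (δ := 0) (K := K) (ε := 0) (a := 0) (b := T) hJc.continuousOn key hJ0 (fun s _ => by simp) t ht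
  rw [gronwallBound_ε0_δ0] at hg
  by_contra hpos
  push Not at hpos
  have : 0 < J t := by
    refine intervalIntegral.integral_pos (by linarith) ?_ ?_ ⟨x, hx, ?_⟩
    · have := hwx t
      exact Continuous.continuousOn (by fun_prop)
    · intro z _; positivity
    · rw [hwt t ht.1, max_eq_left hpos.le]; positivity
  linarith


lemma lip_of_contDiffOn {f : ℝ → ℝ} (hf : ContDiffOn ℝ 1 f (Icc 0 1)) :
    ∃ K > 0, ∀ p ∈ Icc (0:ℝ) 1, ∀ q ∈ Icc (0:ℝ) 1, |f p - f q| ≤ K * |p - q| := by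
  have hu : UniqueDiffOn ℝ (Icc (0:ℝ) 1) := uniqueDiffOn_Icc zero_lt_one
  have hc : ContinuousOn (derivWithin f (Icc 0 1)) (Icc 0 1) :=
    hf.continuousOn_derivWithin hu le_rfl
  obtain ⟨K, hK⟩ := isCompact_Icc.exists_bound_of_continuousOn hc
  refine ⟨max K 1, by positivity, fun p hp q hq => ?_⟩
  exact Convex.norm_image_sub_le_of_norm_derivWithin_le (hf.differentiableOn one_ne_zero)
    (fun x hx => (hK x hx).trans (le_max_left _ _)) (convex_Icc 0 1) hq hp

lemma not_int_aux {a B : ℝ → ℝ} {c L : ℝ} (hc : 0 < c) (hL : 0 < L)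
    (hB : ∀ u ∈ Ioo (0:ℝ) (1/2), 0 < B u ∧ B u ≤ L * u ^ 2)
    (ha : ∀ u ∈ Ioo (0:ℝ) (1/2), c ≤ a u)
    (hi : ∫⁻ u in Ioo (0:ℝ) (1/2), ENNReal.ofReal (a u * u / (2 * |B u|)) < ⊤) : False := by
  have h1 : ∫⁻ u in Ioo (0:ℝ) (1/2), ENNReal.ofReal (c / (2 * L) * u⁻¹) < ⊤ := by
    refine lt_of_le_of_lt (setLIntegral_mono' measurableSet_Ioo fun u hu => ?_) hi
    apply ENNReal.ofReal_le_ofReal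
    obtain ⟨b1, b2⟩ := hB u hu
    have a1 := ha u hu
    have u0 := hu.1
    rw [abs_of_pos b1]
    calc c / (2 * L) * u⁻¹ = c * u / (2 * (L * u ^ 2)) := by field_simp
      _ ≤ a u * u / (2 * B u) := by
        have : 0 ≤ a u * u := mul_nonneg (hc.le.trans a1) u0.le
        gcongr
  have h2 : IntegrableOn (fun u : ℝ => c / (2 * L) * u⁻¹) (Ioo 0 (1/2)) := by
    refine ⟨by fun_prop, ?_⟩
    rw [hasFiniteIntegral_iff_ofReal]
    · exact h1
    · rw [EventuallyLE, ae_restrict_iff' measurableSet_Ioo]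
      refine Eventually.of_forall fun u hu => ?_
      have := hu.1
      simp only [Pi.zero_apply]
      positivity
  have h3 : IntervalIntegrable (fun u : ℝ => c / (2 * L) * u⁻¹) volume 0 (1/2) := by
    rw [intervalIntegrable_iff_integrableOn_Ioo_of_le (by norm_num)]; exact h2
  have h4 := h3.const_mul (c / (2 * L))⁻¹
  have h5 : IntervalIntegrable (fun u : ℝ => u⁻¹) volume 0 (1/2) := by
    convert h4 using 2 with u
    field_simp
  rw [intervalIntegrable_inv_iff] at h5
  rcases h5 with h5 | h5
  · norm_num at h5
  · exact h5 left_mem_uIcc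

/-- Quadratic upper bound for a primitive. -/
lemma prim_quad {b B : ℝ → ℝ} {L : ℝ} (hB : ∀ u, HasDerivAt B (b u) u) (hB0 : B 0 = 0)
    (hb : ∀ u ∈ Icc (0:ℝ) 1, b u ≤ L * u) : ∀ u ∈ Icc (0:ℝ) 1, B u ≤ L * u ^ 2 / 2 := by
  intro u hu
  have hd : ∀ x, HasDerivAt (fun x => B x - L * x ^ 2 / 2) (b x - L * x) x := fun x => by
    refine ((hB x).sub (((hasDerivAt_pow 2 x).const_mul L).div_const 2)).congr_deriv ?_
    simp; ring
  have := antitoneOn_of_deriv_nonpos (convex_Icc (0:ℝ) 1)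
    (f := fun x => B x - L * x ^ 2 / 2) (fun x _ => (hd x).continuousAt.continuousWithinAt)
    (fun x _ => (hd x).differentiableAt.differentiableWithinAt) (fun x hx => by
      rw [(hd x).deriv]; rw [interior_Icc] at hx
      linarith [hb x (Ioo_subset_Icc_self hx)])
  have := this (left_mem_Icc.2 zero_le_one) hu hu.1
  simp only [hB0] at this
  linarith

lemma prim_lower {b B : ℝ → ℝ} {k δ : ℝ} (hB : ∀ u, HasDerivAt B (b u) u) (hB0 : B 0 = 0)
    (hb : ∀ u ∈ Icc (0:ℝ) δ, k ≤ b u) : ∀ u ∈ Icc (0:ℝ) δ, k * u ≤ B u := by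
  intro u hu
  have := (convex_Icc (0:ℝ) δ).mul_sub_le_image_sub_of_le_deriv (f := B) (C := k)
    (fun x _ => (hB x).continuousAt.continuousWithinAt)
    (fun x _ => (hB x).differentiableAt.differentiableWithinAt)
    (fun x hx => by
      rw [(hB x).deriv]; rw [interior_Icc] at hx; exact hb x (Ioo_subset_Icc_self hx))
    0 ⟨le_rfl, hu.1.trans hu.2⟩ u hu hu.1
  simpa [hB0] using this

/-- Linear lower bound near `0`. -/
lemma lower_near_zero {a b B : ℝ → ℝ} {c L : ℝ} (hc : 0 < c) (hL : 0 < L)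
    (hB : ∀ u, HasDerivAt B (b u) u) (hB0 : B 0 = 0)
    (hlip : ∀ u ∈ Icc (0:ℝ) 1, |b u - b 0| ≤ L * u)
    (hpos : ∀ u ∈ Ioo (0:ℝ) 1, 0 < B u)
    (ha : ∀ u ∈ Ioo (0:ℝ) (1/2), c ≤ a u)
    (hi : ∫⁻ u in Ioo (0:ℝ) (1/2), ENNReal.ofReal (a u * u / (2 * |B u|)) < ⊤) :
    ∃ k > 0, ∃ δ ∈ Ioo (0:ℝ) 1, ∀ u ∈ Icc (0:ℝ) δ, k * u ≤ B u := by
  have hb0 : 0 < b 0 := by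
    by_contra hneg
    push Not at hneg
    refine not_int_aux hc hL (fun u hu => ⟨hpos u ⟨hu.1, by linarith [hu.2]⟩, ?_⟩) ha hi
    have := prim_quad (L := L) hB hB0 (fun u hu => by
      have := hlip u hu
      rw [abs_le] at this
      linarith [this.2]) u ⟨hu.1.le, by linarith [hu.2]⟩
    nlinarith [sq_nonneg u]
  refine ⟨b 0 / 2, by positivity, min (b 0 / (2 * L)) (1/2), ⟨by positivity, ?_⟩,
    prim_lower hB hB0 fun u hu => ?_⟩
  · exact lt_of_le_of_lt (min_le_right _ _) (by norm_num)
  · have h1 : u ≤ b 0 / (2 * L) := hu.2.trans (min_le_left _ _)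
    have h2 : u ≤ 1/2 := hu.2.trans (min_le_right _ _)
    have := hlip u ⟨hu.1, by linarith⟩
    rw [abs_le] at this
    rw [le_div_iff₀ (by positivity)] at h1
    linarith [this.1]

lemma lintegral_refl (f : ℝ → ℝ≥0∞) :
    ∫⁻ u in Ioo (0:ℝ) (1/2), f (1 - u) = ∫⁻ u in Ioo (1/2:ℝ) 1, f u := by
  have h := (Measure.measurePreserving_sub_left (volume : Measure ℝ) 1).setLIntegral_comp_preimage_emb
    (Homeomorph.subLeft (1:ℝ)).measurableEmbedding f (Ioo (1/2:ℝ) 1)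
  rw [← h]
  congr 2
  ext u
  simp only [mem_preimage, mem_Ioo]
  constructor <;> rintro ⟨h1, h2⟩ <;> constructor <;> linarith

theorem coef_exists
    (a b : ℝ → ℝ)
    (ha : ContinuousOn a (Set.Icc 0 1)) (hb : ContinuousOn b (Set.Icc 0 1))
    (hD3 : ∃ c > (0:ℝ), ∀ u ∈ Set.Icc (0:ℝ) 1, c ≤ a u)
    (hR2a : ContDiffOn ℝ 2 a (Set.Icc 0 1))
    (hR2b : ContDiffOn ℝ 1 b (Set.Icc 0 1))
    (hE1pos : ∀ u ∈ Set.Ioo (0:ℝ) 1, 0 < primitive b u)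
    (hE1B1 : primitive b 1 = 0)
    (hE2 : ((∫⁻ u in Set.Ioo (0:ℝ) (1/2),
        ENNReal.ofReal (a u * u / (2 * |primitive b u|)))
      + ∫⁻ u in Set.Ioo (1/2:ℝ) 1,
          ENNReal.ofReal (a u * (1 - u) / (2 * |primitive b u|))) < ⊤) :
    ∃ (a' b' A B : ℝ → ℝ) (c C L γ : ℝ), Coef a' b' A B c C L γ ∧
      (∀ u ∈ Icc (0:ℝ) 1, a' u = a u) ∧ (∀ u ∈ Icc (0:ℝ) 1, A u = primitive a u) ∧
      (∀ u ∈ Icc (0:ℝ) 1, B u = primitive b u) := by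
  obtain ⟨c, hc, hca⟩ := hD3
  obtain ⟨Ka, hKa, hla⟩ := lip_of_contDiffOn (hR2a.of_le one_le_two)
  obtain ⟨Kb, hKb, hlb⟩ := lip_of_contDiffOn hR2b
  obtain ⟨Ma, hMa⟩ := isCompact_Icc.exists_bound_of_continuousOn ha
  obtain ⟨Mb, hMb⟩ := isCompact_Icc.exists_bound_of_continuousOn hb
  set π : ℝ → ℝ := fun u => max 0 (min 1 u) with hπ
  have hπm : ∀ u, π u ∈ Icc (0:ℝ) 1 := fun u =>
    ⟨le_max_left _ _, max_le zero_le_one (min_le_left _ _)⟩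
  have hπi : ∀ u ∈ Icc (0:ℝ) 1, π u = u := fun u hu => by
    simp only [hπ, min_eq_right hu.2, max_eq_right hu.1]
  have hπc : Continuous π := by simp only [hπ]; fun_prop
  have hπl : ∀ p q, |π p - π q| ≤ |p - q| := fun p q => by
    simp only [hπ]
    have h1 := abs_max_sub_max_le_max 0 (min 1 p) 0 (min 1 q)
    have h2 := abs_min_sub_min_le_max 1 p 1 q
    simp only [sub_self, abs_zero, abs_nonneg, max_eq_right] at h1 h2
    exact h1.trans h2
  set a' : ℝ → ℝ := fun u => a (π u) with ha'
  set b' : ℝ → ℝ := fun u => b (π u) with hb'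
  have hac : Continuous a' := ha.comp_continuous hπc hπm
  have hbc : Continuous b' := hb.comp_continuous hπc hπm
  have dP : ∀ {f : ℝ → ℝ}, Continuous f → ∀ u, HasDerivAt (primitive f) (f u) u := fun hf u =>
    hf.integral_hasStrictDerivAt 0 u |>.hasDerivAt
  have pe : ∀ f : ℝ → ℝ, ∀ u ∈ Icc (0:ℝ) 1, primitive (fun u => f (π u)) u = primitive f u := by
    intro f u hu
    simp only [primitive]
    refine intervalIntegral.integral_congr fun v hv => ?_
    rw [uIcc_of_le hu.1] at hv
    simp only [hπi v ⟨hv.1, hv.2.trans hu.2⟩]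
  set B := primitive b' with hB
  have dB := dP hbc
  have B0 : B 0 = 0 := by simp [hB, primitive]
  have B1 : B 1 = 0 := by rw [hB, pe b 1 (by simp), hE1B1]
  have Bpos : ∀ u ∈ Ioo (0:ℝ) 1, 0 < B u := fun u hu => by
    rw [hB, pe b u (Ioo_subset_Icc_self hu)]; exact hE1pos u hu
  have hE2a : ∫⁻ u in Ioo (0:ℝ) (1/2), ENNReal.ofReal (a u * u / (2 * |B u|)) < ⊤ := by
    refine lt_of_eq_of_lt ?_ (lt_of_le_of_lt le_self_add hE2)
    refine setLIntegral_congr_fun measurableSet_Ioo fun u hu => ?_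
    simp only [hB]
    rw [pe b u ⟨hu.1.le, by linarith [hu.2]⟩]
  have hE2b : ∫⁻ u in Ioo (0:ℝ) (1/2), ENNReal.ofReal (a (1 - u) * u / (2 * |B (1 - u)|)) < ⊤ := by
    refine lt_of_eq_of_lt ?_ (lt_of_le_of_lt le_add_self hE2)
    rw [← lintegral_refl]
    refine setLIntegral_congr_fun measurableSet_Ioo fun u hu => ?_
    simp only [hB]
    rw [pe b (1 - u) ⟨by linarith [hu.2], by linarith [hu.1]⟩]
    congr 2
    ring
  have hlb' : ∀ p q, |b' p - b' q| ≤ Kb * |p - q| := fun p q =>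
    (hlb _ (hπm p) _ (hπm q)).trans (mul_le_mul_of_nonneg_left (hπl p q) hKb.le)
  have hla' : ∀ p q, |a' p - a' q| ≤ Ka * |p - q| := fun p q =>
    (hla _ (hπm p) _ (hπm q)).trans (mul_le_mul_of_nonneg_left (hπl p q) hKa.le)
  obtain ⟨k1, hk1, δ1, hδ1, l1⟩ := lower_near_zero (a := a) hc hKb dB B0 (fun u hu => by
      have := hlb' u 0
      rwa [sub_zero, abs_of_nonneg hu.1] at this) Bpos
      (fun u hu => hca u ⟨hu.1.le, by linarith [hu.2]⟩) hE2a
  obtain ⟨k2, hk2, δ2, hδ2, l2⟩ := lower_near_zero (a := fun u => a (1 - u))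
      (b := fun u => - b' (1 - u)) (B := fun u => B (1 - u)) hc hKb
      (fun u => by
        have := (dB (1 - u)).comp u ((hasDerivAt_id u).const_sub 1)
        refine this.congr_deriv ?_
        ring)
      (by simp [B1]) (fun u hu => by
      have := hlb' (1 - u) (1 - 0)
      rw [abs_sub_comm] at this
      have e : - b' (1 - u) - - b' (1 - 0) = b' (1 - 0) - b' (1 - u) := by ring
      rw [e]
      refine this.trans (le_of_eq ?_)
      congr 1
      rw [show (1 - u - (1 - 0)) = -u by ring, abs_neg, abs_of_nonneg hu.1])
      (fun u hu => Bpos _ ⟨by linarith [hu.2], by linarith [hu.1]⟩)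
      (fun u hu => hca (1 - u) ⟨by linarith [hu.2], by linarith [hu.1]⟩) hE2b
  obtain ⟨k3, hk3, l3⟩ : ∃ k > 0, ∀ u ∈ Icc δ1 (1 - δ2), k ≤ B u := by
    have Bc : Continuous B := continuous_iff_continuousAt.2 fun u => (dB u).continuousAt
    rcases (Icc δ1 (1 - δ2)).eq_empty_or_nonempty with he | hne
    · exact ⟨1, one_pos, fun u hu => by rw [he] at hu; exact hu.elim⟩
    · obtain ⟨z, hz, hmin⟩ := isCompact_Icc.exists_isMinOn hne Bc.continuousOn
      exact ⟨B z, Bpos z ⟨hδ1.1.trans_le hz.1, by linarith [hz.2, hδ2.1]⟩, fun u hu => hmin hu⟩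
  refine ⟨a', b', primitive a', B, c, Ma, max Ka (max Mb 1), min k1 (min k2 k3), ?_, ?_, ?_, ?_⟩
  · refine ⟨hac, hbc, hc, by positivity, by positivity, fun u => hca _ (hπm u),
      fun u => (le_abs_self _).trans (hMa _ (hπm u)), fun p q => ?_, fun u => ?_, dP hac, dB,
      by simp [primitive], B0, B1, fun u hu => ?_⟩
    · exact (hla' p q).trans (mul_le_mul_of_nonneg_right (le_max_left _ _) (abs_nonneg _))
    · exact (hMb _ (hπm u)).trans ((le_max_left _ _).trans (le_max_right _ _))
    · have hγ1 : min k1 (min k2 k3) ≤ k1 := min_le_left _ _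
      have hγ2 : min k1 (min k2 k3) ≤ k2 := (min_le_right _ _).trans (min_le_left _ _)
      have hγ3 : min k1 (min k2 k3) ≤ k3 := (min_le_right _ _).trans (min_le_right _ _)
      have hu0 := hu.1
      have hu1 : 0 ≤ 1 - u := by linarith [hu.2]
      have p0 : 0 ≤ u * (1 - u) := mul_nonneg hu0 hu1
      rcases le_total u δ1 with h1 | h1
      · have := l1 u ⟨hu0, h1⟩
        have : k1 * (u * (1 - u)) ≤ k1 * u := by
          refine mul_le_mul_of_nonneg_left ?_ hk1.le
          nlinarith
        nlinarith
      · rcases le_total (1 - δ2) u with h2 | h2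
        · have := l2 (1 - u) ⟨hu1, by linarith⟩
          simp only [sub_sub_cancel] at this
          have : k2 * (u * (1 - u)) ≤ k2 * (1 - u) := by
            refine mul_le_mul_of_nonneg_left ?_ hk2.le
            nlinarith
          nlinarith
        · have := l3 u ⟨h1, h2⟩
          have : k3 * (u * (1 - u)) ≤ k3 * 1 := by
            refine mul_le_mul_of_nonneg_left ?_ hk3.le
            nlinarith
          nlinarith
  · exact fun u hu => by simp only [ha', hπi u hu]
  · exact fun u hu => pe a u hu
  · exact fun u hu => pe b u hu


/-- Integration by parts against a test function. -/
lemma ibp_rc {f G φ : ℝ → ℝ} (hm : Measurable f) (hrc : ∀ x, ContinuousWithinAt f (Ici x) x)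
    (hi : ∀ x y, IntervalIntegrable f volume x y) (hG : ∀ x y, G y - G x = ∫ u in x..y, f u)
    (hφ : ContDiff ℝ (⊤ : ℕ∞) φ) (hs : HasCompactSupport φ) :
    ∫ x, G x * deriv φ x = - ∫ x, f x * φ x := by
  obtain ⟨N, hN⟩ := hs.isCompact.isBounded.subset_closedBall 0
  rw [Real.closedBall_eq_Icc] at hN
  simp only [zero_sub, zero_add] at hN
  set R := |N| + 1 with hR
  have hRN : N < R := by rw [hR]; linarith [le_abs_self N]
  have hR0 : 0 < R := by positivity
  have hsub : tsupport φ ⊆ Ioo (-R) R := fun x hx => by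
    have := hN hx
    exact ⟨by linarith [this.1], by linarith [this.2]⟩
  have hz : ∀ x, x ∉ Ioo (-R) R → φ x = 0 := fun x hx =>
    image_eq_zero_of_notMem_tsupport fun h => hx (hsub h)
  have hdc : Continuous (deriv φ) := (contDiff_infty_iff_deriv.1 hφ).2.continuous
  have hGe : G = fun x => G 0 + ∫ u in (0:ℝ)..x, f u := by
    funext x; rw [← hG]; ring
  have hGd : ∀ x, HasDerivWithinAt G (f x) (Ioi x) x := fun x => by
    rw [hGe]; exact (rderiv_int hm hrc hi 0 x).const_add _
  have hGc : Continuous G := by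
    rw [hGe]
    exact continuous_const.add (intervalIntegral.continuous_primitive hi 0)
  have key := intervalIntegral.integral_mul_deriv_eq_deriv_mul_of_hasDeriv_right
    (u := G) (v := φ) (u' := f) (v' := deriv φ) (a := -R) (b := R)
    hGc.continuousOn hφ.continuous.continuousOn
    (fun x _ => hGd x)
    (fun x _ => ((hφ.differentiable (by simp)) x).hasDerivAt.hasDerivWithinAt)
    (hi _ _) (hdc.intervalIntegrable _ _)
  rw [hz R (by simp), hz (-R) (by simp), mul_zero, mul_zero, sub_zero, zero_sub] at key
  have full : ∀ h : ℝ → ℝ, (∀ x, x ∉ Ioo (-R) R → h x = 0) → ∫ x in (-R)..R, h x = ∫ x, h x := by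
    intro h hh
    rw [intervalIntegral.integral_of_le (by linarith)]
    refine setIntegral_eq_integral_of_forall_compl_eq_zero fun x hx => hh x fun hx' => hx ?_
    exact Ioo_subset_Ioc_self hx'
  rw [full _ fun x hx => by
      rw [image_eq_zero_of_notMem_tsupport fun h => hx (hsub (tsupport_deriv_subset h)), mul_zero],
    full _ fun x hx => by rw [hz x hx, mul_zero]] at key
  exact key

lemma locInt_of_bdd {f : ℝ → ℝ} (hm : Measurable f) {M : ℝ} (hM : ∀ x, |f x| ≤ M) :
    LocallyIntegrable f :=
  (locallyIntegrable_const M).mono hm.aestronglyMeasurable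
    (Eventually.of_forall fun z => by
      simpa using (hM z).trans (le_abs_self M))

/-- From the weak formulation to the integrated equation, up to a constant. -/
lemma affine_of_weak {D E p q : ℝ → ℝ} {M : ℝ} (hDm : Measurable D)
    (hDrc : ∀ x, ContinuousWithinAt D (Ici x) x) (hDb : ∀ x, |D x| ≤ M)
    (hE : ∀ x y, E y - E x = ∫ u in x..y, D u)
    (hpm : Measurable p) (hprc : ∀ x, ContinuousWithinAt p (Ici x) x) (hpb : ∀ x, |p x| ≤ M)
    (hqm : Measurable q) (hqrc : ∀ x, ContinuousWithinAt q (Ici x) x) (hqb : ∀ x, |q x| ≤ M)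
    (h : ∀ φ : ℝ → ℝ, ContDiff ℝ (⊤ : ℕ∞) φ → HasCompactSupport φ →
      ∫ x, D x * φ x = (1/2) * (∫ x, p x * deriv (deriv φ) x) + ∫ x, q x * deriv φ x) :
    ∃ l : ℝ, ∀ x y, (∫ z in x..y, (E z + q z)) - (1/2) * (p y - p x) = l * (y - x) := by
  have hDi := intble_of_bdd hDm hDb
  have hEc : Continuous E := by
    have : E = fun x => E 0 + ∫ u in (0:ℝ)..x, D u := by funext x; rw [← hE]; ring
    rw [this]
    exact continuous_const.add (intervalIntegral.continuous_primitive hDi 0)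
  have hqi := intble_of_bdd hqm hqb
  have hEq : ∀ x y, IntervalIntegrable (fun z => E z + q z) volume x y := fun x y =>
    (hEc.intervalIntegrable _ _).add (hqi x y)
  have hEqrc : ∀ x, ContinuousWithinAt (fun z => E z + q z) (Ici x) x := fun x =>
    hEc.continuousWithinAt.add (hqrc x)
  have hEqm : Measurable (fun z => E z + q z) := hEc.measurable.add hqm
  set S : ℝ → ℝ := fun x => ∫ z in (0:ℝ)..x, (E z + q z) with hS
  have hSc : Continuous S := intervalIntegral.continuous_primitive hEq 0
  have hSd : ∀ x y, S y - S x = ∫ z in x..y, (E z + q z) := fun x y =>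
    intervalIntegral.integral_interval_sub_left (hEq _ _) (hEq _ _)
  set Q : ℝ → ℝ := fun x => S x - (1/2) * p x with hQ
  have hpl := locInt_of_bdd hpm hpb
  have hQl : LocallyIntegrable Q := hSc.locallyIntegrable.sub (hpl.smul (1/2 : ℝ))
  obtain ⟨k, l, hkl⟩ := dbr_two Q hQl (fun φ hφ hs => by
    have hφ1 : ContDiff ℝ (⊤ : ℕ∞) (deriv φ) := (contDiff_infty_iff_deriv.1 hφ).2
    have hφ2 : ContDiff ℝ (⊤ : ℕ∞) (deriv (deriv φ)) := (contDiff_infty_iff_deriv.1 hφ1).2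
    have e1 := ibp_rc hEqm hEqrc hEq hSd hφ1 hs.deriv
    have e2 := ibp_rc hDm hDrc hDi hE hφ hs
    have e3 := h φ hφ hs
    have i1 := integrable_loc_mul_test hEc.locallyIntegrable hφ1.continuous hs.deriv
    have i2 := integrable_loc_mul_test (locInt_of_bdd hqm hqb) hφ1.continuous hs.deriv
    have i3 := integrable_loc_mul_test hSc.locallyIntegrable hφ2.continuous hs.deriv.deriv
    have i4 := integrable_loc_mul_test hpl hφ2.continuous hs.deriv.deriv
    have e4 : ∫ x, (E x + q x) * deriv φ x = (∫ x, E x * deriv φ x) + ∫ x, q x * deriv φ x := by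
      rw [← integral_add i1 i2]; congr 1; ext x; ring
    have e5 : ∫ x, Q x * deriv (deriv φ) x =
        (∫ x, S x * deriv (deriv φ) x) - (1/2) * ∫ x, p x * deriv (deriv φ) x := by
      rw [← integral_const_mul, ← integral_sub i3 (i4.const_mul _)]
      congr 1; ext x; simp only [hQ]; ring
    rw [e5, e1, e4, e2]
    linarith)
  have hall := eq_of_ae_eq_right_cont (f := Q) (g := fun x => k + l * x)
    (fun x => hSc.continuousWithinAt.sub (continuousWithinAt_const.mul (hprc x)))
    (fun x => by fun_prop) hkl
  refine ⟨l, fun x y => ?_⟩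
  have h1 := hall x
  have h2 := hall y
  simp only [hQ] at h1 h2
  rw [← hSd]
  linarith

/-- Averages over unit intervals converge. -/
lemma tendsto_unit_avg {g : ℝ → ℝ} {l : Filter ℝ} {k : ℝ}
    (hl : l = atTop ∨ l = atBot) (hg : Tendsto g l (𝓝 k))
    (hi : ∀ x y, IntervalIntegrable g volume x y) :
    Tendsto (fun x => ∫ z in x..(x+1), g z) l (𝓝 k) := by
  rw [Metric.tendsto_nhds] at hg ⊢
  intro ε hε
  have h1 := hg (ε/2) (by positivity)
  have h2 : ∀ᶠ x in l, ∀ z ∈ Icc x (x+1), dist (g z) k < ε / 2 := by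
    rcases hl with rfl | rfl
    · obtain ⟨N, hN⟩ := eventually_atTop.1 h1
      exact eventually_atTop.2 ⟨N, fun x hx z hz => hN z (hx.trans hz.1)⟩
    · obtain ⟨N, hN⟩ := eventually_atBot.1 h1
      exact eventually_atBot.2 ⟨N - 1, fun x hx z hz => hN z (by linarith [hz.2])⟩
  filter_upwards [h2] with x hx
  have h3 := intervalIntegral.norm_integral_le_of_norm_le_const (a := x) (b := x + 1)
    (f := fun z => g z - k) (C := ε / 2) (fun z hz => by
      rw [uIoc_of_le (by linarith)] at hz
      have := hx z (Ioc_subset_Icc_self hz)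
      rw [Real.dist_eq] at this
      exact this.le)
  rw [intervalIntegral.integral_sub (hi _ _) intervalIntegrable_const] at h3
  simp at h3
  rw [Real.dist_eq]
  linarith

/-- Integrated cdf of a measure. -/
def PhiOf (ν : Measure ℝ) (x : ℝ) : ℝ := ∫ z, max (x - z) 0 ∂ν

section PhiOf
set_option linter.unusedSectionVars false
variable {ν : Measure ℝ} [IsProbabilityMeasure ν]

lemma PhiOf_int (hν : Integrable (fun x => |x|) ν) (x : ℝ) :
    Integrable (fun z => max (x - z) 0) ν := by
  refine ((hν.add (integrable_const |x|))).mono' (by fun_prop) (Eventually.of_forall fun z => ?_)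
  rw [Real.norm_eq_abs, abs_of_nonneg (le_max_right _ _)]
  refine max_le ?_ (by simp only [Pi.add_apply]; positivity)
  simp only [Pi.add_apply]
  linarith [le_abs_self x, neg_abs_le z]

lemma id_int (hν : Integrable (fun x => |x|) ν) : Integrable (fun z => z) ν :=
  hν.mono' (by fun_prop) (Eventually.of_forall fun z => le_rfl)

lemma cdfOf_mono : Monotone (cdfOf ν) := fun _ _ hxy =>
  ENNReal.toReal_mono (measure_ne_top _ _) (measure_mono (Iic_subset_Iic.2 hxy))

lemma cdfOf_nonneg (x : ℝ) : 0 ≤ cdfOf ν x := ENNReal.toReal_nonneg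

lemma cdfOf_le_one (x : ℝ) : cdfOf ν x ≤ 1 := by
  have := ENNReal.toReal_mono ENNReal.one_ne_top (prob_le_one (μ := ν) (s := Iic x))
  rw [ENNReal.toReal_one] at this
  exact this

lemma cdfOf_eq : cdfOf ν = ProbabilityTheory.cdf ν := by
  ext x; rw [ProbabilityTheory.cdf_eq_real]; rfl

lemma cdfOf_rc (x : ℝ) : ContinuousWithinAt (cdfOf ν) (Ici x) x := by
  rw [cdfOf_eq]; exact (ProbabilityTheory.cdf ν).right_continuous x

lemma cdfOf_top : Tendsto (cdfOf ν) atTop (𝓝 1) := by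
  rw [cdfOf_eq]; exact ProbabilityTheory.tendsto_cdf_atTop ν

lemma cdfOf_bot : Tendsto (cdfOf ν) atBot (𝓝 0) := by
  rw [cdfOf_eq]; exact ProbabilityTheory.tendsto_cdf_atBot ν

lemma PhiOf_sub_aux (hν : Integrable (fun x => |x|) ν) {x y : ℝ} (hxy : x ≤ y) :
    PhiOf ν y - PhiOf ν x = ∫ u in x..y, cdfOf ν u := by
  rw [PhiOf, PhiOf, ← integral_sub (PhiOf_int hν y) (PhiOf_int hν x)]
  have e1 : ∀ z, max (y - z) 0 - max (x - z) 0 =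
      ∫ u in x..y, (Ici z).indicator (fun _ => (1:ℝ)) u := by
    intro z
    rw [intervalIntegral.integral_of_le hxy, integral_indicator measurableSet_Ici]
    simp only [integral_const, smul_eq_mul, mul_one]
    rw [Measure.restrict_restrict measurableSet_Ici]
    simp only [measureReal_restrict_apply_univ]
    rcases le_or_gt z x with hz | hz
    · rw [inter_eq_right.2 (show Ioc x y ⊆ Ici z from fun u hu => hz.trans hu.1.le), Real.volume_real_Ioc_of_le hxy,
        max_eq_left (by linarith), max_eq_left (by linarith)]; ring
    · rw [show Ici z ∩ Ioc x y = Icc z y by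
        ext u; simp only [mem_inter_iff, mem_Ici, mem_Ioc, mem_Icc]
        constructor
        · rintro ⟨h1, h2, h3⟩; exact ⟨h1, h3⟩
        · rintro ⟨h1, h2⟩; exact ⟨h1, hz.trans_le h1, h2⟩]
      rw [Real.volume_real_Icc, max_eq_right (b := (0:ℝ)) (a := x - z) (by linarith), sub_zero]
  simp_rw [e1]
  have hmeas : Measurable (fun p : ℝ × ℝ => (Ici p.1).indicator (fun _ => (1:ℝ)) p.2) := by
    have : (fun p : ℝ × ℝ => (Ici p.1).indicator (fun _ => (1:ℝ)) p.2) =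
        {p : ℝ × ℝ | p.1 ≤ p.2}.indicator (fun _ => (1:ℝ)) := by
      ext p; simp [indicator]
    rw [this]
    exact measurable_const.indicator (measurableSet_le measurable_fst measurable_snd)
  simp_rw [intervalIntegral.integral_of_le hxy]
  rw [integral_integral_swap]
  · refine integral_congr_ae (Eventually.of_forall fun u => ?_)
    have : (fun z => (Ici z).indicator (fun _ => (1:ℝ)) u) =
        (Iic u).indicator (fun _ => (1:ℝ)) := by
      ext z; simp [indicator]
    simp only [this]
    rw [integral_indicator measurableSet_Iic]
    simp [cdfOf, measureReal_def]
  · refine (integrable_const (1:ℝ)).mono' hmeas.aestronglyMeasurable (Eventually.of_forall fun p => ?_)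
    simp only [uncurry, indicator]
    split_ifs <;> simp

lemma PhiOf_sub (hν : Integrable (fun x => |x|) ν) (x y : ℝ) :
    PhiOf ν y - PhiOf ν x = ∫ u in x..y, cdfOf ν u := by
  rcases le_total x y with h | h
  · exact PhiOf_sub_aux hν h
  · rw [intervalIntegral.integral_symm, ← PhiOf_sub_aux hν h]; ring

lemma PhiOf_bot (hν : Integrable (fun x => |x|) ν) : Tendsto (PhiOf ν) atBot (𝓝 0) := by
  have h : Tendsto (fun x => ∫ z, max (x - z) 0 ∂ν) atBot (𝓝 (∫ z, (0:ℝ) ∂ν)) := by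
    refine tendsto_integral_filter_of_dominated_convergence (fun z => |z|)
      (Eventually.of_forall fun x => by fun_prop) ?_ hν (Eventually.of_forall fun z => ?_)
    · filter_upwards [eventually_le_atBot (0:ℝ)] with x hx
      refine Eventually.of_forall fun z => ?_
      rw [Real.norm_eq_abs, abs_of_nonneg (le_max_right _ _)]
      exact max_le (by linarith [neg_abs_le z]) (abs_nonneg _)
    · refine tendsto_const_nhds.congr' ?_
      filter_upwards [eventually_le_atBot z] with x hx
      rw [max_eq_right (by linarith)]
  rw [integral_zero] at h
  exact h

lemma PhiOf_top (hν : Integrable (fun x => |x|) ν) :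
    Tendsto (fun x => PhiOf ν x - (x - ∫ z, z ∂ν)) atTop (𝓝 0) := by
  have h : Tendsto (fun x => ∫ z, (max (x - z) 0 - (x - z)) ∂ν) atTop (𝓝 (∫ z, (0:ℝ) ∂ν)) := by
    refine tendsto_integral_filter_of_dominated_convergence (fun z => |z|)
      (Eventually.of_forall fun x => by fun_prop) ?_ hν (Eventually.of_forall fun z => ?_)
    · filter_upwards [eventually_ge_atTop (0:ℝ)] with x hx
      refine Eventually.of_forall fun z => ?_
      rw [Real.norm_eq_abs, abs_of_nonneg (by linarith [le_max_left (x - z) 0])]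
      rw [sub_le_iff_le_add]
      exact max_le (by linarith [abs_nonneg z]) (by linarith [le_abs_self z])
    · refine tendsto_const_nhds.congr' ?_
      filter_upwards [eventually_ge_atTop z] with x hx
      rw [max_eq_left (by linarith), sub_self]
  simp only [integral_zero] at h
  refine h.congr fun x => ?_
  have i1 : Integrable (fun z => x - z) ν := (integrable_const x).sub (id_int hν)
  rw [integral_sub (PhiOf_int hν x) i1,
    integral_sub (integrable_const x) (id_int hν)]
  simp [PhiOf]

end PhiOf


lemma cdf_tmeas {P : ℝ → ProbabilityMeasure ℝ} (hP : ContinuousOn P (Ici 0)) (x : ℝ) :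
    AEStronglyMeasurable (fun r => cdfOf (P r : Measure ℝ) x) (volume.restrict (Ici 0)) := by
  have hpos : ∀ n : ℕ, (0:ℝ) < 1 / (n + 1) := fun n => by positivity
  have h1 : ∀ n : ℕ, AEMeasurable (fun r => ∫⁻ ω, (thickenedIndicator (hpos n) (Iic x) ω : ℝ≥0∞)
      ∂(P r : Measure ℝ)) (volume.restrict (Ici 0)) := fun n => by
    refine ContinuousOn.aemeasurable (fun t ht => ?_) measurableSet_Ici
    exact ProbabilityMeasure.tendsto_iff_forall_lintegral_tendsto.1 (hP t ht) _
  have h2 : AEMeasurable (fun r => (P r : Measure ℝ) (Iic x)) (volume.restrict (Ici 0)) :=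
    aemeasurable_of_tendsto_metrizable_ae atTop h1 (Eventually.of_forall fun r =>
      tendsto_lintegral_thickenedIndicator_of_isClosed (P r : Measure ℝ) isClosed_Iic hpos
        tendsto_one_div_add_atTop_nhds_zero_nat)
  exact h2.ennreal_toReal.aestronglyMeasurable

lemma cdf_tcont {P : ℝ → ProbabilityMeasure ℝ} (hP : ContinuousOn P (Ici 0)) {t : ℝ} (ht : 0 ≤ t) :
    ∀ᵐ x, ContinuousWithinAt (fun r => cdfOf (P r : Measure ℝ) x) (Ici 0) t := by
  have hc : Set.Countable {x : ℝ | 0 < (P t : Measure ℝ) {a : ℝ | a = x}} :=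
    Measure.countable_meas_level_set_pos (g := fun a : ℝ => a) measurable_id
  filter_upwards [hc.ae_notMem volume] with x hx
  have h0 : (P t : Measure ℝ) {x} = 0 := by
    have : ¬ 0 < (P t : Measure ℝ) {a : ℝ | a = x} := hx
    rw [show ({a : ℝ | a = x}) = {x} from rfl] at this
    exact le_antisymm (not_lt.1 this) zero_le
  have := ProbabilityMeasure.tendsto_measure_of_null_frontier_of_tendsto' (hP t ht)
    (E := Iic x) (by rw [frontier_Iic]; exact h0)
  exact (ENNReal.tendsto_toReal (measure_ne_top _ _)).comp this

/-- The weak formulation with tensor test functions. -/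
lemma weak_tensor {Ap Bp F₀ : ℝ → ℝ} {F : ℝ → ℝ → ℝ} (hF : IsWeakSolution Ap Bp F₀ F)
    {φ : ℝ → ℝ} (hφ : ContDiff ℝ (⊤ : ℕ∞) φ) (hs : HasCompactSupport φ) {t : ℝ} (ht : 0 ≤ t) :
    (∫ x, F t x * φ x) - ∫ x, F₀ x * φ x =
      ∫ x, ∫ s in (0:ℝ)..t, ((1/2) * Ap (F s x) * deriv (deriv φ) x + Bp (F s x) * deriv φ x) := by
  let θ : ContDiffBump (0:ℝ) := ⟨t + 1, t + 2, by positivity, by linarith⟩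
  have hθ1 : ∀ r ∈ Ioo (-(t+1)) (t+1), θ r = 1 := fun r hr => by
    refine θ.one_of_mem_closedBall ?_
    rw [Real.closedBall_eq_Icc]
    exact ⟨by simp only [zero_sub]; exact hr.1.le, by simp only [zero_add]; exact hr.2.le⟩
  have h := hF (fun r x => θ r * φ x)
    (by
      have h1 : ContDiff ℝ (⊤ : ℕ∞) θ := θ.contDiff
      simp only [uncurry_def]
      exact (h1.comp contDiff_fst).mul (hφ.comp contDiff_snd))
    (by
      refine HasCompactSupport.of_support_subset_isCompact
        (θ.hasCompactSupport.isCompact.prod hs.isCompact) fun p hp => ?_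
      simp only [mem_support, uncurry_def, ne_eq, mul_eq_zero, not_or] at hp
      exact ⟨subset_tsupport _ hp.1, subset_tsupport _ hp.2⟩) t ht
  simp only [hθ1 t ⟨by linarith, by linarith⟩, hθ1 0 ⟨by linarith, by linarith⟩, one_mul] at h
  simp_rw [mul_comm (F t _), mul_comm (F₀ _)]
  rw [h]
  refine integral_congr_ae (Eventually.of_forall fun x => ?_)
  refine intervalIntegral.integral_congr fun s hs' => ?_
  rw [uIcc_of_le ht] at hs'
  have hsI : s ∈ Ioo (-(t+1)) (t+1) := ⟨by linarith [hs'.1], by linarith [hs'.2]⟩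
  have e1 : (fun y => θ s * φ y) = φ := by ext y; rw [hθ1 s hsI, one_mul]
  have e2 : deriv (fun r => θ r * φ x) s = 0 := by
    have : (fun r => θ r * φ x) =ᶠ[𝓝 s] fun _ => φ x := by
      filter_upwards [Ioo_mem_nhds hsI.1 hsI.2] with r hr
      rw [hθ1 r hr, one_mul]
    rw [this.deriv_eq, deriv_const]
  simp only [e1, e2, mul_zero, add_zero]

theorem sol_of_weak {a b A B : ℝ → ℝ} {c C L γ : ℝ} (hc : Coef a b A B c C L γ)
    {Ap Bp : ℝ → ℝ} (hA : ∀ u ∈ Icc (0:ℝ) 1, A u = Ap u) (hB : ∀ u ∈ Icc (0:ℝ) 1, B u = Bp u)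
    {m : Measure ℝ} [IsProbabilityMeasure m] {F : ℝ → ℝ → ℝ}
    (hF : IsWeakSolution Ap Bp (cdfOf m) F) {P : ℝ → ProbabilityMeasure ℝ}
    (hP : ContinuousOn P (Ici 0))
    (hP1 : ∀ t : ℝ, 0 ≤ t → Integrable (fun x => |x|) (P t : Measure ℝ))
    (hPF : ∀ t : ℝ, 0 ≤ t → ∀ x : ℝ, F t x = ((P t : Measure ℝ) (Set.Iic x)).toReal) :
    (P 0 : Measure ℝ) = m ∧ Sol A B (fun t => PhiOf (P t : Measure ℝ)) F (∫ z, z ∂m) := by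
  have hFe : ∀ t, 0 ≤ t → F t = cdfOf (P t : Measure ℝ) := fun t ht => funext (hPF t ht)
  have F0 : ∀ t, 0 ≤ t → ∀ x, 0 ≤ F t x := fun t ht x => by rw [hFe t ht]; exact cdfOf_nonneg x
  have F1 : ∀ t, 0 ≤ t → ∀ x, F t x ≤ 1 := fun t ht x => by rw [hFe t ht]; exact cdfOf_le_one x
  have Fmono : ∀ t, 0 ≤ t → Monotone (F t) := fun t ht => by rw [hFe t ht]; exact cdfOf_mono
  have Frc : ∀ t, 0 ≤ t → ∀ x, ContinuousWithinAt (F t) (Ici x) x := fun t ht x => by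
    rw [hFe t ht]; exact cdfOf_rc x
  have hP0 : (P 0 : Measure ℝ) = m := by
    apply Measure.eq_of_cdf
    apply StieltjesFunction.ext
    intro x
    rw [← cdfOf_eq, ← cdfOf_eq, ← hFe 0 le_rfl]
    refine eq_of_ae_eq_right_cont (Frc 0 le_rfl) cdfOf_rc ?_ x
    have hl : LocallyIntegrable (fun x => F 0 x - cdfOf m x) :=
      (Fmono 0 le_rfl).locallyIntegrable.sub cdfOf_mono.locallyIntegrable
    have := ae_eq_zero_of_integral_contDiff_smul_eq_zero hl (fun φ hφ hs => by
      have h := weak_tensor hF hφ hs le_rfl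
      simp only [intervalIntegral.integral_same, integral_zero] at h
      rw [← integral_sub (integrable_loc_mul_test (Fmono 0 le_rfl).locallyIntegrable
        hφ.continuous hs) (integrable_loc_mul_test cdfOf_mono.locallyIntegrable
        hφ.continuous hs)] at h
      refine Eq.trans ?_ h
      congr 1; ext x; simp only [smul_eq_mul]; ring)
    filter_upwards [this] with x hx
    linarith
  have tmeas : ∀ x, AEStronglyMeasurable (fun r => F r x) (volume.restrict (Ici 0)) := fun x => by
    refine (cdf_tmeas hP x).congr ?_
    rw [EventuallyEq, ae_restrict_iff' measurableSet_Ici]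
    exact Eventually.of_forall fun r hr => by rw [hFe r hr]
  have tcont : ∀ t, 0 ≤ t → ∀ᵐ x, ContinuousWithinAt (fun r => F r x) (Ici 0) t := fun t ht => by
    filter_upwards [cdf_tcont hP ht] with x hx
    exact hx.congr (fun r hr => by rw [hFe r hr]) (by rw [hFe t ht])
  have Fm : ∀ t, 0 ≤ t → Measurable (F t) := fun t ht => (Fmono t ht).measurable
  have Fb : ∀ t, 0 ≤ t → ∀ x, |F t x| ≤ 1 := fun t ht x => by
    rw [abs_of_nonneg (F0 t ht x)]; exact F1 t ht x
  have Psub : ∀ t, 0 ≤ t → ∀ x y, PhiOf (P t : Measure ℝ) y - PhiOf (P t : Measure ℝ) x =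
      ∫ u in x..y, F t u := fun t ht x y => by rw [hFe t ht]; exact PhiOf_sub (hP1 t ht) x y
  -- time integrals
  set pA : ℝ → ℝ → ℝ → ℝ := fun s t x => ∫ r in s..t, A (F r x) with hpA
  set pB : ℝ → ℝ → ℝ → ℝ := fun s t x => ∫ r in s..t, B (F r x) with hpB
  have iA : ∀ {s t}, 0 ≤ s → s ≤ t → ∀ x, IntervalIntegrable (fun r => A (F r x)) volume s t :=
    fun hs hst x => tint_aux hc.Acont (fun u => hc.Abd) F0 F1 tmeas hs hst x
  have iB : ∀ {s t}, 0 ≤ s → s ≤ t → ∀ x, IntervalIntegrable (fun r => B (F r x)) volume s t :=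
    fun hs hst x => tint_aux hc.Bcont (fun u => hc.Bbd) F0 F1 tmeas hs hst x
  have mA : ∀ {s t}, 0 ≤ s → s ≤ t → Measurable (pA s t) := fun hs hst =>
    tmeas_aux hc.Alip hc.Acont (fun u => hc.Abd) F0 F1 tmeas Fmono hs hst
  have mB : ∀ {s t}, 0 ≤ s → s ≤ t → Measurable (pB s t) := fun hs hst =>
    tmeas_aux hc.Blip hc.Bcont (fun u => hc.Bbd) F0 F1 tmeas Fmono hs hst
  have bA : ∀ {s t}, 0 ≤ s → s ≤ t → ∀ y, |pA s t y| ≤ C * (t - s) := fun {s t} hs hst y => by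
    have := intervalIntegral.norm_integral_le_of_norm_le_const (a := s) (b := t)
      (f := fun r => A (F r y)) (C := C) (fun r hr => by
        rw [uIoc_of_le hst] at hr
        have hr0 : 0 ≤ r := hs.trans hr.1.le
        exact hc.Abd (F0 r hr0 y) (F1 r hr0 y))
    rwa [abs_of_nonneg (sub_nonneg.2 hst)] at this
  have bB : ∀ {s t}, 0 ≤ s → s ≤ t → ∀ y, |pB s t y| ≤ L * (t - s) := fun {s t} hs hst y => by
    have := intervalIntegral.norm_integral_le_of_norm_le_const (a := s) (b := t)
      (f := fun r => B (F r y)) (C := L) (fun r hr => by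
        rw [uIoc_of_le hst] at hr
        have hr0 : 0 ≤ r := hs.trans hr.1.le
        exact hc.Bbd (F0 r hr0 y) (F1 r hr0 y))
    rwa [abs_of_nonneg (sub_nonneg.2 hst)] at this
  have w0 : ∀ φ : ℝ → ℝ, ContDiff ℝ (⊤ : ℕ∞) φ → HasCompactSupport φ → ∀ t, 0 ≤ t →
      (∫ x, F t x * φ x) - ∫ x, cdfOf m x * φ x =
      (1/2) * (∫ x, pA 0 t x * deriv (deriv φ) x) + ∫ x, pB 0 t x * deriv φ x := by
    intro φ hφ hs t ht
    have hφ1 : ContDiff ℝ (⊤ : ℕ∞) (deriv φ) := (contDiff_infty_iff_deriv.1 hφ).2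
    have hφ2 : ContDiff ℝ (⊤ : ℕ∞) (deriv (deriv φ)) := (contDiff_infty_iff_deriv.1 hφ1).2
    rw [weak_tensor hF hφ hs ht, ← integral_const_mul, ← integral_add]
    · refine integral_congr_ae (Eventually.of_forall fun x => ?_)
      simp only [hpA, hpB]
      rw [← intervalIntegral.integral_mul_const, ← intervalIntegral.integral_mul_const,
        ← intervalIntegral.integral_const_mul, ← intervalIntegral.integral_add]
      · refine intervalIntegral.integral_congr fun s hs' => ?_
        rw [uIcc_of_le ht] at hs'
        have hI : F s x ∈ Icc (0:ℝ) 1 := ⟨F0 s hs'.1 x, F1 s hs'.1 x⟩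
        simp only [hA _ hI, hB _ hI]
        ring
      · exact ((iA le_rfl ht x).mul_const _).const_mul _
      · exact (iB le_rfl ht x).mul_const _
    · exact (integrable_loc_mul_test (locInt_of_bdd (mA le_rfl ht) (bA le_rfl ht))
        hφ2.continuous hs.deriv.deriv).const_mul _
    · exact integrable_loc_mul_test (locInt_of_bdd (mB le_rfl ht) (bB le_rfl ht))
        hφ1.continuous hs.deriv
  have rcp : ∀ {f : ℝ → ℝ} {M : ℝ}, Continuous f → (∀ u, 0 ≤ u → u ≤ 1 → |f u| ≤ M) →
      ∀ {s t : ℝ}, 0 ≤ s → s ≤ t → ∀ x,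
      ContinuousWithinAt (fun x => ∫ r in s..t, f (F r x)) (Ici x) x :=
    fun hf hM _ _ hs hst x => trc_aux hf hM F0 F1 tmeas hs hst (G := fun r => F r x)
      fun r hr => Frc r hr x
  have aff : ∀ s t, 0 ≤ s → s ≤ t → ∃ l : ℝ, ∀ x y,
      (∫ z in x..y, ((PhiOf (P t : Measure ℝ) z - PhiOf (P s : Measure ℝ) z) + pB s t z))
        - (1/2) * (pA s t y - pA s t x) = l * (y - x) := by
    intro s t hs hst
    have ht := hs.trans hst
    refine affine_of_weak (D := fun x => F t x - F s x)
      (E := fun x => PhiOf (P t : Measure ℝ) x - PhiOf (P s : Measure ℝ) x)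
      (M := 2 + C * (t - s) + L * (t - s)) ((Fm t ht).sub (Fm s hs))
      (fun x => (Frc t ht x).sub (Frc s hs x)) (fun x => ?_) (fun x y => ?_)
      (mA hs hst) (rcp hc.Acont (fun u => hc.Abd) hs hst) (fun x => ?_)
      (mB hs hst) (rcp hc.Bcont (fun u => hc.Bbd) hs hst) (fun x => ?_) (fun φ hφ hcs => ?_)
    · have h1 := abs_sub (F t x) (F s x)
      have h2 := Fb t ht x
      have h3 := Fb s hs x
      have h4 : 0 ≤ C * (t - s) := mul_nonneg hc.Cpos.le (by linarith)
      have h5 : 0 ≤ L * (t - s) := mul_nonneg hc.Lpos.le (by linarith)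
      linarith
    · rw [intervalIntegral.integral_sub (intble_of_bdd (Fm t ht) (Fb t ht) _ _)
        (intble_of_bdd (Fm s hs) (Fb s hs) _ _), ← Psub t ht, ← Psub s hs]
      ring
    · have h5 : 0 ≤ L * (t - s) := mul_nonneg hc.Lpos.le (by linarith)
      linarith [bA hs hst x]
    · have h4 : 0 ≤ C * (t - s) := mul_nonneg hc.Cpos.le (by linarith)
      linarith [bB hs hst x]
    · have hφ1 : ContDiff ℝ (⊤ : ℕ∞) (deriv φ) := (contDiff_infty_iff_deriv.1 hφ).2
      have hφ2 : ContDiff ℝ (⊤ : ℕ∞) (deriv (deriv φ)) := (contDiff_infty_iff_deriv.1 hφ1).2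
      have w1 := w0 φ hφ hcs t ht
      have w2 := w0 φ hφ hcs s hs
      have d1 : ∫ x, (F t x - F s x) * φ x = (∫ x, F t x * φ x) - ∫ x, F s x * φ x := by
        rw [← integral_sub (integrable_loc_mul_test (Fmono t ht).locallyIntegrable hφ.continuous hcs)
          (integrable_loc_mul_test (Fmono s hs).locallyIntegrable hφ.continuous hcs)]
        congr 1; ext x; ring
      have d2 : ∫ x, pA s t x * deriv (deriv φ) x =
          (∫ x, pA 0 t x * deriv (deriv φ) x) - ∫ x, pA 0 s x * deriv (deriv φ) x := by
        rw [← integral_sub (integrable_loc_mul_test (locInt_of_bdd (mA le_rfl ht) (bA le_rfl ht))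
          hφ2.continuous hcs.deriv.deriv) (integrable_loc_mul_test
            (locInt_of_bdd (mA le_rfl hs) (bA le_rfl hs)) hφ2.continuous hcs.deriv.deriv)]
        congr 1; ext x
        have : pA s t x = pA 0 t x - pA 0 s x :=
          (intervalIntegral.integral_interval_sub_left (iA le_rfl ht x) (iA le_rfl hs x)).symm
        rw [this]; ring
      have d3 : ∫ x, pB s t x * deriv φ x =
          (∫ x, pB 0 t x * deriv φ x) - ∫ x, pB 0 s x * deriv φ x := by
        rw [← integral_sub (integrable_loc_mul_test (locInt_of_bdd (mB le_rfl ht) (bB le_rfl ht))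
          hφ1.continuous hcs.deriv) (integrable_loc_mul_test
            (locInt_of_bdd (mB le_rfl hs) (bB le_rfl hs)) hφ1.continuous hcs.deriv)]
        congr 1; ext x
        have : pB s t x = pB 0 t x - pB 0 s x :=
          (intervalIntegral.integral_interval_sub_left (iB le_rfl ht x) (iB le_rfl hs x)).symm
        rw [this]; ring
      rw [d1, d2, d3]
      linarith
  have Phc : ∀ t, 0 ≤ t → Continuous (PhiOf (P t : Measure ℝ)) := fun t ht => by
    have : PhiOf (P t : Measure ℝ) = fun x => PhiOf (P t : Measure ℝ) 0 + ∫ u in (0:ℝ)..x, F t u := by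
      funext x; rw [← Psub t ht]; ring
    rw [this]
    exact continuous_const.add
      (intervalIntegral.continuous_primitive (intble_of_bdd (Fm t ht) (Fb t ht)) 0)
  -- the limiting argument
  have lim : ∀ s t, 0 ≤ s → s ≤ t → ∀ {l : Filter ℝ} [l.IsCountablyGenerated] [l.NeBot]
      (_ : l = atTop ∨ l = atBot) {u : ℝ}
      (_ : ∀ r, 0 ≤ r → Tendsto (F r) l (𝓝 u)) (_ : B u = 0) {k : ℝ}
      (_ : Tendsto (fun z => PhiOf (P t : Measure ℝ) z - PhiOf (P s : Measure ℝ) z) l (𝓝 k)),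
      Tendsto (fun x => (∫ z in x..(x+1),
        ((PhiOf (P t : Measure ℝ) z - PhiOf (P s : Measure ℝ) z) + pB s t z))
        - (1/2) * (pA s t (x+1) - pA s t x)) l (𝓝 k) := by
    intro s t hs hst l _ _ hl u hu hBu k hk
    have ht := hs.trans hst
    have l1 : Tendsto (pB s t) l (𝓝 0) := by
      have := trc_aux hc.Bcont (fun u => hc.Bbd) F0 F1 tmeas hs hst (G := fun _ => u) hu
      simpa [hBu] using this
    have l2 : Tendsto (pA s t) l (𝓝 (∫ r in s..t, A u)) :=
      trc_aux hc.Acont (fun u => hc.Abd) F0 F1 tmeas hs hst (G := fun _ => u) hu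
    have l3 : Tendsto (fun x : ℝ => x + 1) l l := by
      rcases hl with rfl | rfl
      · exact tendsto_atTop_add_const_right _ _ tendsto_id
      · exact tendsto_atBot_add_const_right _ _ tendsto_id
    have l4 := tendsto_unit_avg hl (hk.add l1) (fun x y =>
      (((Phc t ht).sub (Phc s hs)).intervalIntegrable x y).add
        (intble_of_bdd (mB hs hst) (bB hs hst) x y))
    have l5 := l4.sub (((l2.comp l3).sub l2).const_mul (1/2))
    simpa using l5
  have Pb : ∀ t, 0 ≤ t → Tendsto (PhiOf (P t : Measure ℝ)) atBot (𝓝 0) := fun t ht =>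
    PhiOf_bot (hP1 t ht)
  have eqn : ∀ s t, 0 ≤ s → s ≤ t → ∀ x y,
      (∫ z in x..y, ((PhiOf (P t : Measure ℝ) z - PhiOf (P s : Measure ℝ) z) + pB s t z))
        - (1/2) * (pA s t y - pA s t x) = 0 := by
    intro s t hs hst x y
    obtain ⟨l, hl⟩ := aff s t hs hst
    have h1 := lim s t hs hst (l := atBot) (Or.inr rfl) (u := 0)
      (fun r hr => by rw [hFe r hr]; exact cdfOf_bot) hc.B0 (k := 0)
      (by simpa using (Pb t (hs.trans hst)).sub (Pb s hs))
    simp only [hl, add_sub_cancel_left, mul_one] at h1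
    have : l = 0 := tendsto_nhds_unique tendsto_const_nhds h1
    rw [hl, this, zero_mul]
  have mean : ∀ t, 0 ≤ t → ∫ z, z ∂(P t : Measure ℝ) = ∫ z, z ∂m := by
    intro t ht
    have e1 := PhiOf_top (hP1 t ht)
    have e2 := PhiOf_top (hP1 0 le_rfl)
    have h1 := lim 0 t le_rfl ht (l := atTop) (Or.inl rfl) (u := 1)
      (fun r hr => by rw [hFe r hr]; exact cdfOf_top) hc.B1
      (k := (∫ z, z ∂(P 0 : Measure ℝ)) - ∫ z, z ∂(P t : Measure ℝ)) (by
        have := (e1.sub e2).add_const ((∫ z, z ∂(P 0 : Measure ℝ)) - ∫ z, z ∂(P t : Measure ℝ))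
        simp only [sub_zero, zero_add] at this
        refine this.congr fun x => ?_
        ring)
    simp only [eqn 0 t le_rfl ht] at h1
    have := tendsto_nhds_unique tendsto_const_nhds h1
    rw [hP0] at this
    linarith
  refine ⟨hP0, Fmono, Frc, F0, F1, Psub, Pb, fun t ht => ?_, tmeas, tcont, fun s t hs hst x y => ?_⟩
  · rw [← mean t ht]; exact PhiOf_top (hP1 t ht)
  · have := eqn s t hs hst x y
    simp only [hpA, hpB] at this
    linarith


/-- Softplus function. -/
def sp (k y : ℝ) : ℝ := (1 / k) * Real.log (1 + Real.exp (k * y))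

section sp
variable {k : ℝ}

lemma sp_deriv (hk : 0 < k) (y : ℝ) : HasDerivAt (sp k) (Real.sigmoid (k * y)) y := by
  have h1 : HasDerivAt (fun y => 1 + Real.exp (k * y)) (Real.exp (k * y) * (k * 1)) y :=
    (((hasDerivAt_id y).const_mul k).exp).const_add 1
  have hp : (0:ℝ) < 1 + Real.exp (k * y) := by positivity
  have h2 := (h1.log hp.ne').const_mul (1 / k)
  refine h2.congr_deriv ?_
  rw [Real.sigmoid_def, Real.exp_neg]
  have := Real.exp_pos (k * y)
  field_simp
  ring

lemma sp_cont (hk : 0 < k) : Continuous (sp k) :=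
  continuous_iff_continuousAt.2 fun y => (sp_deriv hk y).continuousAt

lemma sp_mono (hk : 0 < k) : Monotone (sp k) :=
  monotone_of_deriv_nonneg (fun y => (sp_deriv hk y).differentiableAt) fun y => by
    rw [(sp_deriv hk y).deriv]; exact Real.sigmoid_nonneg _

lemma sp_neg (hk : 0 < k) (y : ℝ) : sp k y - y = sp k (-y) := by
  unfold sp
  have h : 1 + Real.exp (k * y) = Real.exp (k * y) * (1 + Real.exp (k * -y)) := by
    rw [mul_add, ← Real.exp_add]; simp; ring
  have hp : (0:ℝ) < 1 + Real.exp (k * -y) := by positivity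
  rw [h, Real.log_mul (Real.exp_pos _).ne' hp.ne', Real.log_exp]
  field_simp
  ring

lemma sp_nonneg (hk : 0 < k) (y : ℝ) : 0 ≤ sp k y := by
  unfold sp
  have : 0 ≤ Real.log (1 + Real.exp (k * y)) := Real.log_nonneg (by linarith [Real.exp_pos (k * y)])
  positivity

lemma sp_ge (hk : 0 < k) (y : ℝ) : max y 0 ≤ sp k y := by
  refine max_le ?_ (sp_nonneg hk y)
  linarith [sp_neg hk y, sp_nonneg hk (-y)]

lemma sp_le_exp (hk : 0 < k) (y : ℝ) : sp k y ≤ (1 / k) * Real.exp (k * y) := by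
  unfold sp
  have := Real.log_le_sub_one_of_pos (show (0:ℝ) < 1 + Real.exp (k * y) by positivity)
  gcongr
  linarith

lemma sp_le (hk : 0 < k) (y : ℝ) : sp k y ≤ max y 0 + 1 / k := by
  have key : ∀ y, y ≤ 0 → sp k y ≤ 1 / k := fun y hy => by
    refine (sp_le_exp hk y).trans ?_
    have : Real.exp (k * y) ≤ 1 := Real.exp_le_one_iff.2 (by nlinarith)
    calc 1 / k * Real.exp (k * y) ≤ 1 / k * 1 := by gcongr
      _ = 1 / k := by ring
  rcases le_total y 0 with hy | hy
  · rw [max_eq_right hy]; linarith [key y hy]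
  · rw [max_eq_left hy]; linarith [key (-y) (by linarith), sp_neg hk y]

lemma sp_tendsto_bot (hk : 0 < k) : Tendsto (sp k) atBot (𝓝 0) := by
  have h1 : Tendsto (fun y => (1 / k) * Real.exp (k * y)) atBot (𝓝 ((1 / k) * 0)) :=
    (Real.tendsto_exp_atBot.comp (tendsto_id.const_mul_atBot hk)).const_mul _
  rw [mul_zero] at h1
  exact tendsto_of_tendsto_of_tendsto_of_le_of_le tendsto_const_nhds h1 (sp_nonneg hk)
    (sp_le_exp hk)

end sp

/-- Softplus barrier. -/
def Vb (k : ℝ) (m : Measure ℝ) (x : ℝ) : ℝ := ∫ z, sp k (x - z) ∂m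
/-- First derivative of the barrier. -/
def vb (k : ℝ) (m : Measure ℝ) (x : ℝ) : ℝ := ∫ z, Real.sigmoid (k * (x - z)) ∂m
/-- Second derivative of the barrier. -/
def vb' (k : ℝ) (m : Measure ℝ) (x : ℝ) : ℝ :=
  ∫ z, k * (Real.sigmoid (k * (x - z)) * (1 - Real.sigmoid (k * (x - z)))) ∂m

section Vb
variable {k : ℝ} {m : Measure ℝ} [IsProbabilityMeasure m]

lemma sp_int (hk : 0 < k) (hm : Integrable (fun x => |x|) m) (x : ℝ) :
    Integrable (fun z => sp k (x - z)) m := by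
  refine ((PhiOf_int hm x).add (integrable_const (1 / k))).mono'
    ((sp_cont hk).comp (by fun_prop)).aestronglyMeasurable (ae_of_all _ fun z => ?_)
  rw [Real.norm_eq_abs, abs_of_nonneg (sp_nonneg hk _)]
  exact sp_le hk _

lemma sp_int' (hk : 0 < k) (hm : Integrable (fun x => |x|) m) (x : ℝ) :
    Integrable (fun z => sp k (z - x)) m := by
  have := (sp_int hk hm x).sub ((integrable_const x).sub (id_int hm))
  refine this.congr (ae_of_all _ fun z => ?_)
  have := sp_neg hk (x - z)
  simp only [Pi.sub_apply, this]
  congr 1; ring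

lemma sg_cont : Continuous Real.sigmoid := by fun_prop

lemma sg_int (x : ℝ) : Integrable (fun z => Real.sigmoid (k * (x - z))) m := by
  refine (integrable_const (1:ℝ)).mono' (sg_cont.comp (by fun_prop)).aestronglyMeasurable
    (ae_of_all _ fun z => ?_)
  rw [Real.norm_eq_abs, abs_of_nonneg (Real.sigmoid_nonneg _)]
  exact Real.sigmoid_le_one _

lemma sg2_bd (hk : 0 < k) (y : ℝ) : |k * (Real.sigmoid y * (1 - Real.sigmoid y))| ≤ k := by
  have h0 := Real.sigmoid_nonneg y
  have h1 := Real.sigmoid_le_one y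
  have h2 : 0 ≤ Real.sigmoid y * (1 - Real.sigmoid y) := mul_nonneg h0 (by linarith)
  rw [abs_of_nonneg (by positivity)]
  have : Real.sigmoid y * (1 - Real.sigmoid y) ≤ 1 := by nlinarith
  nlinarith

lemma sg2_int (hk : 0 < k) (x : ℝ) :
    Integrable (fun z => k * (Real.sigmoid (k * (x - z)) * (1 - Real.sigmoid (k * (x - z))))) m := by
  refine (integrable_const k).mono' ?_ (ae_of_all _ fun z => sg2_bd hk _)
  have := sg_cont
  exact (by fun_prop : Continuous _).aestronglyMeasurable

lemma Vb_deriv (hk : 0 < k) (hm : Integrable (fun x => |x|) m) (x : ℝ) :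
    HasDerivAt (Vb k m) (vb k m x) x := by
  have := hasDerivAt_integral_of_dominated_loc_of_deriv_le (μ := m) (x₀ := x) (s := univ)
    (F := fun x z => sp k (x - z)) (F' := fun x z => Real.sigmoid (k * (x - z)))
    (bound := fun _ => 1) univ_mem
    (Eventually.of_forall fun x => (sp_int hk hm x).aestronglyMeasurable) (sp_int hk hm x)
    (sg_int x).aestronglyMeasurable
    (ae_of_all _ fun z y _ => by
      rw [Real.norm_eq_abs, abs_of_nonneg (Real.sigmoid_nonneg _)]; exact Real.sigmoid_le_one _)
    (integrable_const _)
    (ae_of_all _ fun z y _ => (sp_deriv hk (y - z)).comp_sub_const y z)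
  exact this.2

lemma vb_deriv (hk : 0 < k) (x : ℝ) : HasDerivAt (vb k m) (vb' k m x) x := by
  have := hasDerivAt_integral_of_dominated_loc_of_deriv_le (μ := m) (x₀ := x) (s := univ)
    (F := fun x z => Real.sigmoid (k * (x - z)))
    (F' := fun x z => k * (Real.sigmoid (k * (x - z)) * (1 - Real.sigmoid (k * (x - z)))))
    (bound := fun _ => k) univ_mem
    (Eventually.of_forall fun x => (sg_int x).aestronglyMeasurable) (sg_int x)
    (sg2_int hk x).aestronglyMeasurable
    (ae_of_all _ fun z y _ => sg2_bd hk _)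
    (integrable_const _)
    (ae_of_all _ fun z y _ => by
      have h1 : HasDerivAt (fun y => k * (y - z)) (k * 1) y :=
        ((hasDerivAt_id y).sub_const z).const_mul k
      have := (Real.hasDerivAt_sigmoid (k * (y - z))).comp y h1
      refine this.congr_deriv (by ring))
  exact this.2

lemma vb'_cont (hk : 0 < k) : Continuous (vb' k m) := by
  have := sg_cont
  refine continuous_of_dominated (bound := fun _ => k)
    (fun x => (sg2_int hk x).aestronglyMeasurable)
    (fun x => ae_of_all _ fun z => sg2_bd hk _) (integrable_const _) (ae_of_all _ fun z => ?_)
  fun_prop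

lemma vb_nonneg (x : ℝ) : 0 ≤ vb k m x := integral_nonneg fun _ => Real.sigmoid_nonneg _

lemma vb_le_one (x : ℝ) : vb k m x ≤ 1 := by
  have := integral_mono (μ := m) (sg_int (k := k) x) (integrable_const (1:ℝ))
    fun z => Real.sigmoid_le_one _
  simpa [vb] using this

lemma vb'_le (hk : 0 < k) (x : ℝ) : vb' k m x ≤ k * (vb k m x * (1 - vb k m x)) := by
  set g : ℝ → ℝ := fun z => Real.sigmoid (k * (x - z)) with hg
  have hgi : Integrable g m := sg_int x
  have h2 : Integrable (fun z => g z * (1 - g z)) m := by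
    have := (sg2_int (m := m) hk x).const_mul (1 / k)
    refine this.congr (ae_of_all _ fun z => ?_)
    simp only [hg]; field_simp
  have h3 : vb' k m x = k * ∫ z, g z * (1 - g z) ∂m := by
    rw [← integral_const_mul]; rfl
  rw [h3]
  have hf : vb k m x = ∫ z, g z ∂m := rfl
  set f := vb k m x
  have h4 : 0 ≤ ∫ z, (g z - f) ^ 2 ∂m := integral_nonneg fun _ => sq_nonneg _
  have h5 : ∫ z, (g z - f) ^ 2 ∂m = ∫ z, ((1 - 2 * f) * g z - g z * (1 - g z) + f ^ 2) ∂m := by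
    congr 1; ext z; ring
  have h6 : Integrable (fun z => (1 - 2 * f) * g z - g z * (1 - g z)) m :=
    (hgi.const_mul _).sub h2
  rw [h5, integral_add h6 (integrable_const _),
    integral_sub (hgi.const_mul _) h2, integral_const_mul, ← hf] at h4
  simp at h4
  have : ∫ z, g z * (1 - g z) ∂m ≤ f * (1 - f) := by nlinarith
  gcongr

lemma Vb_top_eq (hk : 0 < k) (hm : Integrable (fun x => |x|) m) (x : ℝ) :
    Vb k m x - (x - ∫ z, z ∂m) = ∫ z, sp k (z - x) ∂m := by
  have h1 : x - ∫ z, z ∂m = ∫ z, (x - z) ∂m := by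
    rw [integral_sub (integrable_const _) (id_int hm)]; simp
  have h2 : Integrable (fun z => x - z) m := (integrable_const x).sub (id_int hm)
  rw [h1, Vb, ← integral_sub (sp_int hk hm x) h2]
  congr 1; ext z
  have := sp_neg hk (x - z)
  rw [this]; congr 1; ring

lemma Vb_nonneg (hk : 0 < k) (x : ℝ) : 0 ≤ Vb k m x := integral_nonneg fun _ => sp_nonneg hk _

lemma Vb_ge (hk : 0 < k) (hm : Integrable (fun x => |x|) m) (x : ℝ) :
    x - ∫ z, z ∂m ≤ Vb k m x := by
  have h := Vb_top_eq hk hm x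
  have : 0 ≤ ∫ z, sp k (z - x) ∂m := integral_nonneg fun _ => sp_nonneg hk _
  linarith

lemma Vb_ge_Phi (hk : 0 < k) (hm : Integrable (fun x => |x|) m) (x : ℝ) :
    PhiOf m x ≤ Vb k m x :=
  integral_mono (PhiOf_int hm x) (sp_int hk hm x) fun _ => sp_ge hk _

lemma Vb_bot (hk : 0 < k) (hm : Integrable (fun x => |x|) m) : Tendsto (Vb k m) atBot (𝓝 0) := by
  have h0 : (0:ℝ) = ∫ z : ℝ, (0:ℝ) ∂m := by simp
  rw [h0]
  refine tendsto_integral_filter_of_dominated_convergence (fun z => sp k (0 - z))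
    (Eventually.of_forall fun x => (sp_int hk hm x).aestronglyMeasurable) ?_ (sp_int hk hm 0)
    (ae_of_all _ fun z => (sp_tendsto_bot hk).comp (tendsto_atBot_add_const_right _ _ tendsto_id))
  filter_upwards [eventually_le_atBot 0] with x hx
  refine ae_of_all _ fun z => ?_
  rw [Real.norm_eq_abs, abs_of_nonneg (sp_nonneg hk _)]
  exact sp_mono hk (by linarith)

lemma Vb_top (hk : 0 < k) (hm : Integrable (fun x => |x|) m) :
    Tendsto (fun x => Vb k m x - (x - ∫ z, z ∂m)) atTop (𝓝 0) := by
  simp only [Vb_top_eq hk hm]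
  have h0 : (0:ℝ) = ∫ z : ℝ, (0:ℝ) ∂m := by simp
  rw [h0]
  refine tendsto_integral_filter_of_dominated_convergence (fun z => sp k (z - 0))
    (Eventually.of_forall fun x => (sp_int' hk hm x).aestronglyMeasurable) ?_ (sp_int' hk hm 0)
    (ae_of_all _ fun z => (sp_tendsto_bot hk).comp ?_)
  · filter_upwards [eventually_ge_atTop 0] with x hx
    refine ae_of_all _ fun z => ?_
    rw [Real.norm_eq_abs, abs_of_nonneg (sp_nonneg hk _)]
    exact sp_mono hk (by linarith)
  · exact tendsto_atBot_add_const_left _ _ tendsto_neg_atTop_atBot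

end Vb

/-- Uniform control at infinity on compact time intervals. -/
lemma Sol.boundary {a b A B : ℝ → ℝ} {c C L γ μ : ℝ} {Φ F : ℝ → ℝ → ℝ}
    (hc : Coef a b A B c C L γ) (h : Sol A B Φ F μ) {ε : ℝ} (hε : 0 < ε) (T : ℝ) :
    ∃ R0 > 0, ∀ R ≥ R0, ∀ t ∈ Icc 0 T, Φ t (-R) ≤ ε ∧ Φ t R - (R - μ) ≤ ε := by
  have key := (isCompact_Icc (a := (0:ℝ)) (b := T)).induction_on
    (p := fun s => ∃ R0 > 0, ∀ R ≥ R0, ∀ t ∈ s, t ∈ Icc (0:ℝ) T →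
      Φ t (-R) ≤ ε ∧ Φ t R - (R - μ) ≤ ε)
    ⟨1, one_pos, fun _ _ _ h => h.elim⟩
    (fun s t hst ⟨R0, h0, h1⟩ => ⟨R0, h0, fun R hR u hu => h1 R hR u (hst hu)⟩)
    (fun s t ⟨R0, h0, h1⟩ ⟨R1, h2, h3⟩ => ⟨max R0 R1, lt_max_of_lt_left h0, fun R hR u hu => by
      rcases hu with hu | hu
      · exact h1 R ((le_max_left _ _).trans hR) u hu
      · exact h3 R ((le_max_right _ _).trans hR) u hu⟩)
    (fun t0 ht0 => by
      obtain ⟨δ, hδ, hd⟩ := h.tcontPhi hc ht0.1 (half_pos hε)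
      refine ⟨Metric.ball t0 δ, mem_nhdsWithin_of_mem_nhds (Metric.ball_mem_nhds _ hδ), ?_⟩
      obtain ⟨R1, hR1⟩ := eventually_atBot.1 ((h.Pbot t0 ht0.1).eventually_lt_const (half_pos hε))
      obtain ⟨R2, hR2⟩ := eventually_atTop.1 ((h.Ptop t0 ht0.1).eventually_lt_const (half_pos hε))
      refine ⟨max 1 (max (-R1) R2), by positivity, fun R hR t ht ht' => ?_⟩
      have e1 := hR1 (-R) (by
        have := (le_max_left (-R1) R2).trans ((le_max_right 1 _).trans hR); linarith)
      have e2 := hR2 R ((le_max_right (-R1) R2).trans ((le_max_right 1 _).trans hR))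
      have e3 := abs_lt.1 (hd t ht'.1 ht (-R))
      have e4 := abs_lt.1 (hd t ht'.1 ht R)
      constructor <;> linarith [e3.1, e3.2, e4.1, e4.2])
  obtain ⟨R0, h0, h1⟩ := key
  exact ⟨R0, h0, fun R hR t ht => h1 R hR t ht ht⟩

/-- The global barrier. -/
lemma Sol.le_Vb {a b A B : ℝ → ℝ} {c C L γ : ℝ} {Φ F : ℝ → ℝ → ℝ} {m : Measure ℝ}
    [IsProbabilityMeasure m] (hm : Integrable (fun x => |x|) m)
    (hc : Coef a b A B c C L γ) (h : Sol A B Φ F (∫ z, z ∂m)) (h0 : ∀ x, Φ 0 x = PhiOf m x)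
    {t : ℝ} (ht : 0 ≤ t) (x : ℝ) : Φ t x ≤ Vb (2 * γ / C) m x := by
  set k := 2 * γ / C with hk'
  have hC := hc.Cpos
  have hγ := hc.γpos
  have hk : 0 < k := by positivity
  refine le_of_forall_pos_le_add fun ε hε => ?_
  obtain ⟨R0, hR0, hR⟩ := h.boundary hc hε t
  set R := max R0 (|x| + 1)
  have hRp : 0 < R := lt_max_of_lt_left hR0
  have hRx : |x| ≤ R := by have := le_max_right R0 (|x| + 1); linarith
  have hR' := hR R (le_max_left _ _)
  have hvc : Continuous (vb k m) :=
    continuous_iff_continuousAt.2 fun x => (vb_deriv hk x).continuousAt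
  have := comparison hc h (σ := 1) (by norm_num) (R := R) (T := t) hRp
    (fun x => Vb k m x + ε) (vb k m) (fun _ => 0) (fun _ => 0) (fun _ => 0) (fun _ => 0)
    (fun _ x => (1/2) * (a (vb k m x) * vb' k m x))
    (fun x => (Vb_deriv hk hm x).add_const ε) (fun x => hasDerivAt_const _ _)
    (fun x => hasDerivAt_const _ _) hvc continuous_const
    (fun t x => by
      have := (hc.dA (vb k m x)).comp x (vb_deriv hk x)
      simp only [mul_zero, add_zero]
      exact this.congr_deriv (by ring))
    (fun t => continuous_const.mul ((hc.ac.comp hvc).mul (vb'_cont hk)))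
    (fun t ht x hx => by
      simp only [mul_zero, add_zero, sub_zero, one_mul]
      have h1 := hc.Blo (vb k m x) ⟨vb_nonneg x, vb_le_one x⟩
      have h2 := vb'_le (m := m) hk x
      have h3 : 0 ≤ vb k m x * (1 - vb k m x) :=
        mul_nonneg (vb_nonneg x) (by linarith [vb_le_one (k := k) (m := m) x])
      have h4 : a (vb k m x) * vb' k m x ≤ C * (k * (vb k m x * (1 - vb k m x))) := by
        have ha0 : 0 ≤ a (vb k m x) := hc.cpos.le.trans (hc.alo _)
        calc _ ≤ a (vb k m x) * (k * (vb k m x * (1 - vb k m x))) := by gcongr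
          _ ≤ _ := by have := hc.ahi (vb k m x); gcongr
      have h5 : C * (k * (vb k m x * (1 - vb k m x))) = 2 * (γ * (vb k m x * (1 - vb k m x))) := by
        rw [hk']; field_simp
      linarith)
    (fun t ht => by
      have := (hR' t ht).2
      have := Vb_ge hk hm R
      simp only [mul_zero, add_zero, one_mul]; linarith)
    (fun t ht => by
      have := (hR' t ht).1
      have := Vb_nonneg (m := m) hk (-R)
      simp only [mul_zero, add_zero, one_mul]; linarith)
    (fun x hx => by
      have := Vb_ge_Phi hk hm x
      simp only [mul_zero, add_zero, one_mul, h0]; linarith) t ⟨ht, le_rfl⟩ x (abs_le.1 hRx)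
  simp only [mul_zero, add_zero, one_mul] at this
  linarith


/-! ### Quantile transform -/

section law
variable {F : ℝ → ℝ}

lemma IsCDF.nonneg (h : IsCDF F) (x : ℝ) : 0 ≤ F x :=
  h.1.le_of_tendsto h.2.2.1 x

lemma IsCDF.le_one (h : IsCDF F) (x : ℝ) : F x ≤ 1 :=
  h.1.ge_of_tendsto h.2.2.2 x

lemma pinv_set_ne (h : IsCDF F) {u : ℝ} (hu : u < 1) : {x : ℝ | u < F x}.Nonempty :=
  (h.2.2.2.eventually_const_lt hu).exists

lemma pinv_set_bdd (h : IsCDF F) {u : ℝ} (hu : 0 < u) : BddBelow {x : ℝ | u < F x} := by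
  obtain ⟨y, hy⟩ := (h.2.2.1.eventually_lt_const hu).exists
  refine ⟨y, fun x hx => ?_⟩
  by_contra hlt
  have := h.1 (not_le.1 hlt).le
  have hx' : u < F x := hx
  linarith

lemma pinv_le (h : IsCDF F) {u x : ℝ} (hu : 0 < u) (hx : u < F x) : pinv F u ≤ x :=
  csInf_le (pinv_set_bdd h hu) hx

lemma lt_pinv_iff_aux (h : IsCDF F) {u x : ℝ} (hu0 : 0 < u) (hu : u < 1) (hx : F x < u) :
    x < pinv F u := by
  have h1 : ∀ᶠ y in 𝓝[>] x, F y < u :=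
    ((h.2.1 x).mono Ioi_subset_Ici_self).eventually_lt_const hx
  obtain ⟨y, hy, hxy⟩ := (h1.and self_mem_nhdsWithin).exists
  have : y ≤ pinv F u := le_csInf (pinv_set_ne h hu) fun z hz => by
    by_contra hlt
    have := h.1 (not_le.1 hlt).le
    have hz' : u < F z := hz
    linarith
  exact lt_of_lt_of_le hxy this

lemma le_pinv (h : IsCDF F) {u x : ℝ} (hu : u < 1) (hx : F x ≤ u) :
    x ≤ pinv F u := by
  refine le_csInf (pinv_set_ne h hu) fun z hz => ?_
  by_contra hlt
  have := h.1 (not_le.1 hlt).le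
  have hz' : u < F z := hz
  linarith

lemma pinv_mono (h : IsCDF F) : MonotoneOn (pinv F) (Ioo 0 1) := fun u hu v hv huv => by
  refine csInf_le_csInf (pinv_set_bdd h hu.1) (pinv_set_ne h hv.2) fun x hx => ?_
  exact lt_of_le_of_lt huv hx

lemma pinv_aem (h : IsCDF F) : AEMeasurable (pinv F) (volume.restrict (Ioo 0 1)) :=
  aemeasurable_restrict_of_monotoneOn measurableSet_Ioo (pinv_mono h)

/-- The law of the quantile function. -/
def law (F : ℝ → ℝ) : Measure ℝ := (volume.restrict (Ioo (0:ℝ) 1)).map (pinv F)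

instance unit_prob : IsProbabilityMeasure (volume.restrict (Ioo (0:ℝ) 1)) := ⟨by simp⟩

lemma law_prob (h : IsCDF F) : IsProbabilityMeasure (law F) :=
  Measure.isProbabilityMeasure_map (pinv_aem h)

lemma law_cdf (h : IsCDF F) : cdfOf (law F) = F := by
  ext x
  unfold cdfOf law
  rw [Measure.map_apply_of_aemeasurable (pinv_aem h) measurableSet_Iic]
  have h1 : (volume.restrict (Ioo (0:ℝ) 1)) (pinv F ⁻¹' Iic x) =
      (volume.restrict (Ioo (0:ℝ) 1)) (Iio (F x)) := by
    apply measure_congr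
    have hne : ∀ᵐ u ∂(volume.restrict (Ioo (0:ℝ) 1)), u ≠ F x :=
      ae_restrict_of_ae (by simp [ae_iff])
    filter_upwards [hne, ae_restrict_mem measurableSet_Ioo] with u hu1 hu2
    apply propext
    show pinv F u ≤ x ↔ u < F x
    constructor
    · intro h2
      by_contra h3
      have h4 : F x < u := lt_of_le_of_ne (not_lt.1 h3) (Ne.symm hu1)
      exact absurd (lt_pinv_iff_aux h hu2.1 hu2.2 h4) (not_lt.2 h2)
    · exact pinv_le h hu2.1
  rw [h1, Measure.restrict_apply measurableSet_Iio]
  have h2 : Iio (F x) ∩ Ioo 0 1 = Ioo 0 (F x) := by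
    ext u; simp only [mem_inter_iff, mem_Iio, mem_Ioo]
    constructor
    · rintro ⟨h1, h2, h3⟩; exact ⟨h2, h1⟩
    · rintro ⟨h1, h2⟩; exact ⟨h2, h1, h2.trans_le (h.le_one x)⟩
  rw [h2, Real.volume_Ioo, sub_zero, ENNReal.toReal_ofReal (h.nonneg x)]

lemma cdfOf_isCDF (m : Measure ℝ) [IsProbabilityMeasure m] : IsCDF (cdfOf m) :=
  ⟨cdfOf_mono, cdfOf_rc, cdfOf_bot, cdfOf_top⟩

lemma law_cdfOf (m : Measure ℝ) [IsProbabilityMeasure m] : law (cdfOf m) = m := by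
  have h := cdfOf_isCDF m
  have := law_prob h
  refine Measure.eq_of_cdf _ _ ?_
  ext x
  rw [← cdfOf_eq, ← cdfOf_eq, law_cdf h]

lemma law_integral (h : IsCDF F) : ∫ z, z ∂(law F) = ∫ u in Ioo (0:ℝ) 1, pinv F u :=
  integral_map (pinv_aem h) (by fun_prop)

lemma law_lintegral (h : IsCDF F) {g : ℝ → ℝ≥0∞} (hg : Measurable g) :
    ∫⁻ z, g z ∂(law F) = ∫⁻ u in Ioo (0:ℝ) 1, g (pinv F u) :=
  lintegral_map' hg.aemeasurable (pinv_aem h)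

lemma law_int (h : IsCDF F) (hi : (∫⁻ u in Ioo (0:ℝ) 1, ENNReal.ofReal |pinv F u|) < ⊤) :
    Integrable (fun x => |x|) (law F) := by
  refine ⟨by fun_prop, ?_⟩
  rw [hasFiniteIntegral_iff_norm]
  simp only [Real.norm_eq_abs, abs_abs]
  rw [law_lintegral h (by fun_prop)]
  exact hi

end law

/-! ### Integrable power singularities -/

lemma pow_int {K s q : ℝ} (hK : 0 ≤ K) (hs : 0 < s) (hq : 0 < q) (hsq : s * q < 1) :
    (∫⁻ u in Ioo (0:ℝ) 1, ENNReal.ofReal ((K * (u ^ (-s) + (1 - u) ^ (-s))) ^ q)) < ⊤ := by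
  have i1 : IntegrableOn (fun u : ℝ => u ^ (-(s * q))) (Ioo 0 1) := by
    have := (intervalIntegral.intervalIntegrable_rpow' (a := 0) (b := 1)
      (r := -(s * q)) (by linarith))
    rw [intervalIntegrable_iff_integrableOn_Ioo_of_le zero_le_one] at this
    exact this
  have i2 : IntegrableOn (fun u : ℝ => (1 - u) ^ (-(s * q))) (Ioo 0 1) := by
    have := (intervalIntegral.intervalIntegrable_rpow' (a := 0) (b := 1)
      (r := -(s * q)) (by linarith)).comp_sub_left 1
    simp only [sub_zero, sub_self] at this
    have := this.symm
    rw [intervalIntegrable_iff_integrableOn_Ioo_of_le zero_le_one] at this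
    exact this
  have i3 := (i1.add i2).const_mul ((2 * K) ^ q)
  refine lt_of_le_of_lt ?_ i3.lintegral_lt_top
  refine setLIntegral_mono' measurableSet_Ioo fun u hu => ENNReal.ofReal_le_ofReal ?_
  have hu1 : 0 < 1 - u := by linarith [hu.2]
  have hu0 := hu.1
  have p1 : 0 < u ^ (-s) := Real.rpow_pos_of_pos hu.1 _
  have p2 : 0 < (1 - u) ^ (-s) := Real.rpow_pos_of_pos hu1 _
  have e1 : (u ^ (-s)) ^ q = u ^ (-(s * q)) := by rw [← Real.rpow_mul hu.1.le]; ring_nf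
  have e2 : ((1 - u) ^ (-s)) ^ q = (1 - u) ^ (-(s * q)) := by
    rw [← Real.rpow_mul hu1.le]; ring_nf
  have p3 : 0 < u ^ (-(s * q)) := Real.rpow_pos_of_pos hu.1 _
  have p4 : 0 < (1 - u) ^ (-(s * q)) := Real.rpow_pos_of_pos hu1 _
  simp only [Pi.add_apply]
  rcases le_total (u ^ (-s)) ((1 - u) ^ (-s)) with hle | hle
  · calc (K * (u ^ (-s) + (1 - u) ^ (-s))) ^ q ≤ (2 * K * (1 - u) ^ (-s)) ^ q := by
          refine Real.rpow_le_rpow (by positivity) ?_ hq.le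
          nlinarith
      _ = (2 * K) ^ q * (1 - u) ^ (-(s * q)) := by rw [Real.mul_rpow (by positivity) p2.le, e2]
      _ ≤ _ := by
          have : 0 ≤ (2 * K) ^ q := by positivity
          gcongr; linarith
  · calc (K * (u ^ (-s) + (1 - u) ^ (-s))) ^ q ≤ (2 * K * u ^ (-s)) ^ q := by
          refine Real.rpow_le_rpow (by positivity) ?_ hq.le
          nlinarith
      _ = (2 * K) ^ q * u ^ (-(s * q)) := by rw [Real.mul_rpow (by positivity) p1.le, e1]
      _ ≤ _ := by
          have : 0 ≤ (2 * K) ^ q := by positivity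
          gcongr; linarith

/-! ### The stationary profile -/

/-- Properties of the base stationary profile. -/
structure Stat (a B Ψ G : ℝ → ℝ) (κ : ℝ) : Prop where
  κpos : 0 < κ
  G0 : ∀ x, 0 < G x
  G1 : ∀ x, G x < 1
  dG : ∀ x, HasDerivAt G (2 * B (G x) / a (G x)) x
  mono : StrictMono G
  bot : Tendsto G atBot (𝓝 0)
  top : Tendsto G atTop (𝓝 1)
  pin : ∀ u ∈ Ioo (0:ℝ) 1, pinv G u = Ψ u
  inv : ∀ u ∈ Ioo (0:ℝ) 1, G (Ψ u) = u
  bd : ∀ u ∈ Ioo (0:ℝ) 1, |Ψ u| ≤ κ * (|Real.log u| + |Real.log (1 - u)|)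

lemma stat_exists {a' b' a b A B : ℝ → ℝ} {c C L γ : ℝ} (hc : Coef a' b' A B c C L γ)
    (ha : ∀ u ∈ Icc (0:ℝ) 1, a' u = a u) (hB : ∀ u ∈ Icc (0:ℝ) 1, B u = primitive b u) :
    ∃ κ, Stat a' B (Psi a b) (PsiInv a b) κ := by
  have hC := hc.Cpos
  have hγ := hc.γpos
  have hcp := hc.cpos
  have hL := hc.Lpos
  set Ψ := Psi a b with hΨ
  set ψ : ℝ → ℝ := fun u => a' u / (2 * B u) with hψ
  have hBpos : ∀ u ∈ Ioo (0:ℝ) 1, 0 < B u := fun u hu => by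
    have := hc.Blo u ⟨hu.1.le, hu.2.le⟩
    have h1 : 0 < u * (1 - u) := mul_pos hu.1 (by linarith [hu.2])
    nlinarith [mul_pos hγ h1]
  have hBup : ∀ u ∈ Ioo (0:ℝ) 1, B u ≤ 2 * L * (u * (1 - u)) := fun u hu => by
    have h1 := hc.Blip u 0
    have h2 := hc.Blip u 1
    rw [hc.B0, sub_zero, sub_zero, abs_of_pos (hBpos u hu), abs_of_pos hu.1] at h1
    rw [hc.B1, sub_zero, abs_of_pos (hBpos u hu), abs_of_neg (by linarith [hu.2])] at h2
    rcases le_total u (1/2) with h | h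
    · nlinarith [mul_pos hL hu.1]
    · nlinarith [mul_pos hL (sub_pos.2 hu.2)]
  have hψc : ContinuousOn ψ (Ioo 0 1) := fun u hu =>
    (hc.ac.continuousAt.div (continuousAt_const.mul hc.Bcont.continuousAt)
      (mul_pos two_pos (hBpos u hu)).ne').continuousWithinAt
  have hhalf : (1/2:ℝ) ∈ Ioo (0:ℝ) 1 := by constructor <;> norm_num
  have hsub : ∀ u ∈ Ioo (0:ℝ) 1, uIcc (1/2) u ⊆ Ioo 0 1 := fun u hu =>
    ordConnected_Ioo.uIcc_subset hhalf hu
  have hΨeq : ∀ u ∈ Ioo (0:ℝ) 1, Ψ u = ∫ v in (1/2:ℝ)..u, ψ v := fun u hu => by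
    rw [hΨ, Psi]
    refine intervalIntegral.integral_congr fun v hv => ?_
    have hv' := hsub u hu hv
    simp only [hψ, ha v ⟨hv'.1.le, hv'.2.le⟩, hB v ⟨hv'.1.le, hv'.2.le⟩]
  have hΨ0 : Ψ (1/2) = 0 := by rw [hΨeq _ hhalf]; simp
  have hdΨ : ∀ u ∈ Ioo (0:ℝ) 1, HasDerivAt Ψ (ψ u) u := fun u hu => by
    have h1 : HasDerivAt (fun u => ∫ v in (1/2:ℝ)..u, ψ v) (ψ u) u := by
      refine intervalIntegral.integral_hasDerivAt_right
        ((hψc.mono (hsub u hu)).intervalIntegrable)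
        (hψc.stronglyMeasurableAtFilter isOpen_Ioo u hu) (hψc.continuousAt (Ioo_mem_nhds hu.1 hu.2))
    exact h1.congr_of_eventuallyEq (by
      filter_upwards [Ioo_mem_nhds hu.1 hu.2] with v hv using hΨeq v hv)
  have hψpos : ∀ u ∈ Ioo (0:ℝ) 1, 0 < ψ u := fun u hu =>
    div_pos (hcp.trans_le (hc.alo u)) (by have := hBpos u hu; positivity)
  have hΨc : ContinuousOn Ψ (Ioo 0 1) := fun u hu => (hdΨ u hu).continuousAt.continuousWithinAt
  have hΨm : StrictMonoOn Ψ (Ioo 0 1) := by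
    refine strictMonoOn_of_deriv_pos (convex_Ioo 0 1) hΨc fun u hu => ?_
    rw [interior_Ioo] at hu
    rw [(hdΨ u hu).deriv]; exact hψpos u hu
  -- comparison with the logit function
  set Λ : ℝ → ℝ := fun u => Real.log u - Real.log (1 - u) with hΛ
  have hdΛ : ∀ u ∈ Ioo (0:ℝ) 1, HasDerivAt Λ (1 / (u * (1 - u))) u := fun u hu => by
    have hu1 : 1 - u ≠ 0 := by linarith [hu.2]
    have hu0 : u ≠ 0 := hu.1.ne'
    have h1 := Real.hasDerivAt_log hu0
    have h2 : HasDerivAt (fun u : ℝ => Real.log (1 - u)) (-1 / (1 - u)) u :=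
      ((hasDerivAt_id u).const_sub 1).log hu1
    refine (h1.sub h2).congr_deriv ?_
    field_simp; ring
  have hΛ0 : Λ (1/2) = 0 := by simp only [hΛ]; norm_num
  set k1 := c / (4 * L) with hk1
  set k2 := C / (2 * γ) with hk2
  have k1p : 0 < k1 := by positivity
  have k2p : 0 < k2 := by positivity
  have hψ1 : ∀ u ∈ Ioo (0:ℝ) 1, k1 * (1 / (u * (1 - u))) ≤ ψ u := fun u hu => by
    have h1 : 0 < u * (1 - u) := mul_pos hu.1 (by linarith [hu.2])
    have h2 := hBpos u hu
    have h3 := hBup u hu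
    have h4 := hc.alo u
    calc k1 * (1 / (u * (1 - u))) = c / (2 * (2 * L * (u * (1 - u)))) := by
          rw [hk1]
          have : (1 - u) ≠ 0 := by linarith [hu.2]
          have : u ≠ 0 := hu.1.ne'
          field_simp; norm_num
      _ ≤ a' u / (2 * B u) := by gcongr; exact hcp.le.trans h4
  have hψ2 : ∀ u ∈ Ioo (0:ℝ) 1, ψ u ≤ k2 * (1 / (u * (1 - u))) := fun u hu => by
    have h1 : 0 < u * (1 - u) := mul_pos hu.1 (by linarith [hu.2])
    have h2 := hBpos u hu
    have h3 := hc.Blo u ⟨hu.1.le, hu.2.le⟩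
    have h4 := hc.ahi u
    calc a' u / (2 * B u) ≤ C / (2 * (γ * (u * (1 - u)))) := by gcongr
      _ = _ := by
          rw [hk2]
          have : (1 - u) ≠ 0 := by linarith [hu.2]
          have : u ≠ 0 := hu.1.ne'
          field_simp
  have m1 : MonotoneOn (fun u => Ψ u - k1 * Λ u) (Ioo 0 1) := by
    have hd : ∀ u ∈ Ioo (0:ℝ) 1, HasDerivAt (fun u => Ψ u - k1 * Λ u)
      (ψ u - k1 * (1 / (u * (1 - u)))) u := fun u hu => (hdΨ u hu).sub ((hdΛ u hu).const_mul k1)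
    refine monotoneOn_of_deriv_nonneg (convex_Ioo 0 1)
      (fun u hu => (hd u hu).continuousAt.continuousWithinAt) ?_ ?_
    · rw [interior_Ioo]
      exact fun u hu => (hd u hu).differentiableAt.differentiableWithinAt
    · rw [interior_Ioo]
      intro u hu; rw [(hd u hu).deriv]; linarith [hψ1 u hu]
  have m2 : MonotoneOn (fun u => k2 * Λ u - Ψ u) (Ioo 0 1) := by
    have hd : ∀ u ∈ Ioo (0:ℝ) 1, HasDerivAt (fun u => k2 * Λ u - Ψ u)
      (k2 * (1 / (u * (1 - u))) - ψ u) u := fun u hu => ((hdΛ u hu).const_mul k2).sub (hdΨ u hu)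
    refine monotoneOn_of_deriv_nonneg (convex_Ioo 0 1)
      (fun u hu => (hd u hu).continuousAt.continuousWithinAt) ?_ ?_
    · rw [interior_Ioo]
      exact fun u hu => (hd u hu).differentiableAt.differentiableWithinAt
    · rw [interior_Ioo]
      intro u hu; rw [(hd u hu).deriv]; linarith [hψ2 u hu]
  have c1 : ∀ u ∈ Ioo (0:ℝ) 1, 1/2 ≤ u → k1 * Λ u ≤ Ψ u ∧ Ψ u ≤ k2 * Λ u ∧ 0 ≤ Ψ u :=
    fun u hu h => by
      have e1 := m1 hhalf hu h
      have e2 := m2 hhalf hu h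
      have e3 := hΨm.monotoneOn hhalf hu h
      simp only [hΨ0, hΛ0] at e1 e2 e3
      refine ⟨by linarith, by linarith, by linarith⟩
  have c2 : ∀ u ∈ Ioo (0:ℝ) 1, u ≤ 1/2 → Ψ u ≤ k1 * Λ u ∧ k2 * Λ u ≤ Ψ u ∧ Ψ u ≤ 0 :=
    fun u hu h => by
      have e1 := m1 hu hhalf h
      have e2 := m2 hu hhalf h
      have e3 := hΨm.monotoneOn hu hhalf h
      simp only [hΨ0, hΛ0] at e1 e2 e3
      refine ⟨by linarith, by linarith, by linarith⟩
  have hΛabs : ∀ u, |Λ u| ≤ |Real.log u| + |Real.log (1 - u)| := fun u => abs_sub _ _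
  have hbd : ∀ u ∈ Ioo (0:ℝ) 1, |Ψ u| ≤ k2 * (|Real.log u| + |Real.log (1 - u)|) := fun u hu => by
    have h1 : |Ψ u| ≤ k2 * |Λ u| := by
      rcases le_total (1/2) u with h | h
      · obtain ⟨-, e1, e2⟩ := c1 u hu h
        rw [abs_of_nonneg e2]
        nlinarith [le_abs_self (Λ u)]
      · obtain ⟨-, e1, e2⟩ := c2 u hu h
        rw [abs_of_nonpos e2]
        nlinarith [neg_abs_le (Λ u)]
    exact h1.trans (by have := hΛabs u; gcongr)
  -- surjectivity
  have hlog : ∀ x : ℝ, ∃ u ∈ Ioo (0:ℝ) 1, 1/2 ≤ u ∧ x ≤ Λ u := fun x => by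
    set e := Real.exp (-(|x| + 1)) with he
    have he0 : 0 < e := Real.exp_pos _
    have he1 : e ≤ Real.exp (-1) := Real.exp_le_exp.2 (by linarith [abs_nonneg x])
    have he2 : Real.exp (-1) < 1/2 := by
      have := Real.exp_neg_one_lt_d9; linarith
    refine ⟨1 - e, ⟨by linarith, by linarith⟩, by linarith, ?_⟩
    simp only [hΛ]
    have h1 : Real.log (1 - (1 - e)) = -(|x| + 1) := by
      rw [sub_sub_cancel, he, Real.log_exp]
    have h2 : Real.log (1/2) ≤ Real.log (1 - e) := Real.log_le_log (by norm_num) (by linarith)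
    have h3 : Real.log (1/2) = - Real.log 2 := by rw [one_div, Real.log_inv]
    have h4 := Real.log_two_lt_d9
    rw [h1]; linarith [le_abs_self x]
  have hΛsym : ∀ u, Λ (1 - u) = - Λ u := fun u => by simp only [hΛ, sub_sub_cancel]; ring
  have hsurj : ∀ x, ∃ u ∈ Ioo (0:ℝ) 1, Ψ u = x := fun x => by
    obtain ⟨u1, hu1, h11, h12⟩ := hlog (|x| / k1)
    have e1 : x ≤ Ψ u1 := by
      have := (c1 u1 hu1 h11).1
      rw [div_le_iff₀ k1p] at h12
      linarith [le_abs_self x]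
    have hu2 : 1 - u1 ∈ Ioo (0:ℝ) 1 := ⟨by linarith [hu1.2], by linarith [hu1.1]⟩
    have e2 : Ψ (1 - u1) ≤ x := by
      have := (c2 (1 - u1) hu2 (by linarith)).1
      rw [hΛsym] at this
      rw [div_le_iff₀ k1p] at h12
      linarith [neg_abs_le x]
    have hss : Icc (1 - u1) u1 ⊆ Ioo (0:ℝ) 1 := fun v hv =>
      ⟨hu2.1.trans_le hv.1, hv.2.trans_lt hu1.2⟩
    obtain ⟨u, hu, he⟩ := intermediate_value_Icc (by linarith : 1 - u1 ≤ u1) (hΨc.mono hss) ⟨e2, e1⟩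
    exact ⟨u, hss hu, he⟩
  set G := PsiInv a b with hG
  have hinv : ∀ u ∈ Ioo (0:ℝ) 1, G (Ψ u) = u := fun u hu => by
    have : {v : ℝ | v ∈ Ioo (0:ℝ) 1 ∧ Psi a b v ≤ Ψ u} = Ioc 0 u := by
      ext v
      constructor
      · rintro ⟨hv, hvu⟩
        exact ⟨hv.1, (hΨm.le_iff_le hv hu).1 hvu⟩
      · intro hv
        have hv' : v ∈ Ioo (0:ℝ) 1 := ⟨hv.1, hv.2.trans_lt hu.2⟩
        exact ⟨hv', (hΨm.le_iff_le hv' hu).2 hv.2⟩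
    rw [hG, PsiInv, this, csSup_Ioc hu.1]
  have hGmem : ∀ x, G x ∈ Ioo (0:ℝ) 1 := fun x => by
    obtain ⟨u, hu, rfl⟩ := hsurj x
    rw [hinv u hu]; exact hu
  have hright : ∀ x, Ψ (G x) = x := fun x => by
    obtain ⟨u, hu, rfl⟩ := hsurj x
    rw [hinv u hu]
  have hmono : StrictMono G := fun x y hxy => by
    rw [← hΨm.lt_iff_lt (hGmem x) (hGmem y), hright, hright]; exact hxy
  have hcont : ∀ x, ContinuousAt G x := fun x => by
    refine continuousAt_of_monotoneOn_of_image_mem_nhds (s := univ) (hmono.monotone.monotoneOn _)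
      univ_mem ?_
    refine mem_of_superset (Ioo_mem_nhds (hGmem x).1 (hGmem x).2) fun u hu => ?_
    exact ⟨Ψ u, trivial, hinv u hu⟩
  refine ⟨k2, ⟨k2p, fun x => (hGmem x).1, fun x => (hGmem x).2, fun x => ?_, hmono, ?_, ?_, ?_,
    hinv, hbd⟩⟩
  · have := HasDerivAt.of_local_left_inverse (hcont x) (hdΨ (G x) (hGmem x))
      (hψpos _ (hGmem x)).ne' (Eventually.of_forall hright)
    refine this.congr_deriv ?_
    simp only [hψ, inv_div]
  · refine tendsto_order.2 ⟨fun u hu => Eventually.of_forall fun x => hu.trans (hGmem x).1,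
      fun u hu => ?_⟩
    have hv : min (u/2) (1/2) ∈ Ioo (0:ℝ) 1 :=
      ⟨by positivity, (min_le_right _ _).trans_lt (by norm_num)⟩
    filter_upwards [eventually_le_atBot (Ψ (min (u/2) (1/2)))] with x hx
    have := hmono.monotone hx
    rw [hinv _ hv] at this
    have := min_le_left (u/2) (1/2:ℝ)
    linarith
  · refine tendsto_order.2 ⟨fun u hu => ?_, fun u hu => Eventually.of_forall fun x =>
      (hGmem x).2.trans hu⟩
    have hv : max ((1+u)/2) (1/2) ∈ Ioo (0:ℝ) 1 :=
      ⟨by positivity, max_lt (by linarith) (by norm_num)⟩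
    filter_upwards [eventually_ge_atTop (Ψ (max ((1+u)/2) (1/2)))] with x hx
    have := hmono.monotone hx
    rw [hinv _ hv] at this
    have := le_max_left ((1+u)/2) (1/2:ℝ)
    linarith
  · intro u hu
    have : {x : ℝ | u < G x} = Ioi (Ψ u) := by
      ext x
      show u < G x ↔ Ψ u < x
      rw [← hmono.lt_iff_lt (a := Ψ u), hinv u hu]
    rw [pinv, this, csInf_Ioi]


/-- A stationary profile with its integrated version and mean `μ`. -/
structure Prof (a B G Q : ℝ → ℝ) (μ : ℝ) : Prop where
  G0 : ∀ x, 0 < G x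
  G1 : ∀ x, G x < 1
  dG : ∀ x, HasDerivAt G (2 * B (G x) / a (G x)) x
  mono : StrictMono G
  Qsub : ∀ x y, Q y - Q x = ∫ u in x..y, G u
  Qbot : Tendsto Q atBot (𝓝 0)
  Qtop : Tendsto (fun x => Q x - (x - μ)) atTop (𝓝 0)

namespace Prof
variable {a b A B G Q : ℝ → ℝ} {c C L γ μ : ℝ}

lemma Gc (h : Prof a B G Q μ) : Continuous G :=
  continuous_iff_continuousAt.2 fun x => (h.dG x).continuousAt

lemma dQ (h : Prof a B G Q μ) (x : ℝ) : HasDerivAt Q (G x) x := by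
  have h1 : HasDerivAt (fun y => Q 0 + ∫ u in (0:ℝ)..y, G u) (G x) x :=
    (intervalIntegral.integral_hasDerivAt_right (h.Gc.intervalIntegrable _ _)
      (h.Gc.stronglyMeasurableAtFilter _ _) h.Gc.continuousAt).const_add _
  refine h1.congr_of_eventuallyEq (Eventually.of_forall fun y => ?_)
  simp only [← h.Qsub]; ring

lemma Qmono (h : Prof a B G Q μ) : Monotone Q :=
  monotone_of_deriv_nonneg (fun x => (h.dQ x).differentiableAt) fun x => by
    rw [(h.dQ x).deriv]; exact (h.G0 x).le

lemma Qanti (h : Prof a B G Q μ) : Antitone (fun x => Q x - (x - μ)) := by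
  have hd : ∀ x, HasDerivAt (fun x => Q x - (x - μ)) (G x - 1) x := fun x =>
    (h.dQ x).sub ((hasDerivAt_id x).sub_const μ)
  refine antitone_of_deriv_nonpos (fun x => (hd x).differentiableAt) fun x => ?_
  rw [(hd x).deriv]; linarith [h.G1 x]

lemma Q0 (h : Prof a B G Q μ) (x : ℝ) : 0 ≤ Q x := h.Qmono.le_of_tendsto h.Qbot x

lemma Qge (h : Prof a B G Q μ) (x : ℝ) : x - μ ≤ Q x := by
  have := h.Qanti.le_of_tendsto h.Qtop x
  linarith

end Prof

set_option maxHeartbeats 1600000 in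
/-- Local-in-space comparison with the equilibrium. -/
lemma barrier_conv {a b A B G Q : ℝ → ℝ} {c C L γ μ : ℝ} {Φ F : ℝ → ℝ → ℝ}
    (hc : Coef a b A B c C L γ) (h : Sol A B Φ F μ) (hG : Prof a B G Q μ)
    {R ε K : ℝ} (hR : 0 < R) (hε : 0 ≤ ε) (hK : 0 ≤ K)
    (hK0 : ∀ x ∈ Icc (-R) R, |Φ 0 x - Q x| ≤ K)
    (hb1 : ∀ t, 0 ≤ t → |Φ t R - Q R| ≤ ε) (hb2 : ∀ t, 0 ≤ t → |Φ t (-R) - Q (-R)| ≤ ε) :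
    ∃ lam > 0, ∃ H > 0, ∀ t, 0 ≤ t → ∀ x ∈ Icc (-R) R,
      |Φ t x - Q x| ≤ ε + K * Real.exp (-(lam * t)) * H := by
  have hcp := hc.cpos
  have hL := hc.Lpos
  set L' := L * L / c + L with hL'
  have hL'p : 0 < L' := by positivity
  set k := 2 * (L' + 1) / c + 1 with hk
  have hkp : 1 ≤ k := by rw [hk]; have : 0 < 2 * (L' + 1) / c := by positivity
                         linarith
  have hkc : L' + 1 ≤ c / 2 * k := by
    rw [hk]
    have : c / 2 * (2 * (L' + 1) / c + 1) = L' + 1 + c / 2 := by field_simp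
    linarith
  set H := 1 + Real.cosh (k * R) with hH
  have hHp : 0 < H := by have := Real.cosh_pos (k * R); linarith
  set lam := 1 / H with hlam
  have hlamp : 0 < lam := by positivity
  refine ⟨lam, hlamp, H, hHp, ?_⟩
  set η : ℝ → ℝ := fun x => H - Real.cosh (k * x) with hη
  set η' : ℝ → ℝ := fun x => - (k * Real.sinh (k * x)) with hη'
  set η'' : ℝ → ℝ := fun x => - (k * (k * Real.cosh (k * x))) with hη''
  have dη : ∀ x, HasDerivAt η (η' x) x := fun x => by
    have h1 : HasDerivAt (fun x => k * x) (k * 1) x := (hasDerivAt_id x).const_mul k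
    refine (h1.cosh.const_sub H).congr_deriv ?_
    simp only [hη']; ring
  have dη' : ∀ x, HasDerivAt η' (η'' x) x := fun x => by
    have h1 : HasDerivAt (fun x => k * x) (k * 1) x := (hasDerivAt_id x).const_mul k
    refine ((h1.sinh.const_mul k).neg).congr_deriv ?_
    simp only [hη'']; ring
  have η'c : Continuous η' := continuous_iff_continuousAt.2 fun x => (dη' x).continuousAt
  have η''c : Continuous η'' := by simp only [hη'']; fun_prop
  have hη1 : ∀ x ∈ Icc (-R) R, 1 ≤ η x := fun x hx => by
    have : Real.cosh (k * x) ≤ Real.cosh (k * R) := by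
      rw [Real.cosh_le_cosh, abs_mul, abs_mul]
      refine mul_le_mul_of_nonneg_left ?_ (abs_nonneg _)
      rw [abs_of_pos hR]; exact abs_le.2 hx
    simp only [hη, hH]; linarith
  have hηH : ∀ x, η x ≤ H := fun x => by
    simp only [hη]; linarith [Real.cosh_pos (k * x)]
  set G' : ℝ → ℝ := fun x => 2 * B (G x) / a (G x) with hG'
  have apos : ∀ u, 0 < a u := fun u => hcp.trans_le (hc.alo u)
  have G'c : Continuous G' := by
    simp only [hG']
    exact (continuous_const.mul (hc.Bcont.comp hG.Gc)).div (hc.ac.comp hG.Gc)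
      fun x => (apos _).ne'
  have G'b : ∀ x, |G' x| ≤ 2 * L / c := fun x => by
    have := hc.Bbd (hG.G0 x).le (hG.G1 x).le
    simp only [hG', abs_div, abs_mul, abs_of_pos (apos _), abs_two]
    have := hc.alo (G x)
    gcongr
  have main : ∀ σ : ℝ, σ ^ 2 = 1 → ∀ t, 0 ≤ t → ∀ x ∈ Icc (-R) R,
      σ * (Φ t x - (Q x + σ * ε + σ * K * Real.exp (-(lam * t)) * η x)) ≤ 0 := by
    intro σ hσ t ht
    have hs1 : |σ| = 1 := by
      have : |σ| ^ 2 = 1 := by rw [sq_abs]; exact hσ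
      nlinarith [abs_nonneg σ]
    set d : ℝ → ℝ := fun t => σ * K * Real.exp (-(lam * t)) with hd
    set d' : ℝ → ℝ := fun t => - (lam * d t) with hd'
    have hσd : ∀ t, σ * d t = |d t| := fun t => by
      simp only [hd, abs_mul, hs1, abs_of_nonneg hK, abs_of_pos (Real.exp_pos _), one_mul]
      have : σ * (σ * K * Real.exp (-(lam * t))) = σ ^ 2 * (K * Real.exp (-(lam * t))) := by ring
      rw [this, hσ, one_mul]
    have hbb : ∀ s x, |Φ s x - Q x| ≤ ε → 1 ≤ η x →
        σ * (Φ s x - (Q x + σ * ε + d s * η x)) ≤ 0 := fun s x h1 h2 => by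
      have e1 : σ * (Φ s x - Q x) ≤ ε := by
        refine (le_abs_self _).trans ?_
        rw [abs_mul, hs1, one_mul]; exact h1
      have e2 : σ * (Φ s x - (Q x + σ * ε + d s * η x)) =
        σ * (Φ s x - Q x) - σ ^ 2 * ε - (σ * d s) * η x := by ring
      rw [e2, hσ, hσd]
      have : 0 ≤ |d s| * η x := mul_nonneg (abs_nonneg _) (by linarith)
      linarith
    refine comparison hc h hσ (R := R) (T := t) hR (fun x => Q x + σ * ε) G η η' d d'
      (fun t x => (1/2) * (a (G x + d t * η' x) * (G' x + d t * η'' x)))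
      (fun x => (hG.dQ x).add_const _) dη (fun t => ?_) hG.Gc η'c (fun t x => ?_) (fun t => ?_)
      (fun s hs x hx => ?_) (fun s hs => ?_) (fun s hs => ?_) (fun x hx => ?_) t ⟨ht, le_rfl⟩
    · have h1 : HasDerivAt (fun t => -(lam * t)) (-(lam * 1)) t :=
        ((hasDerivAt_id t).const_mul lam).neg
      refine (h1.exp.const_mul (σ * K)).congr_deriv ?_
      simp only [hd', hd]; ring
    · have h1 : HasDerivAt (fun x => G x + d t * η' x) (G' x + d t * η'' x) x :=
        (hG.dG x).add ((dη' x).const_mul _)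
      refine ((hc.dA _).comp x h1).congr_deriv ?_
      ring
    · have := hG.Gc
      exact continuous_const.mul ((hc.ac.comp (this.add (continuous_const.mul η'c))).mul
        (G'c.add (continuous_const.mul η''c)))
    · set v := G x + d s * η' x with hv
      have hva : |a v - a (G x)| ≤ L * (|d s| * |η' x|) := by
        have := hc.alip v (G x)
        rwa [hv, add_sub_cancel_left, abs_mul, ← hv] at this
      have hvB : |B v - B (G x)| ≤ L * (|d s| * |η' x|) := by
        have := hc.Blip v (G x)
        rwa [hv, add_sub_cancel_left, abs_mul, ← hv] at this
      have hst : (1/2) * (a (G x) * G' x) = B (G x) := by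
        simp only [hG']
        have := (apos (G x)).ne'
        field_simp
      have e1 : σ * ((1/2) * (a v * (G' x + d s * η'' x)) - B v - d' s * η x) =
          σ * ((1/2) * ((a v - a (G x)) * G' x) - (B v - B (G x)))
          + (1/2) * (a v * ((σ * d s) * η'' x)) + lam * ((σ * d s) * η x) := by
        simp only [hd']
        linear_combination σ * hst
      rw [e1, hσd]
      have hD := abs_nonneg (d s)
      have e2 : σ * ((1/2) * ((a v - a (G x)) * G' x) - (B v - B (G x))) ≤
          |d s| * (L' * |η' x|) := by
        refine (le_abs_self _).trans ?_
        rw [abs_mul, hs1, one_mul]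
        refine (abs_sub _ _).trans ?_
        rw [abs_mul, abs_mul, abs_of_pos (by norm_num : (0:ℝ) < 1/2)]
        have : |a v - a (G x)| * |G' x| ≤ L * (|d s| * |η' x|) * (2 * L / c) := by
          have := G'b x
          gcongr
        have e3 : |d s| * (L' * |η' x|) = (1/2) * (L * (|d s| * |η' x|) * (2 * L / c))
            + L * (|d s| * |η' x|) := by rw [hL']; field_simp
        rw [e3]; linarith
      set ch := Real.cosh (k * x) with hch
      have hch1 : 1 ≤ ch := Real.one_le_cosh _
      have hη'b : |η' x| ≤ k * ch := by
        simp only [hη', abs_neg, abs_mul, abs_of_pos (by linarith : (0:ℝ) < k)]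
        have : |Real.sinh (k * x)| ≤ ch := by
          have := Real.cosh_sq (k * x)
          exact abs_le_of_sq_le_sq (by rw [hch]; linarith) (by linarith)
        gcongr
      have e4 : (1/2) * (a v * (|d s| * η'' x)) ≤ |d s| * (-(c / 2 * k) * (k * ch)) := by
        have : 0 ≤ |d s| * (k * (k * ch)) := by positivity
        have h2 := mul_le_mul_of_nonneg_right (hc.alo v) this
        simp only [hη'']
        nlinarith
      have e5 : lam * (|d s| * η x) ≤ |d s| := by
        have : lam * η x ≤ 1 := by
          rw [hlam, one_div, inv_mul_le_iff₀ hHp, mul_one]; exact hηH x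
        nlinarith
      have e6 : L' * |η' x| + -(c / 2 * k) * (k * ch) + 1 ≤ 0 := by
        have h1 : L' * |η' x| ≤ L' * (k * ch) := by gcongr
        have h2 : 1 ≤ k * ch := one_le_mul_of_one_le_of_one_le hkp hch1
        have h3 : (L' + 1) * (k * ch) ≤ c / 2 * k * (k * ch) :=
          mul_le_mul_of_nonneg_right hkc (by linarith)
        linarith
      have e7 : |d s| * (L' * |η' x| + -(c / 2 * k) * (k * ch) + 1) ≤ 0 :=
        mul_nonpos_of_nonneg_of_nonpos hD e6
      linarith
    · exact hbb s R (hb1 s hs.1) (hη1 R ⟨by linarith, le_rfl⟩)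
    · exact hbb s (-R) (hb2 s hs.1) (hη1 (-R) ⟨le_rfl, by linarith⟩)
    · have e1 : σ * (Φ 0 x - Q x) ≤ K := by
        refine (le_abs_self _).trans ?_
        rw [abs_mul, hs1, one_mul]; exact hK0 x hx
      have e2 : σ * (Φ 0 x - (Q x + σ * ε + d 0 * η x)) =
        σ * (Φ 0 x - Q x) - σ ^ 2 * ε - σ ^ 2 * K * η x := by
          simp only [hd, mul_zero, neg_zero, Real.exp_zero]; ring
      rw [e2, hσ]
      nlinarith [hη1 x hx]
  intro t ht x hx
  have m1 := main 1 (by norm_num) t ht x hx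
  have m2 := main (-1) (by norm_num) t ht x hx
  have hle : K * Real.exp (-(lam * t)) * η x ≤ K * Real.exp (-(lam * t)) * H := by
    have := hηH x
    have := Real.exp_pos (-(lam * t))
    gcongr
  rw [abs_le]
  constructor <;> nlinarith

lemma unif_conv {a b A B G Q V : ℝ → ℝ} {c C L γ μ : ℝ} {Φ F : ℝ → ℝ → ℝ}
    (hc : Coef a b A B c C L γ) (h : Sol A B Φ F μ) (hG : Prof a B G Q μ)
    (hV : ∀ t, 0 ≤ t → ∀ x, Φ t x ≤ V x) (Vbot : Tendsto V atBot (𝓝 0))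
    (Vtop : Tendsto (fun x => V x - (x - μ)) atTop (𝓝 0)) {ε : ℝ} (hε : 0 < ε) :
    ∃ T ≥ 0, ∀ t ≥ T, ∀ x, |Φ t x - Q x| ≤ ε := by
  obtain ⟨r1, h1⟩ := eventually_atBot.1 ((Vbot.eventually_lt_const (half_pos hε)).and
    (hG.Qbot.eventually_lt_const (half_pos hε)))
  obtain ⟨r2, h2⟩ := eventually_atTop.1 ((Vtop.eventually_lt_const (half_pos hε)).and
    (hG.Qtop.eventually_lt_const (half_pos hε)))
  set R := max 1 (max (-r1) r2) with hR
  have hRp : 0 < R := by positivity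
  have b1 : ∀ t, 0 ≤ t → ∀ x, R ≤ x → |Φ t x - Q x| ≤ ε / 2 := fun t ht x hx => by
    have := h2 x ((le_max_right (-r1) r2).trans ((le_max_right 1 _).trans hx))
    have e1 := hV t ht x
    have e2 := h.Pge ht x
    have e3 := hG.Qge x
    rw [abs_le]; constructor <;> linarith [this.1, this.2]
  have b2 : ∀ t, 0 ≤ t → ∀ x, x ≤ -R → |Φ t x - Q x| ≤ ε / 2 := fun t ht x hx => by
    have := h1 x (by have := (le_max_left (-r1) r2).trans (le_max_right 1 _); linarith)
    have e1 := hV t ht x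
    have e2 := h.Pnn ht x
    have e3 := hG.Q0 x
    rw [abs_le]; constructor <;> linarith [this.1, this.2]
  have hQc : Continuous Q := continuous_iff_continuousAt.2 fun x => (hG.dQ x).continuousAt
  obtain ⟨K, hK⟩ := (isCompact_Icc (a := -R) (b := R)).exists_bound_of_continuousOn
    ((h.xcont le_rfl).sub hQc).continuousOn
  have hK0 : 0 ≤ K := (norm_nonneg _).trans (hK 0 ⟨by linarith, hRp.le⟩)
  obtain ⟨lam, hl, H, hH, hb⟩ := barrier_conv hc h hG hRp (half_pos hε).le hK0
    (fun x hx => hK x hx) (fun t ht => b1 t ht R le_rfl) (fun t ht => b2 t ht (-R) le_rfl)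
  have hlim : Tendsto (fun t => K * Real.exp (-(lam * t)) * H) atTop (𝓝 (K * 0 * H)) :=
    ((Real.tendsto_exp_neg_atTop_nhds_zero.comp (tendsto_id.const_mul_atTop hl)).const_mul
      K).mul_const H
  rw [mul_zero, zero_mul] at hlim
  obtain ⟨T, hT⟩ := eventually_atTop.1 (hlim.eventually_lt_const (half_pos hε))
  refine ⟨max T 0, le_max_right _ _, fun t ht x => ?_⟩
  have ht0 : 0 ≤ t := (le_max_right _ _).trans ht
  rcases le_total x (-R) with hx | hx
  · linarith [b2 t ht0 x hx]
  rcases le_total R x with hx' | hx'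
  · linarith [b1 t ht0 x hx']
  have := hb t ht0 x ⟨hx, hx'⟩
  have := hT t ((le_max_left _ _).trans ht)
  linarith

lemma mono_int_le {G : ℝ → ℝ} (hG : Monotone G) {x y : ℝ} (hxy : x ≤ y) :
    (y - x) * G x ≤ ∫ u in x..y, G u ∧ ∫ u in x..y, G u ≤ (y - x) * G y := by
  have hi : IntervalIntegrable G volume x y := hG.intervalIntegrable
  constructor
  · have := intervalIntegral.integral_mono_on hxy (intervalIntegrable_const (c := G x)) hi
      fun u hu => hG hu.1
    simpa using this
  · have := intervalIntegral.integral_mono_on hxy hi (intervalIntegrable_const (c := G y))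
      fun u hu => hG hu.2
    simpa using this

lemma cdf_conv {a b A B G Q V : ℝ → ℝ} {c C L γ μ : ℝ} {Φ F : ℝ → ℝ → ℝ}
    (hc : Coef a b A B c C L γ) (h : Sol A B Φ F μ) (hG : Prof a B G Q μ)
    (hV : ∀ t, 0 ≤ t → ∀ x, Φ t x ≤ V x) (Vbot : Tendsto V atBot (𝓝 0))
    (Vtop : Tendsto (fun x => V x - (x - μ)) atTop (𝓝 0)) (x : ℝ) :
    Tendsto (fun t => F t x) atTop (𝓝 (G x)) := by
  rw [Metric.tendsto_atTop]
  intro δ hδ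
  obtain ⟨r, hr, hcont⟩ := Metric.continuous_iff.1 hG.Gc x (δ/2) (half_pos hδ)
  have e1 := hcont (x + r/2) (by simp [Real.dist_eq, abs_of_pos hr]; linarith)
  have e2 := hcont (x - r/2) (by simp [Real.dist_eq, abs_of_pos hr]; linarith)
  rw [Real.dist_eq, abs_lt] at e1 e2
  obtain ⟨T, hT0, hT⟩ := unif_conv hc h hG hV Vbot Vtop (ε := r * δ / 16) (by positivity)
  refine ⟨T, fun t ht => ?_⟩
  have ht0 := hT0.trans ht
  have q1 := abs_le.1 (hT t ht x)
  have q2 := abs_le.1 (hT t ht (x + r/2))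
  have q3 := abs_le.1 (hT t ht (x - r/2))
  have f1 := (mono_int_le (h.Fmono t ht0) (by linarith : x ≤ x + r/2)).1
  have f2 := (mono_int_le (h.Fmono t ht0) (by linarith : x - r/2 ≤ x)).2
  have g1 := (mono_int_le hG.mono.monotone (by linarith : x ≤ x + r/2)).2
  have g2 := (mono_int_le hG.mono.monotone (by linarith : x - r/2 ≤ x)).1
  rw [← h.Psub t ht0] at f1 f2
  rw [← hG.Qsub] at g1 g2
  rw [Real.dist_eq, abs_lt]
  have u1 : r/2 * F t x ≤ r/2 * (G x + δ/2) + r * δ / 8 := by nlinarith [q1.1, q1.2, q2.1, q2.2]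
  have u2 : r/2 * (G x - δ/2) - r * δ / 8 ≤ r/2 * F t x := by nlinarith [q1.1, q1.2, q3.1, q3.2]
  have hr2 : 0 < r/2 := by positivity
  constructor
  · by_contra hcon
    push Not at hcon
    nlinarith
  · by_contra hcon
    push Not at hcon
    nlinarith


lemma rpow_add_le {x y p : ℝ} (hx : 0 ≤ x) (hy : 0 ≤ y) (hp : 0 < p) :
    (x + y) ^ p ≤ 2 ^ p * x ^ p + 2 ^ p * y ^ p := by
  have h1 : 0 ≤ (2:ℝ) ^ p * x ^ p := by positivity
  have h2 : 0 ≤ (2:ℝ) ^ p * y ^ p := by positivity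
  rcases le_total x y with h | h
  · calc (x + y) ^ p ≤ (2 * y) ^ p := Real.rpow_le_rpow (by positivity) (by linarith) hp.le
      _ = 2 ^ p * y ^ p := Real.mul_rpow (by norm_num) hy
      _ ≤ _ := by linarith
  · calc (x + y) ^ p ≤ (2 * x) ^ p := Real.rpow_le_rpow (by positivity) (by linarith) hp.le
      _ = 2 ^ p * x ^ p := Real.mul_rpow (by norm_num) hx
      _ ≤ _ := by linarith

lemma abs_log_le {u t : ℝ} (h0 : 0 < u) (h1 : u ≤ 1) (ht : 0 < t) :
    |Real.log u| ≤ (1 / t) * u ^ (-t) := by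
  have h := Real.abs_log_mul_self_rpow_lt u t h0 h1 ht
  have hp : 0 < u ^ t := Real.rpow_pos_of_pos h0 _
  rw [abs_mul, abs_of_pos hp] at h
  rw [Real.rpow_neg h0.le, ← div_eq_mul_inv, le_div_iff₀ hp]
  exact h.le

lemma Stat.psi_bd {a B Ψ G : ℝ → ℝ} {κ : ℝ} (h : Stat a B Ψ G κ) {t : ℝ} (ht : 0 < t) :
    ∀ u ∈ Ioo (0:ℝ) 1, |Ψ u| ≤ (κ * (1 / t)) * (u ^ (-t) + (1 - u) ^ (-t)) := fun u hu => by
  refine (h.bd u hu).trans ?_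
  have h1 := abs_log_le hu.1 hu.2.le ht
  have h2 := abs_log_le (u := 1 - u) (by linarith [hu.2]) (by linarith [hu.1]) ht
  have := h.κpos
  calc κ * (|Real.log u| + |Real.log (1 - u)|)
      ≤ κ * ((1 / t) * u ^ (-t) + (1 / t) * (1 - u) ^ (-t)) := by gcongr
    _ = _ := by ring

lemma Stat.psi_int {a B Ψ G : ℝ → ℝ} {κ : ℝ} (h : Stat a B Ψ G κ) {p : ℝ} (hp : 0 < p) :
    (∫⁻ u in Ioo (0:ℝ) 1, ENNReal.ofReal (|Ψ u| ^ p)) < ⊤ := by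
  have ht : 0 < 1 / (2 * p) := by positivity
  have hκ := h.κpos
  refine lt_of_le_of_lt (setLIntegral_mono' measurableSet_Ioo fun u hu =>
    ENNReal.ofReal_le_ofReal (Real.rpow_le_rpow (abs_nonneg _) (h.psi_bd ht u hu) hp.le))
    (pow_int (by positivity) ht hp ?_)
  have : 1 / (2 * p) * p = 1 / 2 := by field_simp
  rw [this]; norm_num

/-- `m` has a finite moment of order `p`. -/
lemma moment_of_W {a B Ψ G : ℝ → ℝ} {κ : ℝ} (h : Stat a B Ψ G κ) {m : Measure ℝ}
    [IsProbabilityMeasure m] {p : ℝ} (hp : 2 ≤ p) (hW : Wdist p (cdfOf m) G < ⊤) :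
    Integrable (fun z => 1 + |z| ^ p) m := by
  have hp0 : 0 < p := by linarith
  have hF := cdfOf_isCDF m
  have hW' : (∫⁻ u in Ioo (0:ℝ) 1, ENNReal.ofReal (|pinv (cdfOf m) u - pinv G u| ^ p)) < ⊤ :=
    (ENNReal.rpow_lt_top_iff_of_pos (by positivity : 0 < 1 / p)).1 hW
  refine (integrable_const 1).add ⟨(by fun_prop : Measurable _).aestronglyMeasurable, ?_⟩
  rw [hasFiniteIntegral_iff_norm]
  have e1 : ∀ z : ℝ, ‖|z| ^ p‖ = |z| ^ p := fun z => by
    rw [Real.norm_eq_abs, abs_of_nonneg (by positivity)]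
  simp only [e1]
  rw [← law_cdfOf m, law_lintegral hF (by fun_prop)]
  have ht : 0 < 1 / (2 * p) := by positivity
  set t := 1 / (2 * p)
  have hκ := h.κpos
  set g : ℝ → ℝ≥0∞ := fun u =>
    ENNReal.ofReal (((κ * (1 / t)) * (u ^ (-t) + (1 - u) ^ (-t))) ^ p) with hg
  have hgm : Measurable g := by
    simp only [hg]
    fun_prop
  have hgi : ∫⁻ u in Ioo (0:ℝ) 1, g u < ⊤ := by
    refine pow_int (by positivity) ht hp0 ?_
    have : 1 / (2 * p) * p = 1 / 2 := by field_simp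
    show 1 / (2 * p) * p < 1
    rw [this]; norm_num
  calc ∫⁻ u in Ioo (0:ℝ) 1, ENNReal.ofReal (|pinv (cdfOf m) u| ^ p)
      ≤ ∫⁻ u in Ioo (0:ℝ) 1, (ENNReal.ofReal (2 ^ p) *
          ENNReal.ofReal (|pinv (cdfOf m) u - pinv G u| ^ p) + ENNReal.ofReal (2 ^ p) * g u) := by
        refine setLIntegral_mono' measurableSet_Ioo fun u hu => ?_
        rw [hg, ← ENNReal.ofReal_mul (by positivity), ← ENNReal.ofReal_mul (by positivity)]
        have p1 : 0 < u ^ (-t) := Real.rpow_pos_of_pos hu.1 _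
        have p2 : 0 < (1 - u) ^ (-t) := Real.rpow_pos_of_pos (by linarith [hu.2]) _
        rw [← ENNReal.ofReal_add (by positivity) (by positivity)]
        refine ENNReal.ofReal_le_ofReal ?_
        have hb := h.psi_bd ht u hu
        rw [← h.pin u hu] at hb
        have h1 : |pinv (cdfOf m) u| ≤ |pinv (cdfOf m) u - pinv G u| +
            (κ * (1 / t)) * (u ^ (-t) + (1 - u) ^ (-t)) := by
          have := abs_add_le (pinv (cdfOf m) u - pinv G u) (pinv G u)
          rw [sub_add_cancel] at this
          linarith
        exact (Real.rpow_le_rpow (abs_nonneg _) h1 hp0.le).trans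
          (rpow_add_le (abs_nonneg _) (by positivity) hp0)
    _ = ENNReal.ofReal (2 ^ p) * (∫⁻ u in Ioo (0:ℝ) 1,
          ENNReal.ofReal (|pinv (cdfOf m) u - pinv G u| ^ p))
        + ENNReal.ofReal (2 ^ p) * ∫⁻ u in Ioo (0:ℝ) 1, g u := by
        rw [lintegral_add_right' _ (hgm.const_mul _).aemeasurable,
          lintegral_const_mul' _ _ ENNReal.ofReal_ne_top,
          lintegral_const_mul' _ _ ENNReal.ofReal_ne_top]
    _ < ⊤ := ENNReal.add_lt_top.2 ⟨ENNReal.mul_lt_top ENNReal.ofReal_lt_top hW',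
        ENNReal.mul_lt_top ENNReal.ofReal_lt_top hgi⟩

lemma sp_poly {k p : ℝ} (hk : 0 < k) (hp : 2 ≤ p) :
    ∃ y0 ≥ 1, ∃ D > 0, ∀ y ≥ y0, ∀ w, sp k (w - y) * y ^ (p - 1) ≤ D * (1 + |w| ^ p) := by
  have hlim := tendsto_rpow_mul_exp_neg_mul_atTop_nhds_zero (p - 1) (k / 2) (by positivity)
  obtain ⟨r, hr⟩ := eventually_atTop.1 (hlim.eventually_lt_const one_pos)
  refine ⟨max 1 r, le_max_left _ _, (1 + 2 / k) * 2 ^ (p - 1) + 1 / k, by positivity,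
    fun y hy w => ?_⟩
  have hy1 : 1 ≤ y := (le_max_left _ _).trans hy
  have hyp : 0 < y ^ (p - 1) := Real.rpow_pos_of_pos (by linarith) _
  have hw : 0 ≤ |w| ^ p := by positivity
  have hkk : 0 < 1 / k := by positivity
  have h2p : (0:ℝ) < (1 + 2 / k) * 2 ^ (p - 1) := by positivity
  rcases le_total (y / 2) w with h | h
  · have hw0 : 0 < w := by linarith
    have e1 : sp k (w - y) ≤ (1 + 2 / k) * w := by
      refine (sp_mono hk (by linarith : w - y ≤ w)).trans ((sp_le hk w).trans ?_)
      rw [max_eq_left hw0.le]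
      have : 1 / k ≤ 2 / k * w := by
        have : 2 / k * w = (1 / k) * (2 * w) := by ring
        rw [this]; nlinarith
      linarith
    have e2 : y ^ (p - 1) ≤ 2 ^ (p - 1) * w ^ (p - 1) := by
      rw [← Real.mul_rpow (by norm_num) hw0.le]
      exact Real.rpow_le_rpow (by linarith) (by linarith) (by linarith)
    have e3 : w * w ^ (p - 1) = |w| ^ p := by
      rw [abs_of_pos hw0]
      nth_rewrite 1 [← Real.rpow_one w]
      rw [← Real.rpow_add hw0]; ring_nf
    calc sp k (w - y) * y ^ (p - 1) ≤ ((1 + 2 / k) * w) * (2 ^ (p - 1) * w ^ (p - 1)) := by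
          gcongr
      _ = (1 + 2 / k) * 2 ^ (p - 1) * (w * w ^ (p - 1)) := by ring
      _ ≤ _ := by rw [e3]; nlinarith [mul_nonneg hkk.le hw]
  · have e1 : sp k (w - y) ≤ (1 / k) * Real.exp (-(k / 2) * y) := by
      refine (sp_mono hk (by linarith : w - y ≤ -(y / 2))).trans ((sp_le_exp hk _).trans ?_)
      have : k * -(y / 2) = -(k / 2) * y := by ring
      rw [this]
    have e2 := hr y ((le_max_right _ _).trans hy)
    calc sp k (w - y) * y ^ (p - 1) ≤ ((1 / k) * Real.exp (-(k / 2) * y)) * y ^ (p - 1) := by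
          gcongr
      _ = (1 / k) * (y ^ (p - 1) * Real.exp (-(k / 2) * y)) := by ring
      _ ≤ (1 / k) * 1 := by gcongr
      _ ≤ _ := by nlinarith [mul_nonneg hkk.le hw, mul_nonneg h2p.le hw]

/-- Uniform-in-time tail bounds. -/
lemma tails {A B : ℝ → ℝ} {k p : ℝ} {Φ F : ℝ → ℝ → ℝ} {m : Measure ℝ} [IsProbabilityMeasure m]
    (hm : Integrable (fun x => |x|) m) (hk : 0 < k) (hp : 2 ≤ p)
    (hmp : Integrable (fun z => 1 + |z| ^ p) m)
    (h : Sol A B Φ F (∫ z, z ∂m)) (hV : ∀ t, 0 ≤ t → ∀ x, Φ t x ≤ Vb k m x) :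
    ∃ y0 ≥ 1, ∃ M > 0, ∀ y ≥ y0, ∀ t, 0 ≤ t →
      (1 - F t (2 * y)) * y ^ p ≤ M ∧ F t (-(2 * y)) * y ^ p ≤ M := by
  obtain ⟨y0, hy0, D, hD, hb⟩ := sp_poly hk hp
  set I := ∫ z, (1 + |z| ^ p) ∂m with hI
  have hI0 : 0 ≤ I := integral_nonneg fun z => by
    have : 0 ≤ |z| ^ p := by positivity
    show (0:ℝ) ≤ 1 + |z| ^ p
    linarith
  refine ⟨y0, hy0, D * I + 1, by positivity, fun y hy t ht => ?_⟩
  have hyp : 0 < y := by linarith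
  have hyp' : 0 < y ^ (p - 1) := Real.rpow_pos_of_pos hyp _
  have e3 : y * y ^ (p - 1) = y ^ p := by
    nth_rewrite 1 [← Real.rpow_one y]
    rw [← Real.rpow_add hyp]; ring_nf
  constructor
  · have h1 := (mono_int_le (h.Fmono t ht) (by linarith : y ≤ 2 * y)).2
    rw [← h.Psub t ht] at h1
    have h2 := hV t ht y
    have h3 := h.Pge ht (2 * y)
    have h4 := Vb_top_eq hk hm y
    have h5 : (1 - F t (2 * y)) * y ≤ ∫ z, sp k (z - y) ∂m := by nlinarith
    have h6 : (∫ z, sp k (z - y) ∂m) * y ^ (p - 1) ≤ D * I := by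
      rw [← integral_mul_const, hI, ← integral_const_mul]
      exact integral_mono ((sp_int' hk hm y).mul_const _) (hmp.const_mul D) fun z => hb y hy z
    calc (1 - F t (2 * y)) * y ^ p = ((1 - F t (2 * y)) * y) * y ^ (p - 1) := by rw [← e3]; ring
      _ ≤ (∫ z, sp k (z - y) ∂m) * y ^ (p - 1) := by gcongr
      _ ≤ _ := by linarith
  · have h1 := (mono_int_le (h.Fmono t ht) (by linarith : -(2 * y) ≤ -y)).1
    rw [← h.Psub t ht] at h1
    have h2 := hV t ht (-y)
    have h3 := h.Pnn ht (-(2 * y))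
    have h5 : F t (-(2 * y)) * y ≤ ∫ z, sp k (-y - z) ∂m := by
      have : Vb k m (-y) = ∫ z, sp k (-y - z) ∂m := rfl
      nlinarith
    have h6 : (∫ z, sp k (-y - z) ∂m) * y ^ (p - 1) ≤ D * I := by
      rw [← integral_mul_const, hI, ← integral_const_mul]
      refine integral_mono ((sp_int hk hm (-y)).mul_const _) (hmp.const_mul D) fun z => ?_
      have := hb y hy (-z)
      rw [abs_neg] at this
      have e : -y - z = -z - y := by ring
      simp only [e]; exact this
    calc F t (-(2 * y)) * y ^ p = (F t (-(2 * y)) * y) * y ^ (p - 1) := by rw [← e3]; ring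
      _ ≤ (∫ z, sp k (-y - z) ∂m) * y ^ (p - 1) := by gcongr
      _ ≤ _ := by linarith

lemma pinv_dom {F : ℝ → ℝ} (hF : IsCDF F) {y0 M p : ℝ} (hy0 : 1 ≤ y0) (hM : 0 < M) (hp : 2 ≤ p)
    (hb : ∀ y ≥ y0, (1 - F (2 * y)) * y ^ p ≤ M ∧ F (-(2 * y)) * y ^ p ≤ M) :
    ∀ u ∈ Ioo (0:ℝ) 1, |pinv F u| ≤
      (2 * (y0 + (2 * M) ^ (1 / p))) * (u ^ (-(1 / p)) + (1 - u) ^ (-(1 / p))) := fun u hu => by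
  have hp0 : 0 < p := by linarith
  have hu1 : 0 < 1 - u := by linarith [hu.2]
  have hM1 : 0 < (2 * M) ^ (1 / p) := by positivity
  have key : ∀ v, 0 < v → v < 1 → ∃ y ≥ y0, 2 * M ≤ v * y ^ p ∧
      2 * y ≤ (2 * (y0 + (2 * M) ^ (1 / p))) * v ^ (-(1 / p)) := fun v hv hv1 => by
    have q1 : 1 ≤ v ^ (-(1 / p)) :=
      Real.one_le_rpow_of_pos_of_le_one_of_nonpos hv hv1.le (by
        have : 0 < 1 / p := by positivity
        linarith)
    refine ⟨max y0 ((2 * M) ^ (1 / p) * v ^ (-(1 / p))), le_max_left _ _, ?_, ?_⟩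
    · have e : ((2 * M) ^ (1 / p) * v ^ (-(1 / p))) ^ p = 2 * M * v⁻¹ := by
        rw [Real.mul_rpow hM1.le (by positivity), ← Real.rpow_mul (by positivity),
          ← Real.rpow_mul hv.le]
        have e1 : 1 / p * p = 1 := by field_simp
        have e2 : -(1 / p) * p = -1 := by field_simp
        rw [e1, e2, Real.rpow_one, Real.rpow_neg_one]
      have : 2 * M * v⁻¹ ≤ (max y0 ((2 * M) ^ (1 / p) * v ^ (-(1 / p)))) ^ p := by
        rw [← e]
        exact Real.rpow_le_rpow (by positivity) (le_max_right _ _) hp0.le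
      calc 2 * M = v * (2 * M * v⁻¹) := by field_simp
        _ ≤ _ := by gcongr
    · have : max y0 ((2 * M) ^ (1 / p) * v ^ (-(1 / p))) ≤
          (y0 + (2 * M) ^ (1 / p)) * v ^ (-(1 / p)) := by
        refine max_le ?_ ?_
        · nlinarith
        · nlinarith
      linarith
  have p1 : 0 < u ^ (-(1 / p)) := Real.rpow_pos_of_pos hu.1 _
  have p2 : 0 < (1 - u) ^ (-(1 / p)) := Real.rpow_pos_of_pos hu1 _
  have hKp : 0 < 2 * (y0 + (2 * M) ^ (1 / p)) := by linarith
  rw [abs_le]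
  constructor
  · obtain ⟨y, hy, h1, h2⟩ := key u hu.1 hu.2
    have h3 := (hb y hy).2
    have hyp : 0 < y ^ p := Real.rpow_pos_of_pos (by linarith) _
    have h4 : F (-(2 * y)) ≤ u := by
      by_contra hcon
      push Not at hcon
      nlinarith
    have := le_pinv hF hu.2 h4
    nlinarith [mul_pos hKp p2]
  · obtain ⟨y, hy, h1, h2⟩ := key (1 - u) hu1 (by linarith [hu.1])
    have h3 := (hb y hy).1
    have hyp : 0 < y ^ p := Real.rpow_pos_of_pos (by linarith) _
    have h4 : u < F (2 * y) := by
      by_contra hcon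
      push Not at hcon
      nlinarith
    have := pinv_le hF hu.1 h4
    nlinarith [mul_pos hKp p1]

lemma pinv_tendsto {F : ℝ → ℝ → ℝ} {G : ℝ → ℝ} (hF : ∀ t, 0 ≤ t → IsCDF (F t)) (hG : IsCDF G)
    (hGm : StrictMono G) (hlim : ∀ x, Tendsto (fun t => F t x) atTop (𝓝 (G x))) {u : ℝ}
    (hu : u ∈ Ioo (0:ℝ) 1) : Tendsto (fun t => pinv (F t) u) atTop (𝓝 (pinv G u)) := by
  rw [Metric.tendsto_atTop']
  intro ε hε
  set x := pinv G u
  have h1 : G (x - ε / 2) < u := by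
    by_contra hcon
    push Not at hcon
    have : u < G (x - ε / 4) := hcon.trans_lt (hGm (by linarith))
    have := pinv_le hG hu.1 this
    linarith
  have h2 : u < G (x + ε / 2) := by
    by_contra hcon
    push Not at hcon
    have := le_pinv hG hu.2 hcon
    linarith
  obtain ⟨T, hT⟩ := eventually_atTop.1 (((hlim _).eventually_lt_const h1).and
    ((hlim _).eventually_const_lt h2))
  refine ⟨max T 0, fun t ht => ?_⟩
  have ht0 : 0 ≤ t := (le_max_right _ _).trans ht.le
  have e := hT t ((le_max_left _ _).trans ht.le)
  have e1 := le_pinv (hF t ht0) hu.2 e.1.le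
  have e2 := pinv_le (hF t ht0) hu.1 e.2
  rw [Real.dist_eq, abs_lt]
  constructor <;> linarith

lemma W_tendsto {F : ℝ → ℝ → ℝ} {G : ℝ → ℝ} (hF : ∀ t, 0 ≤ t → IsCDF (F t)) (hG : IsCDF G)
    (hGm : StrictMono G) (hlim : ∀ x, Tendsto (fun t => F t x) atTop (𝓝 (G x)))
    {y0 M p q : ℝ} (hy0 : 1 ≤ y0) (hM : 0 < M) (hp : 2 ≤ p) (hq : 1 ≤ q) (hqp : q < p)
    (hb : ∀ y ≥ y0, ∀ t, 0 ≤ t → (1 - F t (2 * y)) * y ^ p ≤ M ∧ F t (-(2 * y)) * y ^ p ≤ M) :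
    Tendsto (fun t => Wdist q (F t) G) atTop (𝓝 0) := by
  have hq0 : 0 < q := by linarith
  have hp0 : 0 < p := by linarith
  have hs : 0 < 1 / p := by positivity
  set s := 1 / p with hs'
  set K := 2 * (y0 + (2 * M) ^ s) with hK
  have hKp : 0 < K := by have : 0 < (2 * M) ^ s := by positivity
                         linarith
  have hbF : ∀ t, 0 ≤ t → ∀ u ∈ Ioo (0:ℝ) 1,
      |pinv (F t) u| ≤ K * (u ^ (-s) + (1 - u) ^ (-s)) := fun t ht =>
    pinv_dom (hF t ht) hy0 hM hp fun y hy => hb y hy t ht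
  have hbG : ∀ u ∈ Ioo (0:ℝ) 1, |pinv G u| ≤ K * (u ^ (-s) + (1 - u) ^ (-s)) := fun u hu => by
    refine le_of_tendsto (pinv_tendsto hF hG hGm hlim hu).abs ?_
    filter_upwards [eventually_ge_atTop 0] with t ht using hbF t ht u hu
  have main : Tendsto (fun t => ∫⁻ u in Ioo (0:ℝ) 1,
      ENNReal.ofReal (|pinv (F t) u - pinv G u| ^ q)) atTop
      (𝓝 (∫⁻ u in Ioo (0:ℝ) 1, (0 : ℝ≥0∞))) := by
    refine tendsto_lintegral_filter_of_dominated_convergence'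
      (fun u => ENNReal.ofReal (((2 * K) * (u ^ (-s) + (1 - u) ^ (-s))) ^ q)) ?_ ?_
      (pow_int (by positivity) hs hq0 ?_).ne ?_
    · filter_upwards [eventually_ge_atTop 0] with t ht
      have h1 := pinv_aem (hF t ht)
      have h2 := pinv_aem hG
      have h3 : AEMeasurable (fun u => |pinv (F t) u - pinv G u|) (volume.restrict (Ioo 0 1)) :=
        (continuous_abs.measurable).comp_aemeasurable (h1.sub h2)
      exact (h3.pow_const q).ennreal_ofReal
    · filter_upwards [eventually_ge_atTop 0] with t ht
      filter_upwards [ae_restrict_mem measurableSet_Ioo] with u hu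
      refine ENNReal.ofReal_le_ofReal (Real.rpow_le_rpow (abs_nonneg _) ?_ hq0.le)
      have := abs_sub (pinv (F t) u) (pinv G u)
      linarith [hbF t ht u hu, hbG u hu]
    · rw [hs', one_div, inv_mul_lt_iff₀ hp0]; linarith
    · filter_upwards [ae_restrict_mem measurableSet_Ioo] with u hu
      have h1 := ((pinv_tendsto hF hG hGm hlim hu).sub_const (pinv G u)).abs
      rw [sub_self, abs_zero] at h1
      have h2 := (Real.continuousAt_rpow_const 0 q (Or.inr hq0.le)).tendsto.comp h1
      rw [Real.zero_rpow hq0.ne'] at h2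
      have h3 := (ENNReal.continuous_ofReal.tendsto 0).comp h2
      rw [ENNReal.ofReal_zero] at h3
      exact h3
  have h4 := (ENNReal.continuous_rpow_const (y := 1 / q)).tendsto _ |>.comp main
  rw [lintegral_zero, ENNReal.zero_rpow_of_pos (by positivity)] at h4
  exact h4


section shift
variable {a b A B Ψ G : ℝ → ℝ} {c C L γ κ : ℝ}

lemma Stat.shift_cdf (h : Stat a B Ψ G κ) (z : ℝ) : IsCDF (fun x => G (x - z)) := by
  have hc : Continuous G := continuous_iff_continuousAt.2 fun x => (h.dG x).continuousAt
  refine ⟨fun x y hxy => h.mono.monotone (by linarith), fun x => ?_, ?_, ?_⟩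
  · exact (hc.comp (continuous_id.sub continuous_const)).continuousWithinAt
  · exact h.bot.comp (tendsto_atBot_add_const_right _ _ tendsto_id)
  · exact h.top.comp (tendsto_atTop_add_const_right _ _ tendsto_id)

lemma Stat.shift_mono (h : Stat a B Ψ G κ) (z : ℝ) : StrictMono (fun x => G (x - z)) :=
  fun x y hxy => h.mono (by linarith)

lemma Stat.shift_pinv (h : Stat a B Ψ G κ) (z : ℝ) {u : ℝ} (hu : u ∈ Ioo (0:ℝ) 1) :
    pinv (fun x => G (x - z)) u = Ψ u + z := by
  have : {x : ℝ | u < G (x - z)} = Ioi (Ψ u + z) := by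
    ext x
    show u < G (x - z) ↔ Ψ u + z < x
    rw [← h.inv u hu, h.mono.lt_iff_lt, h.inv u hu]
    constructor <;> intro h <;> linarith
  rw [pinv, this, csInf_Ioi]

lemma Stat.psi_integrable (h : Stat a B Ψ G κ) : IntegrableOn Ψ (Ioo 0 1) := by
  refine ⟨?_, ?_⟩
  · have h1 := pinv_aem (h.shift_cdf 0)
    refine (AEMeasurable.congr h1 ?_).aestronglyMeasurable
    filter_upwards [ae_restrict_mem measurableSet_Ioo] with u hu
    rw [h.shift_pinv 0 hu, add_zero]
  · rw [hasFiniteIntegral_iff_norm]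
    have := h.psi_int (p := 1) one_pos
    simpa [Real.norm_eq_abs] using this

lemma Stat.shift_integrable (h : Stat a B Ψ G κ) (z : ℝ) :
    IntegrableOn (pinv (fun x => G (x - z))) (Ioo 0 1) := by
  have h1 : IntegrableOn (fun u => Ψ u + z) (Ioo 0 1) :=
    h.psi_integrable.add (integrable_const z)
  exact h1.congr_fun (fun u hu => (h.shift_pinv z hu).symm) measurableSet_Ioo

lemma Stat.shift_mean (h : Stat a B Ψ G κ) (z : ℝ) :
    ∫ u in Ioo (0:ℝ) 1, pinv (fun x => G (x - z)) u = (∫ u in Ioo (0:ℝ) 1, Ψ u) + z := by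
  rw [setIntegral_congr_fun measurableSet_Ioo (fun u hu => h.shift_pinv z hu),
    integral_add h.psi_integrable (integrable_const z)]
  simp

lemma Stat.shift_lint (h : Stat a B Ψ G κ) (z : ℝ) :
    (∫⁻ u in Ioo (0:ℝ) 1, ENNReal.ofReal |pinv (fun x => G (x - z)) u|) < ⊤ := by
  have := (h.shift_integrable z).2
  rw [hasFiniteIntegral_iff_norm] at this
  exact this

lemma Stat.shift_prof (h : Stat a B Ψ G κ) (z : ℝ) :
    Prof a B (fun x => G (x - z)) (PhiOf (law (fun x => G (x - z))))
      ((∫ u in Ioo (0:ℝ) 1, Ψ u) + z) := by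
  have hF := h.shift_cdf z
  have hp := law_prob hF
  have hi := law_int hF (h.shift_lint z)
  refine ⟨fun x => h.G0 _, fun x => h.G1 _, fun x => ?_, h.shift_mono z, fun x y => ?_,
    PhiOf_bot hi, ?_⟩
  · exact (h.dG (x - z)).comp_sub_const x z
  · rw [PhiOf_sub hi, law_cdf hF]
  · have := PhiOf_top hi
    rwa [law_integral hF, h.shift_mean z] at this

lemma deriv_AG (hc : Coef a b A B c C L γ) {H : ℝ → ℝ}
    (dH : ∀ x, HasDerivAt H (2 * B (H x) / a (H x)) x) (x : ℝ) :
    HasDerivAt (fun x => A (H x)) (2 * B (H x)) x := by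
  refine ((hc.dA (H x)).comp x (dH x)).congr_deriv ?_
  have : a (H x) ≠ 0 := (hc.cpos.trans_le (hc.alo _)).ne'
  field_simp

lemma stationary_of_ode (hc : Coef a b A B c C L γ) {Ap Bp : ℝ → ℝ}
    (hA : ∀ u ∈ Icc (0:ℝ) 1, A u = Ap u) (hB : ∀ u ∈ Icc (0:ℝ) 1, B u = Bp u) {H : ℝ → ℝ}
    (H0 : ∀ x, 0 < H x) (H1 : ∀ x, H x < 1)
    (dH : ∀ x, HasDerivAt H (2 * B (H x) / a (H x)) x) : IsStationarySolution Ap Bp H := by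
  intro φ hφ hφc
  simp only [← hA _ ⟨(H0 _).le, (H1 _).le⟩, ← hB _ ⟨(H0 _).le, (H1 _).le⟩]
  have Hc : Continuous H := continuous_iff_continuousAt.2 fun x => (dH x).continuousAt
  have dφ : ContDiff ℝ (⊤ : ℕ∞) (deriv φ) := by
    have := (contDiff_infty_iff_deriv (f := φ)).1 hφ
    exact this.2
  have ddφ : ContDiff ℝ (⊤ : ℕ∞) (deriv (deriv φ)) := (contDiff_infty_iff_deriv.1 dφ).2
  have hAc := hc.Acont.comp Hc
  have hBc := hc.Bcont.comp Hc
  have key := integral_mul_deriv_eq_deriv_mul_of_integrable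
    (u := fun x => A (H x)) (v := deriv φ) (u' := fun x => 2 * B (H x)) (v' := deriv (deriv φ))
    (fun x _ => deriv_AG hc dH x)
    (fun x _ => (dφ.differentiable (by simp) x).hasDerivAt)
    ((hAc.mul ddφ.continuous).integrable_of_hasCompactSupport hφc.deriv.deriv.mul_left)
    (((continuous_const.mul hBc).mul dφ.continuous).integrable_of_hasCompactSupport
      hφc.deriv.mul_left)
    ((hAc.mul dφ.continuous).integrable_of_hasCompactSupport hφc.deriv.mul_left)
  rw [key]
  have : ∫ x, 2 * B (H x) * deriv φ x = 2 * ∫ x, B (H x) * deriv φ x := by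
    rw [← integral_const_mul]; congr 1; ext x; ring
  rw [this]; ring

/-- A stationary cdf satisfies the first-order equation. -/
lemma ode_of_stationary (hc : Coef a b A B c C L γ) {Ap Bp : ℝ → ℝ}
    (hA : ∀ u ∈ Icc (0:ℝ) 1, A u = Ap u) (hB : ∀ u ∈ Icc (0:ℝ) 1, B u = Bp u) {H : ℝ → ℝ}
    (hH : IsCDF H) (hS : IsStationarySolution Ap Bp H) :
    Continuous H ∧ ∀ x, HasDerivAt (fun x => A (H x)) (2 * B (H x)) x := by
  have H0 := hH.nonneg
  have H1 := hH.le_one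
  have hm := hH.1.measurable
  have qb : ∀ x, |B (H x)| ≤ max C L := fun x => (hc.Bbd (H0 x) (H1 x)).trans (le_max_right _ _)
  obtain ⟨l, hl⟩ := affine_of_weak (D := fun _ => 0) (E := fun _ => 0) (p := fun x => A (H x))
    (q := fun x => B (H x)) (M := max C L) measurable_const (fun x => continuousWithinAt_const)
    (fun x => by simp [hc.Cpos.le]) (fun x y => by simp)
    (hc.Acont.measurable.comp hm) (fun x => hc.Acont.continuousAt.comp_continuousWithinAt (hH.2.1 x))
    (fun x => (hc.Abd (H0 x) (H1 x)).trans (le_max_left _ _))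
    (hc.Bcont.measurable.comp hm) (fun x => hc.Bcont.continuousAt.comp_continuousWithinAt (hH.2.1 x))
    qb
    (fun φ h1 h2 => by
      have := hS φ h1 h2
      simp only [← hA _ ⟨H0 _, H1 _⟩, ← hB _ ⟨H0 _, H1 _⟩] at this
      simp only [zero_mul, integral_zero]
      linarith)
  simp only [zero_add] at hl
  have hi := intble_of_bdd (hc.Bcont.measurable.comp hm) qb
  have hBt : Tendsto (fun x => B (H x)) atTop (𝓝 (B 1)) :=
    (hc.Bcont.tendsto 1).comp hH.2.2.2
  have hAt : Tendsto (fun x => A (H x)) atTop (𝓝 (A 1)) :=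
    (hc.Acont.tendsto 1).comp hH.2.2.2
  have t1 := tendsto_unit_avg (Or.inl rfl) hBt hi
  have t2 : Tendsto (fun x => A (H (x + 1))) atTop (𝓝 (A 1)) :=
    hAt.comp (tendsto_atTop_add_const_right _ _ tendsto_id)
  have t3 := t1.sub ((t2.sub hAt).const_mul (1/2))
  have t4 : Tendsto (fun _ : ℝ => l) atTop (𝓝 (B 1 - 1/2 * (A 1 - A 1))) := by
    refine t3.congr fun x => ?_
    rw [hl]; ring
  have hl0 : l = 0 := by
    have := tendsto_nhds_unique t4 tendsto_const_nhds
    rw [hc.B1] at this; linarith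
  have hAe : ∀ x, A (H x) = A (H 0) + 2 * ∫ z in (0:ℝ)..x, B (H z) := fun x => by
    have := hl 0 x
    rw [hl0] at this; linarith
  have hAc : Continuous (fun x => A (H x)) := by
    have : (fun x => A (H x)) = fun x => A (H 0) + 2 * ∫ z in (0:ℝ)..x, B (H z) := funext hAe
    rw [this]
    exact continuous_const.add (continuous_const.mul (intervalIntegral.continuous_primitive hi 0))
  have hHc : Continuous H := by
    rw [Metric.continuous_iff]
    intro x ε hε
    obtain ⟨δ, hδ, hd⟩ := Metric.continuous_iff.1 hAc x (c * ε) (mul_pos hc.cpos hε)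
    refine ⟨δ, hδ, fun y hy => ?_⟩
    have h1 := hd y hy
    rw [Real.dist_eq] at h1 ⊢
    have h2 := hc.Astrong (H y) (H x)
    have h3 : c * |H y - H x| ^ 2 ≤ |A (H y) - A (H x)| * |H y - H x| := by
      rw [sq_abs, ← abs_mul]; exact h2.trans (le_abs_self _)
    by_contra hcon
    push Not at hcon
    have h4 : 0 < |H y - H x| := hε.trans_le hcon
    have h5 : c * |H y - H x| ≤ |A (H y) - A (H x)| := by
      by_contra h6
      push Not at h6
      nlinarith
    nlinarith [hc.cpos]
  refine ⟨hHc, fun x => ?_⟩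
  have hBc := hc.Bcont.comp hHc
  have h1 : HasDerivAt (fun x => A (H 0) + 2 * ∫ z in (0:ℝ)..x, B (H z)) (2 * B (H x)) x :=
    ((intervalIntegral.integral_hasDerivAt_right (hi _ _)
      (hBc.stronglyMeasurableAtFilter _ _) hBc.continuousAt).const_mul 2).const_add _
  exact h1.congr_of_eventuallyEq (Eventually.of_forall hAe)

lemma ode_unique (hc : Coef a b A B c C L γ) {H H' : ℝ → ℝ}
    (dH : ∀ x, HasDerivAt (fun x => A (H x)) (2 * B (H x)) x)
    (dH' : ∀ x, HasDerivAt (fun x => A (H' x)) (2 * B (H' x)) x) {x0 : ℝ} (h0 : H x0 = H' x0) :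
    ∀ x, H x = H' x := by
  set K := 4 * (L / c) with hK
  set e : ℝ → ℝ := fun x => (A (H x) - A (H' x)) ^ 2 with he
  set e' : ℝ → ℝ := fun x => 2 * (A (H x) - A (H' x)) * (2 * B (H x) - 2 * B (H' x)) with he'
  have de : ∀ x, HasDerivAt e (e' x) x := fun x => by
    refine (((dH x).sub (dH' x)).pow 2).congr_deriv ?_
    simp [he']
  have hcp := hc.cpos
  have hL := hc.Lpos
  have hbd : ∀ x, |e' x| ≤ K * e x := fun x => by
    have h1 := hc.Blip (H x) (H' x)
    have h2 : c * |H x - H' x| ≤ |A (H x) - A (H' x)| := by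
      rcases le_total (H x) (H' x) with h | h
      · have := hc.Asub_le h
        rw [abs_sub_comm, abs_of_nonneg (sub_nonneg.2 h), abs_sub_comm]
        exact this.trans (le_abs_self _)
      · have := hc.Asub_le h
        rw [abs_of_nonneg (sub_nonneg.2 h)]
        exact this.trans (le_abs_self _)
    have h3 : |B (H x) - B (H' x)| ≤ L / c * |A (H x) - A (H' x)| := by
      refine h1.trans ?_
      rw [div_mul_eq_mul_div, le_div_iff₀ hcp]
      nlinarith
    have h4 : |e' x| = 4 * |A (H x) - A (H' x)| * |B (H x) - B (H' x)| := by
      simp only [he']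
      rw [show 2 * (A (H x) - A (H' x)) * (2 * B (H x) - 2 * B (H' x)) =
        4 * (A (H x) - A (H' x)) * (B (H x) - B (H' x)) by ring, abs_mul, abs_mul]
      norm_num
    rw [h4]
    calc 4 * |A (H x) - A (H' x)| * |B (H x) - B (H' x)|
        ≤ 4 * |A (H x) - A (H' x)| * (L / c * |A (H x) - A (H' x)|) := by gcongr
      _ = K * |A (H x) - A (H' x)| ^ 2 := by rw [hK]; ring
      _ = K * e x := by rw [sq_abs]
  have e0 : e x0 = 0 := by simp [he, h0]
  have enn : ∀ x, 0 ≤ e x := fun x => sq_nonneg _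
  have hexp : ∀ (r x : ℝ), HasDerivAt (fun x => e x * Real.exp (r * x))
      (e' x * Real.exp (r * x) + e x * (Real.exp (r * x) * (r * 1))) x := fun r x =>
    (de x).mul (((hasDerivAt_id x).const_mul r).exp)
  have m1 : Antitone (fun x => e x * Real.exp (-K * x)) := by
    refine antitone_of_deriv_nonpos (fun x => (hexp _ x).differentiableAt) fun x => ?_
    rw [(hexp _ x).deriv]
    have := (abs_le.1 (hbd x)).2
    nlinarith [Real.exp_pos (-K * x)]
  have m2 : Monotone (fun x => e x * Real.exp (K * x)) := by
    refine monotone_of_deriv_nonneg (fun x => (hexp _ x).differentiableAt) fun x => ?_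
    rw [(hexp _ x).deriv]
    have := (abs_le.1 (hbd x)).1
    nlinarith [Real.exp_pos (K * x)]
  intro x
  have hex : e x = 0 := by
    rcases le_total x0 x with h | h
    · have := m1 h
      simp only [e0, zero_mul] at this
      have h2 := Real.exp_pos (-K * x)
      have := enn x
      by_contra hne
      have : 0 < e x := lt_of_le_of_ne this (Ne.symm hne)
      nlinarith [mul_pos this h2]
    · have := m2 h
      simp only [e0, zero_mul] at this
      have h2 := Real.exp_pos (K * x)
      have := enn x
      by_contra hne
      have : 0 < e x := lt_of_le_of_ne this (Ne.symm hne)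
      nlinarith [mul_pos this h2]
  have : A (H x) = A (H' x) := by
    have := pow_eq_zero_iff (two_ne_zero) |>.1 hex
    linarith
  exact hc.Amono.injective this

lemma Stat.unique (h : Stat a B Ψ G κ) (hc : Coef a b A B c C L γ) {Ap Bp : ℝ → ℝ}
    (hA : ∀ u ∈ Icc (0:ℝ) 1, A u = Ap u) (hB : ∀ u ∈ Icc (0:ℝ) 1, B u = Bp u) {H : ℝ → ℝ}
    (hH : IsCDF H) (hS : IsStationarySolution Ap Bp H) :
    ∃ z, H = fun x => G (x - z) := by
  obtain ⟨Hc, dH⟩ := ode_of_stationary hc hA hB hH hS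
  obtain ⟨x0, hx0⟩ : ∃ x0, H x0 = 1/2 := by
    obtain ⟨x1, h1⟩ := (hH.2.2.1.eventually_lt_const (by norm_num : (0:ℝ) < 1/2)).exists
    obtain ⟨x2, h2⟩ := (hH.2.2.2.eventually_const_lt (by norm_num : (1/2:ℝ) < 1)).exists
    exact mem_range_of_exists_le_of_exists_ge Hc ⟨x1, h1.le⟩ ⟨x2, h2.le⟩
  refine ⟨x0 - Ψ (1/2), funext (ode_unique hc dH
    (deriv_AG hc (H := fun x => G (x - (x0 - Ψ (1/2)))) fun x => (h.dG _).comp_sub_const x _)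
    (x0 := x0) ?_)⟩
  rw [hx0]
  have : x0 - (x0 - Ψ (1/2)) = Ψ (1/2) := by ring
  simp only [this]
  exact (h.inv (1/2) ⟨by norm_num, by norm_num⟩).symm

end shift

/-- Convergence to equilibrium in Wasserstein distance: under (D3), (R2), (E1), (E2),
a finite first moment of `m` and `W₂(H*m, Ψ⁻¹) < ∞`, there is a unique stationary
solution `F∞` with the same expectation as `F₀ = H*m`, and for every `p ≥ 2` with
`W_p(H*m, Ψ⁻¹) < ∞` and every `1 ≤ q < p`, `W_q(F_t, F∞) → 0` as `t → ∞`. -/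
theorem convergence_to_equilibrium
    (a b : ℝ → ℝ)
    (ha : ContinuousOn a (Set.Icc 0 1)) (hb : ContinuousOn b (Set.Icc 0 1))
    (ha0 : ∀ u ∈ Set.Icc (0:ℝ) 1, 0 ≤ a u)
    (hD3 : ∃ c > (0:ℝ), ∀ u ∈ Set.Icc (0:ℝ) 1, c ≤ a u)
    (β : NNReal) (hβ : 0 < β)
    (hR2a : ContDiffOn ℝ 2 a (Set.Icc 0 1))
    (hR2b : ContDiffOn ℝ 1 b (Set.Icc 0 1))
    (hR2hold : ∃ C : NNReal,
      HolderOnWith C β (iteratedDerivWithin 2 a (Set.Icc 0 1)) (Set.Icc 0 1) ∧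
      HolderOnWith C β (derivWithin b (Set.Icc 0 1)) (Set.Icc 0 1))
    (hE1pos : ∀ u ∈ Set.Ioo (0:ℝ) 1, 0 < primitive b u)
    (hE1B1 : primitive b 1 = 0)
    (hE1loc : ∀ c d : ℝ, 0 < c → c ≤ d → d < 1 →
      IntegrableOn (fun u => a u / (2 * primitive b u)) (Set.Icc c d))
    (hE2 : ((∫⁻ u in Set.Ioo (0:ℝ) (1/2),
        ENNReal.ofReal (a u * u / (2 * |primitive b u|)))
      + ∫⁻ u in Set.Ioo (1/2:ℝ) 1,
          ENNReal.ofReal (a u * (1 - u) / (2 * |primitive b u|))) < ⊤)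
    (m : Measure ℝ) [IsProbabilityMeasure m]
    (hm : Integrable (fun x => |x|) m)
    (hW2 : Wdist 2 (cdfOf m) (PsiInv a b) < ⊤)
    (F : ℝ → ℝ → ℝ)
    (hF : IsWeakSolution (primitive a) (primitive b) (cdfOf m) F) (hFmem : MemF F) :
    ∃ Finf : ℝ → ℝ,
      (IsCDF Finf ∧
       IsStationarySolution (primitive a) (primitive b) Finf ∧
       (∫⁻ u in Set.Ioo (0:ℝ) 1, ENNReal.ofReal |pinv Finf u|) < ⊤ ∧
       (∫ u in Set.Ioo (0:ℝ) 1, pinv Finf u) = ∫ u in Set.Ioo (0:ℝ) 1, pinv (cdfOf m) u) ∧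
      (∀ G : ℝ → ℝ, IsCDF G → IsStationarySolution (primitive a) (primitive b) G →
        (∫⁻ u in Set.Ioo (0:ℝ) 1, ENNReal.ofReal |pinv G u|) < ⊤ →
        (∫ u in Set.Ioo (0:ℝ) 1, pinv G u) = (∫ u in Set.Ioo (0:ℝ) 1, pinv (cdfOf m) u) →
        ∀ x : ℝ, G x = Finf x) ∧
      (∀ p : ℝ, 2 ≤ p → Wdist p (cdfOf m) (PsiInv a b) < ⊤ →
        ∀ q : ℝ, 1 ≤ q → q < p →
          Tendsto (fun t => Wdist q (F t) Finf) atTop (nhds 0)) := by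
  obtain ⟨a', b', A, B, c, C, L, γ, hc, haa, hA, hB⟩ :=
    coef_exists a b ha hb hD3 hR2a hR2b hE1pos hE1B1 hE2
  obtain ⟨κ, hst⟩ := stat_exists hc haa hB
  obtain ⟨P, hP, hP1, -, hPF⟩ := hFmem
  obtain ⟨hP0, hsol⟩ := sol_of_weak hc hA hB hF hP hP1 hPF
  have hμ : ∫ u in Ioo (0:ℝ) 1, pinv (cdfOf m) u = ∫ z, z ∂m := by
    rw [← law_integral (cdfOf_isCDF m), law_cdfOf m]
  have hk : 0 < 2 * γ / C := div_pos (mul_pos two_pos hc.γpos) hc.Cpos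
  obtain ⟨z, hz⟩ : ∃ z, (∫ u in Ioo (0:ℝ) 1, Psi a b u) + z = ∫ z, z ∂m :=
    ⟨(∫ z, z ∂m) - ∫ u in Ioo (0:ℝ) 1, Psi a b u, by ring⟩
  refine ⟨fun x => PsiInv a b (x - z), ⟨hst.shift_cdf z, ?_, hst.shift_lint z, ?_⟩, ?_, ?_⟩
  · exact stationary_of_ode hc hA hB (fun x => hst.G0 _) (fun x => hst.G1 _)
      (fun x => (hst.dG (x - z)).comp_sub_const x z)
  · rw [hμ, hst.shift_mean z, hz]
  · intro G hG hS _ hGm x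
    obtain ⟨z2, rfl⟩ := hst.unique hc hA hB hG hS
    rw [hμ, hst.shift_mean z2] at hGm
    have : z2 = z := by linarith
    rw [this]
  · intro p hp hW q hq hqp
    have hV : ∀ t, 0 ≤ t → ∀ x, PhiOf (P t : Measure ℝ) x ≤ Vb (2 * γ / C) m x :=
      fun t ht x => Sol.le_Vb hm hc hsol (fun x => by simp only [hP0]) ht x
    have hprof := hst.shift_prof z
    rw [hz] at hprof
    have hlim := cdf_conv hc hsol hprof hV (Vb_bot hk hm) (Vb_top hk hm)
    obtain ⟨y0, hy0, M, hM, hb⟩ := tails hm hk hp (moment_of_W hst hp hW) hsol hV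
    have hFc : ∀ t, 0 ≤ t → IsCDF (F t) := fun t ht => by
      have : F t = cdfOf (P t : Measure ℝ) := funext (hPF t ht)
      rw [this]
      exact cdfOf_isCDF _
    exact W_tendsto hFc (hst.shift_cdf z) (hst.shift_mono z) hlim hy0 hM hp hq hqp hb
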